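/- Let X₁, X₂, … be i.i.d. real random variables with a Lebesgue density, mean 0 and variance 1, and let S̄_n := max_{1≤k≤n} (X₁+…+X_k). Then D₊(S̄_n/√n | |Z|) → 0 as n → ∞ if and only if D₊(X₁ | |Z|) < ∞. -/

import Mathlib

open MeasureTheory ProbabilityTheory Filter
open scoped ENNReal Classical

/-- The Kullback–Leibler divergence (relative entropy) `D(μ | ν)` of two measures
on `ℝ`, with values in `[0,∞]`: it is `∫ log (dμ/dν) dμ` when `μ ≪ ν` and the
log-likelihood ratio is integrable, and `∞` otherwise. -/
noncomputable def KL (μ ν : Measure ℝ) : ℝ≥0∞ :=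
  if μ ≪ ν ∧ Integrable (llr μ ν) μ then ENNReal.ofReal (∫ x, llr μ ν x ∂μ) else ⊤

/-- The law of `|Z|` for a standard normal `Z` (one-sided standard normal law). -/
noncomputable def halfNormal : Measure ℝ := Measure.map (fun y => |y|) (gaussianReal 0 1)

/-- `D₊(U | |Z|)`: the relative entropy of `U` conditioned to be positive with
respect to the one-sided standard normal law. -/
noncomputable def Dplus {Ω : Type*} [MeasurableSpace Ω] (μ : Measure Ω) (U : Ω → ℝ) :
    ℝ≥0∞ :=
  KL ((Measure.map U μ)[|Set.Ioi 0]) halfNormal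

open MeasureTheory ProbabilityTheory Filter
open scoped ENNReal Classical

set_option linter.unusedSectionVars false

namespace EEK

/-- convolution powers -/
noncomputable def cpow (μ : Measure ℝ) : ℕ → Measure ℝ
  | 0 => Measure.dirac 0
  | n + 1 => Measure.conv (cpow μ n) μ

/-- one step of the walk, killed when leaving the positive half-line -/
noncomputable def kill (μ ρ : Measure ℝ) : Measure ℝ := (Measure.conv ρ μ).restrict (Set.Ioi 0)

noncomputable def gam (μ : Measure ℝ) : ℕ → Measure ℝ
  | 0 => Measure.dirac 0
  | n + 1 => kill μ (gam μ n)

/-- Lindley recursion -/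
noncomputable def lam (μ : Measure ℝ) : ℕ → Measure ℝ
  | 0 => Measure.dirac 0
  | n + 1 => (Measure.conv (lam μ n) μ).map (fun x => max x 0)

noncomputable def lamp (μ : Measure ℝ) (n : ℕ) : Measure ℝ := (lam μ n).restrict (Set.Ioi 0)

noncomputable def q (μ : Measure ℝ) (n : ℕ) : ℝ≥0∞ := lam μ n {0}

section
variable (μ : Measure ℝ) [IsProbabilityMeasure μ]

instance (n : ℕ) : IsProbabilityMeasure (cpow μ n) := by
  induction n with
  | zero => simp only [cpow]; infer_instance
  | succ n ih => simp only [cpow]; infer_instance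

instance (n : ℕ) : IsProbabilityMeasure (lam μ n) := by
  induction n with
  | zero => simp only [lam]; infer_instance
  | succ n ih =>
    simp only [lam]
    exact Measure.isProbabilityMeasure_map (by fun_prop)

instance (ρ : Measure ℝ) [IsFiniteMeasure ρ] : IsFiniteMeasure (kill μ ρ) := by
  unfold kill; infer_instance

instance (n : ℕ) : IsFiniteMeasure (gam μ n) := by
  induction n with
  | zero => simp only [gam]; infer_instance
  | succ n ih => simp only [gam]; infer_instance

instance (n : ℕ) : IsFiniteMeasure (lamp μ n) := by
  unfold lamp; infer_instance

instance kill_iter_fin (ρ : Measure ℝ) [h : IsFiniteMeasure ρ] (m : ℕ) :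
    IsFiniteMeasure ((kill μ)^[m] ρ) := by
  induction m generalizing ρ with
  | zero => simpa using h
  | succ n ih => rw [Function.iterate_succ_apply]; exact ih _

lemma conv_mono_left {ρ ρ' : Measure ℝ} (ν : Measure ℝ) [SFinite ν] (h : ρ ≤ ρ') :
    Measure.conv ρ ν ≤ Measure.conv ρ' ν := by
  rw [Measure.le_iff]
  intro s hs
  rw [← lintegral_indicator_one hs, ← lintegral_indicator_one hs,
    Measure.lintegral_conv (by measurability), Measure.lintegral_conv (by measurability)]
  exact lintegral_mono' h le_rfl

lemma conv_mono_right {ρ ρ' : Measure ℝ} (ν : Measure ℝ) [SFinite ρ] [SFinite ρ'] (h : ρ ≤ ρ') :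
    Measure.conv ν ρ ≤ Measure.conv ν ρ' := by
  rw [Measure.le_iff]
  intro s hs
  rw [← lintegral_indicator_one hs, ← lintegral_indicator_one hs,
    Measure.lintegral_conv (by measurability), Measure.lintegral_conv (by measurability)]
  exact lintegral_mono (fun x => lintegral_mono' h le_rfl)

lemma kill_mono {ρ ρ' : Measure ℝ} (h : ρ ≤ ρ') : kill μ ρ ≤ kill μ ρ' :=
  Measure.restrict_mono le_rfl (conv_mono_left μ h)

lemma kill_add (ρ ρ' : Measure ℝ) [IsFiniteMeasure ρ] [IsFiniteMeasure ρ'] :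
    kill μ (ρ + ρ') = kill μ ρ + kill μ ρ' := by
  unfold kill; rw [Measure.add_conv, Measure.restrict_add]

lemma kill_smul (c : ℝ≥0∞) (ρ : Measure ℝ) [IsFiniteMeasure ρ] :
    kill μ (c • ρ) = c • kill μ ρ := by
  unfold kill; rw [Measure.conv_smul_left, Measure.restrict_smul]

lemma kill_zero : kill μ 0 = 0 := by
  unfold kill; simp

lemma q_le_one (n : ℕ) : q μ n ≤ 1 := prob_le_one

lemma q_ne_top (n : ℕ) : q μ n ≠ ⊤ := measure_ne_top _ _

lemma smul_fin (ρ : Measure ℝ) [IsFiniteMeasure ρ] (c : ℝ≥0∞) (hc : c ≠ ⊤) :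
    IsFiniteMeasure (c • ρ) := Measure.smul_finite ρ hc

lemma fin_sum (s : Finset ℕ) (c : ℕ → ℝ≥0∞) (hc : ∀ k, c k ≠ ⊤) (ρ : ℕ → Measure ℝ)
    [∀ k, IsFiniteMeasure (ρ k)] : IsFiniteMeasure (∑ k ∈ s, c k • ρ k) := by
  induction s using Finset.induction_on with
  | empty => simp; infer_instance
  | insert a s ha ih =>
    rw [Finset.sum_insert ha]
    have := smul_fin (ρ a) (c a) (hc a)
    infer_instance

lemma kill_sum (s : Finset ℕ) (c : ℕ → ℝ≥0∞) (hc : ∀ k, c k ≠ ⊤) (ρ : ℕ → Measure ℝ)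
    [∀ k, IsFiniteMeasure (ρ k)] :
    kill μ (∑ k ∈ s, c k • ρ k) = ∑ k ∈ s, c k • kill μ (ρ k) := by
  induction s using Finset.induction_on with
  | empty => simp [kill_zero]
  | insert a s ha ih =>
    rw [Finset.sum_insert ha, Finset.sum_insert ha]
    have := smul_fin (ρ a) (c a) (hc a)
    have := fin_sum s c hc ρ
    rw [kill_add, ih, kill_smul]

lemma kill_iter_sum (m : ℕ) (s : Finset ℕ) (c : ℕ → ℝ≥0∞) (hc : ∀ k, c k ≠ ⊤) (ρ : ℕ → Measure ℝ)
    [h : ∀ k, IsFiniteMeasure (ρ k)] :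
    (kill μ)^[m] (∑ k ∈ s, c k • ρ k) = ∑ k ∈ s, c k • (kill μ)^[m] (ρ k) := by
  induction m generalizing ρ h with
  | zero => simp
  | succ n ih =>
    simp only [Function.iterate_succ_apply]
    rw [kill_sum _ _ _ hc, ih]

lemma kill_iter_gam (m j : ℕ) : (kill μ)^[m] (gam μ j) = gam μ (j + m) := by
  induction m generalizing j with
  | zero => simp
  | succ n ih =>
    rw [Function.iterate_succ_apply]
    have := ih (j + 1)
    simp only [gam] at this
    rw [this]; congr 1; ring

lemma lam_Iio (n : ℕ) : lam μ n (Set.Iio 0) = 0 := by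
  cases n with
  | zero => simp [lam]
  | succ n =>
    simp only [lam]
    rw [Measure.map_apply (by fun_prop) measurableSet_Iio]
    convert measure_empty (μ := (lam μ n).conv μ)
    ext x; simp

lemma lam_split (n : ℕ) : lam μ n = lamp μ n + q μ n • Measure.dirac 0 := by
  have h1 : (lam μ n).restrict {0} = q μ n • Measure.dirac 0 := by
    rw [Measure.restrict_singleton]; rfl
  have h2 : (lam μ n).restrict (Set.Iic 0) = (lam μ n).restrict {0} := by
    apply Measure.restrict_congr_set
    rw [ae_eq_set]
    constructor
    · refine measure_mono_null ?_ (lam_Iio μ n)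
      intro x hx
      exact lt_of_le_of_ne hx.1 hx.2
    · convert measure_empty (μ := lam μ n)
      ext x
      simp only [Set.mem_diff, Set.mem_singleton_iff, Set.mem_Iic, Set.mem_empty_iff_false, iff_false,
        not_and, not_not]
      exact fun h => h.le
  rw [← h1, ← h2]
  unfold lamp
  have := Measure.restrict_add_restrict_compl (μ := lam μ n) (measurableSet_Ioi (a := (0:ℝ)))
  rw [Set.compl_Ioi] at this
  exact this.symm

lemma lamp_succ (n : ℕ) : lamp μ (n + 1) = kill μ (lam μ n) := by
  unfold lamp kill
  simp only [lam]
  ext s hs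
  rw [Measure.restrict_apply hs, Measure.map_apply (by fun_prop) (hs.inter measurableSet_Ioi),
    Measure.restrict_apply hs]
  congr 1
  ext x
  simp only [Set.mem_preimage, Set.mem_inter_iff, Set.mem_Ioi, lt_max_iff, lt_irrefl, or_false]
  constructor
  · rintro ⟨h, h2⟩; rw [max_eq_left h2.le] at h; exact ⟨h, h2⟩
  · rintro ⟨h, h2⟩; rw [max_eq_left h2.le]; exact ⟨h, h2⟩

lemma lamp_eq (n : ℕ) : lamp μ n = ∑ k ∈ Finset.range n, q μ (n - 1 - k) • gam μ (k + 1) := by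
  induction n with
  | zero => simp [lamp, lam]
  | succ n ih =>
    have := smul_fin (Measure.dirac (0:ℝ)) (q μ n) (q_ne_top μ n)
    rw [lamp_succ, lam_split, kill_add, kill_smul, ih, kill_sum _ _ _ (fun _ => q_ne_top μ _),
      Finset.sum_range_succ']
    congr 1
    apply Finset.sum_congr rfl
    intro k hk
    simp only [Finset.mem_range] at hk
    have : n - 1 - k = n + 1 - 1 - (k + 1) := by omega
    rw [this]; rfl

noncomputable def vpart (n m : ℕ) : Measure ℝ :=
  ∑ k ∈ Finset.range m, q μ (n - 1 - k) • gam μ (k + 1)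

lemma lamp_split {n m : ℕ} (h : m ≤ n) :
    lamp μ n = vpart μ n m + (kill μ)^[m] (lamp μ (n - m)) := by
  rw [lamp_eq μ n, lamp_eq μ (n - m), kill_iter_sum _ _ _ _ (fun _ => q_ne_top μ _)]
  obtain ⟨d, rfl⟩ := Nat.exists_eq_add_of_le h
  rw [Finset.sum_range_add]
  unfold vpart
  congr 1
  have : m + d - m = d := by omega
  rw [this]
  apply Finset.sum_congr rfl
  intro k hk
  simp only [Finset.mem_range] at hk
  rw [kill_iter_gam]
  congr 2
  · omega
  · omega

lemma kill_iter_le (m : ℕ) (ρ : Measure ℝ) [IsFiniteMeasure ρ] :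
    (kill μ)^[m] ρ ≤ Measure.conv ρ (cpow μ m) := by
  induction m with
  | zero => simp [cpow]
  | succ n ih =>
    rw [Function.iterate_succ_apply']
    simp only [cpow]
    rw [← Measure.conv_assoc]
    exact Measure.restrict_le_self.trans (conv_mono_left μ ih)

lemma gam_one : gam μ 1 = μ.restrict (Set.Ioi 0) := by
  simp [gam, kill]

lemma gam_le (k : ℕ) : gam μ (k + 1) ≤ Measure.conv (gam μ 1) (cpow μ k) := by
  rw [show k + 1 = 1 + k by ring, ← kill_iter_gam]
  exact kill_iter_le μ k _

lemma lamp_ge {n : ℕ} (hn : 1 ≤ n) : q μ (n - 1) • μ.restrict (Set.Ioi 0) ≤ lamp μ n := by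
  rw [lamp_eq, ← gam_one]
  obtain ⟨d, rfl⟩ := Nat.exists_eq_add_of_le hn
  rw [show 1 + d = d + 1 by ring, Finset.sum_range_succ']
  simp only [add_tsub_cancel_right, tsub_zero, zero_add]
  exact Measure.le_add_left le_rfl

/-- recursion of tails -/
lemma lam_Ioi_neg (n : ℕ) {x : ℝ} (hx : x < 0) : lam μ n (Set.Ioi x) = 1 := by
  rw [prob_compl_eq_zero_iff measurableSet_Ioi |>.symm, Set.compl_Ioi]
  exact measure_mono_null (fun y hy => lt_of_le_of_lt hy hx) (lam_Iio μ n)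

lemma conv_Ioi (ρ : Measure ℝ) [IsFiniteMeasure ρ] (x : ℝ) :
    Measure.conv ρ μ (Set.Ioi x) = ∫⁻ y, ρ (Set.Ioi (x - y)) ∂μ := by
  rw [Measure.conv_comm, ← lintegral_indicator_one measurableSet_Ioi,
    Measure.lintegral_conv (by measurability)]
  congr 1
  ext y
  rw [← lintegral_indicator_one measurableSet_Ioi]
  congr 1
  ext z
  simp only [Set.indicator, Set.mem_Ioi, sub_lt_iff_lt_add', Pi.one_apply]

lemma lam_succ_Ioi (n : ℕ) {x : ℝ} (hx : 0 ≤ x) :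
    lam μ (n + 1) (Set.Ioi x) = ∫⁻ y, lam μ n (Set.Ioi (x - y)) ∂μ := by
  simp only [lam]
  rw [Measure.map_apply (by fun_prop) measurableSet_Ioi, ← conv_Ioi]
  congr 1
  ext z
  simp only [Set.mem_preimage, Set.mem_Ioi, lt_max_iff]
  constructor
  · rintro (h | h)
    · exact h
    · linarith
  · exact Or.inl

lemma cpow_succ_Ioi (n : ℕ) (x : ℝ) :
    cpow μ (n + 1) (Set.Ioi x) = ∫⁻ y, cpow μ n (Set.Ioi (x - y)) ∂μ := by
  simp only [cpow]; rw [conv_Ioi]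

lemma lam_mono_succ (n : ℕ) (x : ℝ) : lam μ n (Set.Ioi x) ≤ lam μ (n + 1) (Set.Ioi x) := by
  induction n generalizing x with
  | zero =>
    rcases lt_or_ge x 0 with h | h
    · rw [lam_Ioi_neg μ _ h, lam_Ioi_neg μ _ h]
    · simp [lam, h]
  | succ n ih =>
    rcases lt_or_ge x 0 with h | h
    · rw [lam_Ioi_neg μ _ h, lam_Ioi_neg μ _ h]
    · rw [lam_succ_Ioi μ _ h, lam_succ_Ioi μ _ h]
      exact lintegral_mono (fun y => ih _)

lemma lamp_univ (n : ℕ) : lamp μ n Set.univ = lam μ n (Set.Ioi 0) := by simp [lamp]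

lemma lamp_add_q (n : ℕ) : lamp μ n Set.univ + q μ n = 1 := by
  have := congrArg (fun ρ => ρ Set.univ) (lam_split μ n)
  simpa using this.symm

lemma q_eq (n : ℕ) : q μ n = 1 - lam μ n (Set.Ioi 0) := by
  rw [← lamp_univ, ← lamp_add_q μ n, ENNReal.add_sub_cancel_left (measure_ne_top _ _)]

lemma q_anti : Antitone (q μ) := by
  apply antitone_nat_of_succ_le
  intro n
  rw [q_eq, q_eq]
  exact tsub_le_tsub_left (lam_mono_succ μ n 0) 1

lemma q_pos (h : μ (Set.Iic 0) ≠ 0) (n : ℕ) : q μ n ≠ 0 := by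
  induction n with
  | zero => simp [q, lam]
  | succ n ih =>
    unfold q
    simp only [lam]
    rw [Measure.map_apply (by fun_prop) (measurableSet_singleton _)]
    have h1 : (q μ n • Measure.dirac (0:ℝ)).conv μ ≤ (lam μ n).conv μ := by
      apply conv_mono_left
      conv_rhs => rw [lam_split]
      exact Measure.le_add_left le_rfl
    have h2 := h1 ((fun x : ℝ => max x 0) ⁻¹' {0})
    rw [Measure.conv_smul_left, Measure.dirac_zero_conv] at h2
    have h3 : ((fun x : ℝ => max x 0) ⁻¹' {0}) = Set.Iic 0 := by
      ext x; simp
    rw [h3] at h2 ⊢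
    intro h0
    rw [h0] at h2
    simp at h2
    tauto

lemma vpart_le (h : μ (Set.Iic 0) ≠ 0) {n m : ℕ} (hm : m ≤ n) :
    vpart μ n m ≤ (q μ (n - m) / q μ m) • lamp μ m := by
  rw [lamp_eq μ m, Finset.smul_sum]
  unfold vpart
  apply Finset.sum_le_sum
  intro k hk
  simp only [Finset.mem_range] at hk
  rw [smul_smul]
  have h1 : q μ (n - 1 - k) ≤ q μ (n - m) / q μ m * q μ (m - 1 - k) := by
    calc q μ (n - 1 - k) ≤ q μ (n - m) := q_anti μ (by omega)
      _ = q μ (n - m) / q μ m * q μ m := by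
        rw [ENNReal.div_mul_cancel (q_pos μ h m) (q_ne_top μ m)]
      _ ≤ _ := by gcongr; exact q_anti μ (by omega)
  intro s
  simp only [Measure.smul_apply, smul_eq_mul]
  gcongr

end
end EEK

open MeasureTheory ProbabilityTheory Filter
open scoped ENNReal Classical
set_option linter.unusedSectionVars false

namespace EEK

section
variable (μ : Measure ℝ) [IsProbabilityMeasure μ]

def M2 (μ : Measure ℝ) : Prop := ∀ c : ℝ, ∫⁻ y, ENNReal.ofReal ((c + y) ^ 2) ∂μ = ENNReal.ofReal (c ^ 2 + 1)

lemma lam_sq (hm : M2 μ) (n : ℕ) : ∫⁻ x, ENNReal.ofReal (x ^ 2) ∂(lam μ n) ≤ n := by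
  induction n with
  | zero => simp [lam]
  | succ n ih =>
    simp only [lam]
    rw [lintegral_map (by fun_prop) (by fun_prop)]
    calc ∫⁻ a, ENNReal.ofReal (max a 0 ^ 2) ∂(lam μ n).conv μ
        ≤ ∫⁻ a, ENNReal.ofReal (a ^ 2) ∂(lam μ n).conv μ := by
          apply lintegral_mono
          intro a
          apply ENNReal.ofReal_le_ofReal
          rcases le_total a 0 with h | h
          · simp [h]; positivity
          · simp [h]
      _ = ∫⁻ x, ENNReal.ofReal (x ^ 2 + 1) ∂(lam μ n) := by
          rw [Measure.lintegral_conv (by fun_prop)]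
          congr 1; ext x; exact hm x
      _ = ∫⁻ x, (ENNReal.ofReal (x ^ 2) + 1) ∂(lam μ n) := by
          congr 1; ext x; rw [ENNReal.ofReal_add (by positivity) (by norm_num)]; simp
      _ ≤ _ := by
          rw [lintegral_add_right _ (by fun_prop)]
          simp only [lintegral_const, measure_univ, mul_one]
          push_cast
          gcongr

lemma cpow_sq (hm : M2 μ) (n : ℕ) : ∫⁻ x, ENNReal.ofReal (x ^ 2) ∂(cpow μ n) = n := by
  induction n with
  | zero => simp [cpow]
  | succ n ih =>
    simp only [cpow]
    calc ∫⁻ a, ENNReal.ofReal (a ^ 2) ∂(cpow μ n).conv μ 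
      _ = ∫⁻ x, ENNReal.ofReal (x ^ 2 + 1) ∂(cpow μ n) := by
          rw [Measure.lintegral_conv (by fun_prop)]
          congr 1; ext x; exact hm x
      _ = ∫⁻ x, (ENNReal.ofReal (x ^ 2) + 1) ∂(cpow μ n) := by
          congr 1; ext x; rw [ENNReal.ofReal_add (by positivity) (by norm_num)]; simp
      _ = _ := by
          rw [lintegral_add_right _ (by fun_prop)]
          simp only [lintegral_const, measure_univ, mul_one]
          rw [ih]
          push_cast
          rfl

/-- Chebyshev -/
lemma cheb (ρ : Measure ℝ) {t : ℝ} (ht : 0 < t) :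
    ρ (Set.Ioi t) ≤ (∫⁻ x, ENNReal.ofReal (x ^ 2) ∂ρ) / ENNReal.ofReal (t ^ 2) := by
  refine le_trans (measure_mono ?_) (meas_ge_le_lintegral_div (μ := ρ) (by fun_prop)
    (by simpa using ht.ne') ENNReal.ofReal_ne_top)
  intro x hx
  simp only [Set.mem_Ioi, Set.mem_ofPred_eq] at *
  apply ENNReal.ofReal_le_ofReal
  nlinarith

lemma ek_upper (c : ℝ≥0∞) (K : ℕ) (hc : ∀ j, K ≤ j → c ≤ cpow μ j (Set.Ioi 0)) (n : ℕ) (x : ℝ) :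
    c * lam μ n (Set.Ioi x) ≤ cpow μ (n + K) (Set.Ioi x) := by
  induction n generalizing x with
  | zero =>
    rcases lt_or_ge x 0 with h | h
    · rw [lam_Ioi_neg μ _ h, mul_one]
      exact (hc _ (by omega)).trans (measure_mono (Set.Ioi_subset_Ioi h.le))
    · simp [lam, h]
  | succ n ih =>
    rcases lt_or_ge x 0 with h | h
    · rw [lam_Ioi_neg μ _ h, mul_one]
      exact (hc _ (by omega)).trans (measure_mono (Set.Ioi_subset_Ioi h.le))
    · rw [lam_succ_Ioi μ _ h, show n + 1 + K = n + K + 1 by ring, cpow_succ_Ioi]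
      refine (lintegral_const_mul_le _ _).trans ?_
      exact lintegral_mono (fun y => ih _)

lemma meas_Ioi (ρ : Measure ℝ) (x : ℝ) : Measurable (fun y : ℝ => ρ (Set.Ioi (x - y))) := by
  have h1 : Antitone (fun y : ℝ => ρ (Set.Ioi y)) := fun a b h => measure_mono (Set.Ioi_subset_Ioi h)
  exact h1.measurable.comp (by fun_prop)

lemma ek_lower (c : ℝ≥0∞) (s t : ℝ) (hs : 0 ≤ s) (ht : 0 ≤ t) (hc : ∀ j, cpow μ j (Set.Ioi t) ≤ c)
    (n : ℕ) (x : ℝ) (hx : - s ≤ x) :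
    cpow μ n (Set.Ioi (x + s + t)) ≤ c * lam μ n (Set.Ioi x) + n * μ (Set.Ioi s) := by
  induction n generalizing x with
  | zero =>
    rcases lt_or_ge x 0 with h | h
    · rw [lam_Ioi_neg μ _ h, mul_one]
      exact (le_trans (measure_mono (Set.Ioi_subset_Ioi (by linarith))) (hc _)).trans le_self_add
    · have : 0 ≤ x + s + t := by positivity
      simp [cpow, this]
  | succ n ih =>
    rcases lt_or_ge x 0 with h | h
    · rw [lam_Ioi_neg μ _ h, mul_one]
      exact (le_trans (measure_mono (Set.Ioi_subset_Ioi (by linarith))) (hc _)).trans le_self_add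
    · rw [lam_succ_Ioi μ _ h, cpow_succ_Ioi]
      calc ∫⁻ y, cpow μ n (Set.Ioi (x + s + t - y)) ∂μ
          ≤ ∫⁻ y, ((c * lam μ n (Set.Ioi (x - y)) + n * μ (Set.Ioi s)) +
              (Set.Ioi s).indicator 1 y) ∂μ := by
            apply lintegral_mono
            intro y
            by_cases hy : x + s < y
            · have : y ∈ Set.Ioi s := by simp only [Set.mem_Ioi]; linarith
              simp only [Set.indicator_of_mem this, Pi.one_apply]
              exact prob_le_one.trans le_add_self
            · have := ih (x - y) (by linarith)
              refine le_trans ?_ (this.trans le_self_add)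
              rw [show x - y + s + t = x + s + t - y by ring]
        _ = _ := by
            rw [lintegral_add_right _ (by measurability), lintegral_add_right _ (by fun_prop),
              lintegral_const_mul _ (meas_Ioi _ _), lintegral_indicator_one measurableSet_Ioi]
            simp only [lintegral_const, measure_univ, mul_one]
            push_cast
            ring

lemma tail_small (hm : M2 μ) {δ : ℝ} (hδ : 0 < δ) :
    Tendsto (fun n : ℕ => (n : ℝ≥0∞) * μ (Set.Ioi (δ * √n))) atTop (nhds 0) := by
  have h0 : ∫⁻ y, ENNReal.ofReal (y ^ 2) ∂μ ≠ ⊤ := by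
    have := hm 0
    simp only [zero_add] at this
    rw [this]; simp
  have h1 : Tendsto (fun n : ℕ => ∫⁻ y in Set.Ioi (δ * √n), ENNReal.ofReal (y ^ 2) ∂μ) atTop
      (nhds 0) := by
    have h2 : Tendsto (fun n : ℕ => μ (Set.Ioi (δ * √n))) atTop (nhds 0) := by
      have h3 : Tendsto (fun x : ℝ => μ (Set.Ioi x)) atTop (nhds 0) := by
        have := tendsto_measure_iInter_atTop (μ := μ) (s := fun x : ℝ => Set.Ioi x)
          (fun i => measurableSet_Ioi.nullMeasurableSet)
          (fun a b h => Set.Ioi_subset_Ioi h) ⟨0, measure_ne_top _ _⟩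
        have h4 : ⋂ n : ℝ, Set.Ioi n = ∅ := by
          ext x
          simp only [Set.mem_iInter, Set.mem_Ioi, Set.mem_empty_iff_false, iff_false, not_forall]
          exact ⟨x, lt_irrefl x⟩
        rw [h4, measure_empty] at this
        exact this
      apply h3.comp
      apply Tendsto.const_mul_atTop hδ
      exact Real.tendsto_sqrt_atTop.comp tendsto_natCast_atTop_atTop
    exact tendsto_setLIntegral_zero h0 h2
  have h2 : Tendsto (fun n : ℕ => ENNReal.ofReal (1 / δ ^ 2) *
      ∫⁻ y in Set.Ioi (δ * √n), ENNReal.ofReal (y ^ 2) ∂μ) atTop (nhds 0) := by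
    have := ENNReal.Tendsto.const_mul (a := ENNReal.ofReal (1 / δ ^ 2)) h1 (Or.inr ENNReal.ofReal_ne_top)
    simpa using this
  refine tendsto_of_tendsto_of_tendsto_of_le_of_le tendsto_const_nhds h2 (fun _ => zero_le) ?_
  intro n
  simp only
  rw [← setLIntegral_const, ← lintegral_const_mul _ (by fun_prop)]
  apply setLIntegral_mono (by fun_prop)
  intro y hy
  simp only [Set.mem_Ioi] at hy
  rw [← ENNReal.ofReal_mul (by positivity), ← ENNReal.ofReal_natCast]
  apply ENNReal.ofReal_le_ofReal
  rw [one_div, ← div_eq_inv_mul, le_div_iff₀ (by positivity)]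
  have : (n : ℝ) * δ ^ 2 = (δ * √n) ^ 2 := by rw [mul_pow, Real.sq_sqrt (by positivity)]; ring
  rw [this]
  have : 0 ≤ δ * √n := by positivity
  nlinarith

lemma gauss_le_vol : gaussianReal 0 1 ≤ volume := by
  rw [gaussianReal_of_var_ne_zero _ (by norm_num)]
  rw [Measure.le_iff]
  intro s hs
  rw [withDensity_apply _ hs]
  calc ∫⁻ a in s, gaussianPDF 0 1 a ≤ ∫⁻ a in s, 1 := by
        apply lintegral_mono
        intro x
        simp only [gaussianPDF, gaussianPDFReal]
        rw [← ENNReal.ofReal_one]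
        apply ENNReal.ofReal_le_ofReal
        have h1 : Real.exp (-(x - 0) ^ 2 / (2 * ((1 : NNReal) : ℝ))) ≤ 1 := by
          apply Real.exp_le_one_iff.mpr
          apply div_nonpos_of_nonpos_of_nonneg
          · nlinarith [sq_nonneg (x - 0)]
          · positivity
        have h2 : (√(2 * Real.pi * ((1 : NNReal) : ℝ)))⁻¹ ≤ 1 := by
          apply inv_le_one_of_one_le₀
          rw [Real.one_le_sqrt]
          have := Real.pi_gt_three
          simp only [NNReal.coe_one]; linarith
        calc _ ≤ (1:ℝ) * 1 := by gcongr
          _ = 1 := by ring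
    _ = _ := by simp

noncomputable def G (x : ℝ) : ℝ := (gaussianReal 0 1).real (Set.Ioi x)

lemma G_lip (x y : ℝ) : G x ≤ G y + |x - y| := by
  unfold G
  have : Set.Ioi x ⊆ Set.Ioi y ∪ Set.Ioc x y := by
    intro z hz
    rcases lt_or_ge y z with h | h
    · exact Or.inl h
    · exact Or.inr ⟨hz, h⟩
  refine (measureReal_mono this).trans ((measureReal_union_le _ _).trans ?_)
  gcongr
  have h2 := gauss_le_vol (Set.Ioc x y)
  rw [Real.volume_Ioc] at h2
  unfold Measure.real
  refine (ENNReal.toReal_mono ENNReal.ofReal_ne_top h2).trans ?_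
  rw [ENNReal.toReal_ofReal']
  apply max_le
  · rw [abs_sub_comm]; exact le_abs_self _
  · positivity

lemma G_cont : Continuous G := by
  have : LipschitzWith 1 G := by
    apply LipschitzWith.of_dist_le_mul
    intro x y
    simp only [NNReal.coe_one, one_mul, Real.dist_eq]
    rw [abs_le]
    constructor
    · have := G_lip y x; rw [abs_sub_comm] at this; linarith
    · have := G_lip x y; linarith
  exact this.continuous

lemma G_zero : G 0 = 1 / 2 := by
  have h1 : (gaussianReal 0 1).real (Set.Iio 0) = G 0 := by
    unfold G Measure.real
    have := gaussianReal_map_neg (μ := 0) (v := 1)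
    rw [neg_zero] at this
    conv_lhs => rw [← this]
    rw [Measure.map_apply (by fun_prop) measurableSet_Iio]
    congr 2
    ext x; simp
  have h2 : (gaussianReal 0 1).real (Set.Iio 0) + (gaussianReal 0 1).real (Set.Ici 0) = 1 := by
    rw [← Set.compl_Iio, probReal_add_probReal_compl measurableSet_Iio]
  have := nullSingletonClass_gaussianReal (μ := 0) (v := 1) (by norm_num)
  have h3 : (gaussianReal 0 1).real (Set.Ici 0) = G 0 := by
    unfold G Measure.real
    rw [measure_congr Ioi_ae_eq_Ici]
  linarith

def CLT (μ : Measure ℝ) : Prop :=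
  ∀ x : ℝ, Tendsto (fun n : ℕ => (cpow μ n).real (Set.Ioi (x * √n))) atTop (nhds (G x))

/-- The Erdős–Kac theorem -/
lemma erdos_kac (hm : M2 μ) (hclt : CLT μ) {x : ℝ} (hx : 0 ≤ x) :
    Tendsto (fun n : ℕ => (lam μ n).real (Set.Ioi (x * √n))) atTop (nhds (2 * G x)) := by
  have hsq : Tendsto (fun n : ℕ => √(n:ℝ)) atTop atTop :=
    Real.tendsto_sqrt_atTop.comp tendsto_natCast_atTop_atTop
  have h0 : Tendsto (fun n : ℕ => (cpow μ n).real (Set.Ioi 0)) atTop (nhds (1 / 2)) := by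
    have := hclt 0
    simpa [G_zero] using this
  rw [tendsto_order]
  constructor
  · intro a ha
    -- lower bound
    have hf : ContinuousAt (fun δ : ℝ => (G (x + 2 * δ) - δ - δ) / (1 / 2 + δ)) 0 := by
      have := G_cont
      apply ContinuousAt.div
      · fun_prop
      · fun_prop
      · norm_num
    have hf2 : ∀ᶠ δ in nhds (0:ℝ), a < (G (x + 2 * δ) - δ - δ) / (1 / 2 + δ) := by
      apply hf.eventually_const_lt
      simp only [mul_zero, add_zero, sub_zero]
      linarith
    have hf3 : ∀ᶠ δ in nhdsWithin (0:ℝ) (Set.Ioi 0), a < (G (x + 2 * δ) - δ - δ) / (1 / 2 + δ) ∧ 0 < δ :=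
      (hf2.filter_mono nhdsWithin_le_nhds).and self_mem_nhdsWithin
    obtain ⟨δ, hδ, hδ0⟩ := hf3.exists
    obtain ⟨K, hK⟩ := eventually_atTop.1 (h0.eventually_lt_const (show 1 / 2 < 1 / 2 + δ by linarith))
    set t : ℝ := √(2 * K) + 1 with ht
    have ht0 : 0 < t := by positivity
    have hc : ∀ j, cpow μ j (Set.Ioi t) ≤ ENNReal.ofReal (1 / 2 + δ) := by
      intro j
      rcases le_or_gt K j with h | h
      · have := hK j h
        rw [← ENNReal.ofReal_toReal (measure_ne_top (cpow μ j) (Set.Ioi t))]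
        apply ENNReal.ofReal_le_ofReal
        refine le_trans ?_ this.le
        exact measureReal_mono (Set.Ioi_subset_Ioi ht0.le)
      · refine (cheb _ ht0).trans ?_
        rw [cpow_sq μ hm, ← ENNReal.ofReal_natCast, ← ENNReal.ofReal_div_of_pos (by positivity)]
        apply ENNReal.ofReal_le_ofReal
        have h5 : (j : ℝ) ≤ K := by exact_mod_cast h.le
        have h6 : 2 * (K:ℝ) ≤ t ^ 2 := by
          have : √(2 * (K:ℝ)) ^ 2 = 2 * K := Real.sq_sqrt (by positivity)
          have h7 : 0 ≤ √(2 * (K:ℝ)) := by positivity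
          rw [ht]; nlinarith
        rw [div_le_iff₀ (by positivity)]
        nlinarith [sq_nonneg t]
    have e1 := (hclt (x + 2 * δ)).eventually_const_lt (show G (x + 2 * δ) - δ < G (x + 2 * δ) by linarith)
    have e2 : ∀ᶠ n : ℕ in atTop, (n : ℝ≥0∞) * μ (Set.Ioi (δ * √n)) < ENNReal.ofReal δ :=
      (tail_small μ hm hδ0).eventually_lt_const (by simpa using hδ0)
    have e3 : ∀ᶠ n : ℕ in atTop, t / δ ≤ √(n:ℝ) := hsq.eventually_ge_atTop _
    filter_upwards [e1, e2, e3] with n h1 h2 h3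
    refine hδ.trans_le ?_
    have h4 := ek_lower μ (ENNReal.ofReal (1 / 2 + δ)) (δ * √n) t (by positivity) ht0.le hc n (x * √n)
      (by have : 0 ≤ x * √n := by positivity
          have : 0 ≤ δ * √n := by positivity
          linarith)
    have h5 : cpow μ n (Set.Ioi ((x + 2 * δ) * √n)) ≤
        ENNReal.ofReal (1 / 2 + δ) * lam μ n (Set.Ioi (x * √n)) + ENNReal.ofReal δ := by
      refine le_trans (measure_mono (Set.Ioi_subset_Ioi ?_)) (h4.trans (by gcongr))
      rw [div_le_iff₀ hδ0] at h3
      linarith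
    have h6 := ENNReal.toReal_mono (by finiteness) h5
    rw [ENNReal.toReal_add (by finiteness) (by finiteness), ENNReal.toReal_mul,
      ENNReal.toReal_ofReal (by positivity), ENNReal.toReal_ofReal (by positivity)] at h6
    change (cpow μ n).real _ ≤ (1 / 2 + δ) * (lam μ n).real _ + δ at h6
    rw [div_le_iff₀ (by positivity)]
    linarith
  · intro a ha
    have hf : ContinuousAt (fun δ : ℝ => (G (x - δ) + δ) / (1 / 2 - δ)) 0 := by
      have := G_cont
      apply ContinuousAt.div
      · fun_prop
      · fun_prop
      · norm_num
    have hf2 : ∀ᶠ δ in nhds (0:ℝ), (G (x - δ) + δ) / (1 / 2 - δ) < a := by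
      apply hf.eventually_lt_const
      simp only [add_zero, sub_zero]
      linarith
    have hf4 : ∀ᶠ δ in nhds (0:ℝ), δ < 1 / 2 := eventually_lt_nhds (by norm_num)
    have hf3 : ∀ᶠ δ in nhdsWithin (0:ℝ) (Set.Ioi 0),
        ((G (x - δ) + δ) / (1 / 2 - δ) < a ∧ δ < 1 / 2) ∧ 0 < δ :=
      ((hf2.and hf4).filter_mono nhdsWithin_le_nhds).and self_mem_nhdsWithin
    obtain ⟨δ, ⟨hδ, hδ1⟩, hδ0⟩ := hf3.exists
    have hδ0 : 0 < δ := hδ0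
    obtain ⟨K, hK⟩ := eventually_atTop.1 (h0.eventually_const_lt (show 1 / 2 - δ < 1 / 2 by linarith))
    have hc : ∀ j, K ≤ j → ENNReal.ofReal (1 / 2 - δ) ≤ cpow μ j (Set.Ioi 0) := by
      intro j h
      have := hK j h
      rw [← ENNReal.ofReal_toReal (measure_ne_top (cpow μ j) (Set.Ioi 0))]
      exact ENNReal.ofReal_le_ofReal this.le
    have e1 := (((hclt (x - δ)).comp (tendsto_add_atTop_nat K)).eventually_lt_const
      (show G (x - δ) < G (x - δ) + δ by linarith))
    have e3 : ∀ᶠ n : ℕ in atTop, |x - δ| * √K / δ ≤ √(n:ℝ) := hsq.eventually_ge_atTop _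
    filter_upwards [e1, e3] with n h1 h3
    refine lt_of_le_of_lt ?_ hδ
    have h4 := ek_upper μ _ K hc n (x * √n)
    have h6 := ENNReal.toReal_mono (by finiteness) h4
    rw [ENNReal.toReal_mul, ENNReal.toReal_ofReal (by linarith)] at h6
    rw [le_div_iff₀ (by linarith)]
    simp only [Function.comp] at h1
    have h7 : (cpow μ (n + K)).real (Set.Ioi (x * √n)) ≤
        (cpow μ (n + K)).real (Set.Ioi ((x - δ) * √((n + K : ℕ) : ℝ))) := by
      apply measureReal_mono (Set.Ioi_subset_Ioi ?_)
      rw [div_le_iff₀ hδ0] at h3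
      have h8 : √((n + K : ℕ) : ℝ) ≤ √n + √K := by
        push_cast
        refine Real.sqrt_le_iff.2 ⟨by positivity, ?_⟩
        have e1 : √(n:ℝ) ^ 2 = n := Real.sq_sqrt (by positivity)
        have e2 : √(K:ℝ) ^ 2 = K := Real.sq_sqrt (by positivity)
        have e3 : 0 ≤ √(n:ℝ) * √(K:ℝ) := by positivity
        nlinarith
      have h9 : √(n:ℝ) ≤ √((n + K : ℕ) : ℝ) := Real.sqrt_le_sqrt (by push_cast; simp)
      rcases le_total 0 (x - δ) with hh | hh
      · rw [abs_of_nonneg hh] at h3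
        nlinarith
      · have : 0 ≤ √((n + K : ℕ) : ℝ) := by positivity
        nlinarith [mul_nonneg hx (Real.sqrt_nonneg (n:ℝ)),
          mul_nonneg (sub_nonneg.2 hh : (0:ℝ) ≤ 0 - (x - δ)) this]
    change (1 / 2 - δ) * (lam μ n).real _ ≤ (cpow μ (n + K)).real _ at h6
    linarith

end
end EEK

open MeasureTheory ProbabilityTheory Filter
open scoped ENNReal Classical
set_option linter.unusedSectionVars false

namespace EEK

section
variable (μ : Measure ℝ) [IsProbabilityMeasure μ]

noncomputable def Phi (x0 : ℝ) (j : ℕ) (z : ℝ) : ℝ≥0∞ :=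
  ENNReal.ofReal (((max (x0 - z) 0) ^ 2 + j) / x0 ^ 2)

lemma Phi_meas (x0 : ℝ) (j : ℕ) : Measurable (Phi x0 j) := by
  unfold Phi; fun_prop

lemma Phi_step (hm : M2 μ) {x0 : ℝ} (h0 : 0 < x0) (j : ℕ) (z : ℝ) :
    ∫⁻ y, Phi x0 j (z + y) ∂μ ≤ Phi x0 (j + 1) z := by
  set c := max (x0 - z) 0 with hc
  have h1 : ∀ y, Phi x0 j (z + y) ≤
      ENNReal.ofReal (1 / x0 ^ 2) * (ENNReal.ofReal ((-c + y) ^ 2) + ENNReal.ofReal j) := by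
    intro y
    unfold Phi
    rw [← ENNReal.ofReal_add (by positivity) (by positivity), ← ENNReal.ofReal_mul (by positivity)]
    apply ENNReal.ofReal_le_ofReal
    rw [div_eq_mul_one_div, mul_comm]
    refine mul_le_mul_of_nonneg_left (add_le_add_left ?_ _) (by positivity)
    rcases le_total (x0 - (z + y)) 0 with h | h
    · rw [max_eq_right h]; nlinarith [sq_nonneg (-c + y)]
    · rw [max_eq_left h]
      rcases le_total (x0 - z) 0 with h' | h'
      · rw [hc, max_eq_right h']; nlinarith
      · rw [hc, max_eq_left h']; nlinarith
  refine (lintegral_mono h1).trans ?_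
  rw [lintegral_const_mul _ (by fun_prop), lintegral_add_right _ (by fun_prop), hm]
  simp only [lintegral_const, measure_univ, mul_one]
  rw [← ENNReal.ofReal_add (by positivity) (by positivity), ← ENNReal.ofReal_mul (by positivity)]
  unfold Phi
  apply ENNReal.ofReal_le_ofReal
  apply le_of_eq
  push_cast
  rw [← hc]
  ring

lemma kill_mass (hm : M2 μ) {x0 : ℝ} (h0 : 0 < x0) (j : ℕ) (ρ : Measure ℝ) [IsFiniteMeasure ρ] :
    ρ Set.univ ≤ ((kill μ)^[j] ρ) Set.univ + ∫⁻ z, Phi x0 j z ∂ρ := by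
  induction j generalizing ρ with
  | zero => simp
  | succ j ih =>
    rw [Function.iterate_succ_apply]
    have h1 := ih (kill μ ρ)
    have h2 : ρ Set.univ = kill μ ρ Set.univ + (Measure.conv ρ μ) (Set.Iic 0) := by
      unfold kill
      rw [Measure.restrict_apply MeasurableSet.univ, Set.univ_inter, ← Set.compl_Ioi,
        measure_add_measure_compl measurableSet_Ioi]
      unfold Measure.conv
      rw [Measure.map_apply (by fun_prop) MeasurableSet.univ, Set.preimage_univ, ← Set.univ_prod_univ, Measure.prod_prod]
      simp
    have h3 : (Measure.conv ρ μ) (Set.Iic 0) ≤ ∫⁻ z in Set.Iic 0, Phi x0 j z ∂(Measure.conv ρ μ) := by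
      rw [← setLIntegral_one]
      apply setLIntegral_mono (Phi_meas _ _)
      intro z hz
      simp only [Set.mem_Iic] at hz
      unfold Phi
      rw [← ENNReal.ofReal_one]
      apply ENNReal.ofReal_le_ofReal
      rw [le_div_iff₀ (by positivity), one_mul, max_eq_left (by linarith)]
      have : (0:ℝ) ≤ j := by positivity
      nlinarith
    have h4 : ∫⁻ z, Phi x0 j z ∂(kill μ ρ) + ∫⁻ z in Set.Iic 0, Phi x0 j z ∂(Measure.conv ρ μ)
        ≤ ∫⁻ z, Phi x0 (j + 1) z ∂ρ := by
      unfold kill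
      rw [← Set.compl_Ioi, lintegral_add_compl _ measurableSet_Ioi,
        Measure.lintegral_conv (Phi_meas _ _)]
      exact lintegral_mono (fun z => Phi_step μ hm h0 j z)
    calc ρ Set.univ = kill μ ρ Set.univ + (Measure.conv ρ μ) (Set.Iic 0) := h2
      _ ≤ _ := add_le_add h1 h3
      _ ≤ _ := by rw [add_assoc]; gcongr

noncomputable def beta (n a : ℕ) : ℝ≥0∞ := q μ n + vpart μ n a Set.univ

lemma beta_add {n a : ℕ} (h : a ≤ n) :
    beta μ n a + ((kill μ)^[a] (lamp μ (n - a))) Set.univ = 1 := by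
  rw [← lamp_add_q μ n, lamp_split μ h]
  simp only [Measure.add_apply]
  unfold beta
  ring

lemma beta_le_one {n a : ℕ} (h : a ≤ n) : beta μ n a ≤ 1 := by
  rw [← beta_add μ h]; exact le_self_add

lemma beta_le (hm : M2 μ) {x0 : ℝ} (h0 : 0 < x0) {n a : ℕ} (h : a ≤ n) :
    beta μ n a ≤ lam μ (n - a) (Set.Iic x0) + ENNReal.ofReal (a / x0 ^ 2) := by
  have hP : ∫⁻ z, Phi x0 a z ∂(lam μ (n - a)) ≤
      lam μ (n - a) (Set.Iic x0) + ENNReal.ofReal (a / x0 ^ 2) := by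
    calc ∫⁻ z, Phi x0 a z ∂(lam μ (n - a)) ≤
        ∫⁻ z, ((Set.Iic x0).indicator 1 z + ENNReal.ofReal (a / x0 ^ 2)) ∂(lam μ (n - a)) := by
          apply lintegral_mono_ae
          have : ∀ᵐ z ∂(lam μ (n - a)), 0 ≤ z := by
            have := lam_Iio μ (n - a)
            rw [ae_iff]
            simpa [Set.Iio_def] using this
          filter_upwards [this] with z hz
          unfold Phi
          rw [add_div, ENNReal.ofReal_add (by positivity) (by positivity)]
          gcongr
          rcases le_or_gt z x0 with hh | hh
          · rw [Set.indicator_of_mem (by simpa using hh), Pi.one_apply, ← ENNReal.ofReal_one]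
            apply ENNReal.ofReal_le_ofReal
            rw [div_le_one (by positivity), max_eq_left (by linarith)]
            nlinarith
          · rw [max_eq_right (by linarith)]; simp
      _ = _ := by
          rw [lintegral_add_right _ (by fun_prop), lintegral_indicator_one measurableSet_Iic]
          simp
  have h1 := kill_mass μ hm h0 a (lamp μ (n - a))
  have h2 : (1:ℝ≥0∞) ≤ Phi x0 a 0 := by
    unfold Phi
    rw [← ENNReal.ofReal_one]
    apply ENNReal.ofReal_le_ofReal
    rw [le_div_iff₀ (by positivity), one_mul, max_eq_left (by linarith)]
    have : (0:ℝ) ≤ a := by positivity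
    nlinarith
  have h3 : 1 ≤ ((kill μ)^[a] (lamp μ (n - a))) Set.univ + ∫⁻ z, Phi x0 a z ∂(lam μ (n - a)) := by
    conv_rhs => rw [lam_split μ (n - a)]
    rw [lintegral_add_measure, lintegral_smul_measure, lintegral_dirac' _ (Phi_meas _ _),
      ← lamp_add_q μ (n - a), ← add_assoc]
    apply add_le_add h1
    calc q μ (n - a) = q μ (n - a) * 1 := by ring
      _ ≤ _ := by rw [smul_eq_mul]; gcongr
  refine le_trans ?_ hP
  have h4 := beta_add μ h
  rw [← h4, add_comm] at h3
  exact (ENNReal.add_le_add_iff_left (by finiteness)).1 h3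

lemma beta_ratio {n a : ℕ} (h : a ≤ n) :
    q μ n * beta μ (2 * a) a ≤ q μ a * beta μ n a := by
  set g : ℝ≥0∞ := 1 + ∑ k ∈ Finset.range a, gam μ (k + 1) Set.univ with hg
  have h1 : q μ n * g ≤ beta μ n a := by
    unfold beta vpart
    rw [hg, mul_add, mul_one, Finset.mul_sum]
    simp only [Measure.coe_finsetSum, Finset.sum_apply, Measure.smul_apply, smul_eq_mul]
    gcongr
    exact q_anti μ (by omega)
  have h2 : beta μ (2 * a) a ≤ q μ a * g := by
    unfold beta vpart
    rw [hg, mul_add, mul_one, Finset.mul_sum]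
    simp only [Measure.coe_finsetSum, Finset.sum_apply, Measure.smul_apply, smul_eq_mul]
    gcongr with k hk
    · exact q_anti μ (by omega)
    · simp only [Finset.mem_range] at hk
      exact q_anti μ (by omega)
  calc q μ n * beta μ (2 * a) a ≤ q μ n * (q μ a * g) := by gcongr
    _ = q μ a * (q μ n * g) := by ring
    _ ≤ _ := by gcongr

lemma G_neg_lt : G (-2) < 1 := by
  have h1 : (gaussianReal 0 1).real (Set.Iic (-2)) ≠ 0 := by
    have := gaussianReal_absolutelyContinuous' 0 (v := 1) (by norm_num)
    rw [Ne, measureReal_eq_zero_iff]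
    intro h
    have := this h
    simp at this
  have h2 : (gaussianReal 0 1).real (Set.Iic (-2)) + G (-2) = 1 := by
    unfold G
    rw [← Set.compl_Iic, probReal_add_probReal_compl measurableSet_Iic]
  have : 0 ≤ (gaussianReal 0 1).real (Set.Iic (-2)) := measureReal_nonneg
  have : 0 < (gaussianReal 0 1).real (Set.Iic (-2)) := lt_of_le_of_ne this h1.symm
  linarith

lemma beta_lower (hm : M2 μ) (hclt : CLT μ) :
    ∃ c : ℝ, 0 < c ∧ ∀ᶠ a : ℕ in atTop, ENNReal.ofReal c ≤ beta μ (2 * a) a := by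
  have hG := G_neg_lt
  refine ⟨3 / 4 * ((1 - G (-2)) / 2), by linarith, ?_⟩
  have e1 := (hclt (-2)).eventually_lt_const (show G (-2) < (1 + G (-2)) / 2 by linarith)
  filter_upwards [e1, eventually_ge_atTop 1] with a ha ha1
  have hsq : 0 < √(a:ℝ) := by positivity
  set t : ℝ := 2 * √a with ht
  have ht0 : 0 < t := by positivity
  have h1 : lam μ a (Set.Ioi t) ≤ ENNReal.ofReal (1 / 4) := by
    refine (cheb _ ht0).trans ?_
    have := lam_sq μ hm a
    calc _ ≤ (a : ℝ≥0∞) / ENNReal.ofReal (t ^ 2) := by gcongr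
      _ = ENNReal.ofReal (1 / 4) := by
        rw [← ENNReal.ofReal_natCast, ← ENNReal.ofReal_div_of_pos (by positivity)]
        congr 1
        rw [ht, mul_pow, Real.sq_sqrt (by positivity)]
        field_simp
        norm_num
  have h2 := beta_add μ (show a ≤ 2 * a by omega)
  rw [show 2 * a - a = a by omega] at h2
  set c := (cpow μ a) (Set.Ioi (-t)) with hc
  have h3 : ((kill μ)^[a] (lamp μ a)) Set.univ ≤ lam μ a (Set.Ioi t) + lam μ a (Set.Iic t) * c := by
    calc ((kill μ)^[a] (lamp μ a)) Set.univ = ((kill μ)^[a] (lamp μ a)) (Set.Ioi 0) := by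
          obtain ⟨d, rfl⟩ := Nat.exists_eq_add_of_le ha1
          rw [add_comm, Function.iterate_succ_apply']
          simp [kill]
      _ ≤ Measure.conv (lamp μ a) (cpow μ a) (Set.Ioi 0) := kill_iter_le μ a _ _
      _ ≤ Measure.conv (lam μ a) (cpow μ a) (Set.Ioi 0) :=
          conv_mono_left _ (Measure.restrict_le_self) _
      _ = ∫⁻ y, cpow μ a (Set.Ioi (0 - y)) ∂(lam μ a) := by
          rw [Measure.conv_comm, conv_Ioi]
      _ ≤ ∫⁻ y, ((Set.Ioi t).indicator 1 y + (Set.Iic t).indicator (fun _ => c) y) ∂(lam μ a) := by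
          apply lintegral_mono
          intro y
          beta_reduce
          rcases le_or_gt y t with hh | hh
          · rw [Set.indicator_of_mem (s := Set.Iic t) (by simpa using hh)]
            refine le_trans ?_ le_add_self
            exact measure_mono (Set.Ioi_subset_Ioi (by linarith))
          · rw [Set.indicator_of_mem (s := Set.Ioi t) (by simpa using hh)]
            exact prob_le_one.trans le_self_add
      _ = _ := by
          rw [lintegral_add_right _ (by measurability), lintegral_indicator_one measurableSet_Ioi,
            lintegral_indicator_const measurableSet_Iic, mul_comm c]
  have h4 : lam μ a (Set.Iic t) + lam μ a (Set.Ioi t) = 1 := by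
    rw [← Set.compl_Iic, prob_add_prob_compl measurableSet_Iic]
  have hcr : c.toReal ≤ (1 + G (-2)) / 2 := by
    have : c.toReal = (cpow μ a).real (Set.Ioi (-2 * √a)) := by
      rw [hc, ht]; unfold Measure.real; ring_nf
    rw [this]; exact ha.le
  have hb : beta μ (2 * a) a ≠ ⊤ := ((beta_le_one μ (by omega)).trans_lt ENNReal.one_lt_top).ne
  apply ENNReal.ofReal_le_of_le_toReal
  have g2 := congrArg ENNReal.toReal h2
  have g4 := congrArg ENNReal.toReal h4
  have g3 := ENNReal.toReal_mono (by finiteness) h3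
  have g1 := ENNReal.toReal_mono (by finiteness) h1
  rw [ENNReal.toReal_add hb (by finiteness)] at g2
  rw [ENNReal.toReal_add (by finiteness) (by finiteness)] at g4
  rw [ENNReal.toReal_add (by finiteness) (by finiteness), ENNReal.toReal_mul] at g3
  rw [ENNReal.toReal_ofReal (by norm_num)] at g1
  rw [ENNReal.toReal_one] at g2 g4
  have : (lam μ a (Set.Iic t)).toReal * c.toReal ≤ (lam μ a (Set.Iic t)).toReal * ((1 + G (-2)) / 2) := by
    gcongr
  nlinarith

lemma beta_upper (hm : M2 μ) (hclt : CLT μ) {j : ℕ} (hj : 1 ≤ j) :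
    ∀ᶠ m : ℕ in atTop, ∀ n, (j ^ 4 + 1) * m ≤ n → beta μ n m ≤ ENNReal.ofReal (4 / j) := by
  have hj0 : (0:ℝ) < j := by positivity
  have hj1 : (1:ℝ) ≤ j := by exact_mod_cast hj
  have h1 := erdos_kac μ hm hclt (x := 1 / (j:ℝ)) (by positivity)
  have h2 : Tendsto (fun m : ℕ => j ^ 4 * m) atTop atTop :=
    tendsto_id.const_mul_atTop' (by positivity)
  have e1 := (h1.comp h2).eventually_const_lt (show 2 * G (1 / j) - 1 / j < 2 * G (1 / j) by
    have : 0 < 1 / (j:ℝ) := by positivity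
    linarith)
  filter_upwards [e1, eventually_ge_atTop 1] with m hm' hm1 n hn
  have hsm : 0 < √(m:ℝ) := by positivity
  have hk := beta_le μ hm (x0 := j * √m) (by positivity) ((Nat.le_mul_of_pos_left _ (by positivity)).trans hn : m ≤ n)
  refine hk.trans ?_
  have hsub : j ^ 4 * m ≤ n - m := by
    rw [add_mul, one_mul] at hn
    omega
  have hmo : lam μ (j ^ 4 * m) (Set.Ioi (j * √m)) ≤ lam μ (n - m) (Set.Ioi (j * √m)) :=
    monotone_nat_of_le_succ (f := fun n => lam μ n (Set.Ioi (j * √m)))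
      (fun n => lam_mono_succ μ n _) hsub
  have hmo2 : lam μ (n - m) (Set.Iic (j * √m)) ≤ 1 - lam μ (j ^ 4 * m) (Set.Ioi (j * √m)) := by
    rw [← Set.compl_Ioi, prob_compl_eq_one_sub measurableSet_Ioi]
    gcongr
  refine (add_le_add_left hmo2 _).trans ?_
  have hx : 1 / (j:ℝ) * √((j ^ 4 * m : ℕ) : ℝ) = j * √m := by
    push_cast
    rw [Real.sqrt_mul (by positivity), show (j:ℝ) ^ 4 = (j ^ 2) ^ 2 by ring, Real.sqrt_sq (by positivity)]
    field_simp
  simp only [Function.comp] at hm'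
  rw [hx] at hm'
  have h5 := G_lip 0 (1 / j)
  rw [G_zero, zero_sub, abs_neg, abs_of_pos (by positivity)] at h5
  have h6 : 1 - lam μ (j ^ 4 * m) (Set.Ioi (j * √m)) ≤ ENNReal.ofReal (3 / j) := by
    rw [← ENNReal.ofReal_toReal (measure_ne_top (lam μ (j ^ 4 * m)) (Set.Ioi (j * √m))),
      ← ENNReal.ofReal_one, ← ENNReal.ofReal_sub _ (by positivity)]
    apply ENNReal.ofReal_le_ofReal
    change 1 - (lam μ (j ^ 4 * m)).real _ ≤ _
    have : 3 / (j:ℝ) = 3 * (1 / j) := by ring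
    linarith
  have h7 : (m:ℝ) / (j * √m) ^ 2 ≤ 1 / j := by
    rw [mul_pow, Real.sq_sqrt (by positivity), div_le_div_iff₀ (by positivity) (by positivity)]
    have : (0:ℝ) < m := by positivity
    nlinarith [mul_pos this hj0]
  calc _ ≤ ENNReal.ofReal (3 / j) + ENNReal.ofReal (1 / j) := by
        gcongr
    _ = _ := by
        rw [← ENNReal.ofReal_add (by positivity) (by positivity)]; congr 1; ring

lemma q_ratio (hm : M2 μ) (hclt : CLT μ) : ∃ C : ℝ, 0 < C ∧ ∀ j : ℕ, 1 ≤ j →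
    ∀ᶠ m : ℕ in atTop, q μ ((j ^ 4 + 1) * m) ≤ ENNReal.ofReal (C / j) * q μ m := by
  obtain ⟨c, hc, hl⟩ := beta_lower μ hm hclt
  refine ⟨4 / c, by positivity, fun j hj => ?_⟩
  have hj0 : (0:ℝ) < j := by positivity
  filter_upwards [hl, beta_upper μ hm hclt hj] with m h1 h2'
  have h2 := h2' _ le_rfl
  have h3 := beta_ratio μ (show m ≤ (j ^ 4 + 1) * m from Nat.le_mul_of_pos_left _ (by positivity))
  have h4 : q μ ((j ^ 4 + 1) * m) * ENNReal.ofReal c ≤ q μ m * ENNReal.ofReal (4 / j) :=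
    (mul_le_mul_right h1 _).trans (h3.trans (mul_le_mul_right h2 _))
  have h5 : ENNReal.ofReal (4 / c / j) = ENNReal.ofReal (4 / j) / ENNReal.ofReal c := by
    rw [← ENNReal.ofReal_div_of_pos hc]; congr 1; ring
  rw [h5, mul_comm (_ / _), ← mul_div_assoc, ENNReal.le_div_iff_mul_le (Or.inl (by simpa using hc)) (Or.inl (by finiteness))]
  exact h4

end
end EEK

open MeasureTheory ProbabilityTheory Filter
open scoped ENNReal Classical
set_option linter.unusedSectionVars false

namespace EEK

lemma L1_trans {p : ℝ → ℝ} (hp : Integrable p) :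
    Tendsto (fun h : ℝ => ∫ x, |p (x + h) - p x|) (nhds 0) (nhds 0) := by
  have hmp : ∀ h : ℝ, MeasurePreserving (fun x : ℝ => x + h) volume volume :=
    fun h => measurePreserving_add_right volume h
  have hcont : Continuous (fun h : ℝ => (⟨fun x : ℝ => x + h, by fun_prop⟩ : C(ℝ, ℝ))) := by
    apply ContinuousMap.continuous_of_continuous_uncurry
    change Continuous (fun z : ℝ × ℝ => z.2 + z.1)
    fun_prop
  have h1 := (continuous_const (y := hp.toL1 p)).compMeasurePreservingLp (p := 1) hcont hmp ENNReal.one_ne_top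
  have h2 := (h1.sub (continuous_const (y := hp.toL1 p))).norm.tendsto 0
  have h3 : ∀ h : ℝ, ‖Lp.compMeasurePreserving (fun x : ℝ => x + h) (hmp h) (hp.toL1 p) - hp.toL1 p‖ =
      ∫ x, |p (x + h) - p x| := by
    intro h
    rw [L1.norm_eq_integral_norm]
    apply integral_congr_ae
    have a1 := Lp.coeFn_compMeasurePreserving (hp.toL1 p) (hmp h)
    have a2 := hp.coeFn_toL1
    have a3 := (hmp h).quasiMeasurePreserving.ae a2
    have a4 := Lp.coeFn_sub (Lp.compMeasurePreserving (fun x : ℝ => x + h) (hmp h) (hp.toL1 p)) (hp.toL1 p)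
    filter_upwards [a1, a2, a3, a4] with x b1 b2 b3 b4
    rw [b4, Pi.sub_apply, b1, b2, Function.comp, b3, Real.norm_eq_abs]
  change Tendsto (fun h : ℝ => ‖Lp.compMeasurePreserving (fun x : ℝ => x + h) (hmp h) (hp.toL1 p) - hp.toL1 p‖) _ (nhds ‖Lp.compMeasurePreserving (fun x : ℝ => x + 0) (hmp 0) (hp.toL1 p) - hp.toL1 p‖) at h2
  simp_rw [h3] at h2
  simpa using h2

/-- decomposition of an absolutely continuous probability measure -/
lemma decomp (μ : Measure ℝ) [IsProbabilityMeasure μ] (hac : μ ≪ volume) :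
    ∃ h0 : ℝ, 0 < h0 ∧ ∀ h : ℝ, |h| ≤ h0 → ∃ ρ κ : Measure ℝ, IsFiniteMeasure ρ ∧ IsFiniteMeasure κ ∧
      μ = ρ + ((1/2 : ℝ≥0∞) • κ + (1/2 : ℝ≥0∞) • κ.map (fun x => x + h)) ∧
      ρ.real Set.univ = 1 / 2 ∧ κ.real Set.univ = 1 / 2 := by
  set p : ℝ → ℝ := fun x => (μ.rnDeriv volume x).toReal with hp
  have hpi : Integrable p := Measure.integrable_toReal_rnDeriv
  have hpm : Measurable p := (Measure.measurable_rnDeriv _ _).ennreal_toReal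
  have hp0 : ∀ x, 0 ≤ p x := fun x => ENNReal.toReal_nonneg
  have hμ : μ = volume.withDensity (fun x => ENNReal.ofReal (p x)) := by
    conv_lhs => rw [← Measure.withDensity_rnDeriv_eq μ volume hac]
    apply withDensity_congr_ae
    filter_upwards [Measure.rnDeriv_lt_top μ volume] with x hx
    rw [hp]; simp only; rw [ENNReal.ofReal_toReal hx.ne]
  have hp1 : ∫ x, p x = 1 := by
    rw [Measure.integral_toReal_rnDeriv hac]; simp
  obtain ⟨h0, hh0, hb⟩ := Metric.eventually_nhds_iff.1 ((L1_trans hpi).eventually_lt_const (show (0:ℝ) < 1 / 2 by norm_num))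
  refine ⟨h0 / 2, by linarith, fun h hh => ?_⟩
  have hb := hb (y := h) (by rw [Real.dist_eq, sub_zero]; linarith)
  set k : ℝ → ℝ := fun x => min (p x) (p (x + h)) with hk
  have hkm : Measurable k := by fun_prop
  have hk0 : ∀ x, 0 ≤ k x := fun x => le_min (hp0 _) (hp0 _)
  have hpi' : Integrable (fun x => p (x + h)) := hpi.comp_add_right h
  have hki : Integrable k := hpi.inf hpi'
  set I : ℝ := ∫ x, k x with hI
  have hI1 : 1 / 2 ≤ I := by
    have hai : Integrable (fun x => |p (x + h) - p x|) := (hpi'.sub hpi).abs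
    have : ∫ x, (p x - |p (x + h) - p x|) ≤ I := by
      apply integral_mono (hpi.sub hai) hki
      intro x
      simp only [hk, Pi.sub_apply]
      apply le_min
      · linarith [abs_nonneg (p (x + h) - p x)]
      · have := neg_abs_le (p (x + h) - p x); linarith
    rw [integral_sub hpi hai, hp1] at this
    linarith
  set d : ℝ → ℝ := fun x => k x / (2 * I) with hd
  have hdm : Measurable d := by fun_prop
  have hd0 : ∀ x, 0 ≤ d x := fun x => div_nonneg (hk0 x) (by linarith)
  have hdk : ∀ x, d x ≤ k x := fun x => div_le_self (hk0 x) (by linarith)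
  have hdi : Integrable d := hki.div_const _
  set κ : Measure ℝ := volume.withDensity (fun x => ENNReal.ofReal (d x)) with hκ
  have hmass : κ Set.univ = ENNReal.ofReal (1 / 2) := by
    rw [hκ, withDensity_apply _ MeasurableSet.univ, setLIntegral_univ,
      ← ofReal_integral_eq_lintegral_ofReal hdi (ae_of_all _ hd0)]
    congr 1
    rw [hd, integral_div, ← hI]
    field_simp
  have hκf : IsFiniteMeasure κ := ⟨by rw [hmass]; exact ENNReal.ofReal_lt_top⟩
  have hκ1 : κ ≤ μ := by
    rw [hμ, hκ]
    apply withDensity_mono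
    exact ae_of_all _ (fun x => ENNReal.ofReal_le_ofReal ((hdk x).trans (min_le_left _ _)))
  have hκ2 : κ.map (fun x => x + h) ≤ μ := by
    rw [Measure.le_iff]
    intro s hs
    rw [Measure.map_apply (by fun_prop) hs, hμ, hκ, withDensity_apply _ hs,
      withDensity_apply _ (hs.preimage (by fun_prop)),
      ← (measurePreserving_add_right volume h).setLIntegral_comp_preimage hs (by fun_prop)]
    apply lintegral_mono
    intro x
    exact ENNReal.ofReal_le_ofReal ((hdk x).trans (min_le_right _ _))
  set σ : Measure ℝ := (1/2 : ℝ≥0∞) • κ + (1/2 : ℝ≥0∞) • κ.map (fun x => x + h) with hσ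
  have hσμ : σ ≤ μ := by
    intro s
    rw [hσ]
    simp only [Measure.add_apply, Measure.smul_apply, smul_eq_mul]
    calc _ ≤ 1/2 * μ s + 1/2 * μ s := by
          exact add_le_add (mul_le_mul_right (hκ1 s) _) (mul_le_mul_right (hκ2 s) _)
      _ = μ s := by rw [← add_mul, ENNReal.add_halves, one_mul]
  have hσf : IsFiniteMeasure σ := isFiniteMeasure_of_le _ hσμ
  have hsub : μ = (μ - σ) + σ := (Measure.sub_add_cancel_of_le hσμ).symm
  have hσm : σ.real Set.univ = 1 / 2 := by
    have : σ Set.univ = ENNReal.ofReal (1 / 2) := by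
      rw [hσ]
      simp only [Measure.add_apply, Measure.smul_apply, smul_eq_mul]
      rw [Measure.map_apply (by fun_prop) MeasurableSet.univ, Set.preimage_univ, hmass, ← add_mul,
        ENNReal.add_halves, one_mul]
    rw [Measure.real, this, ENNReal.toReal_ofReal (by norm_num)]
  refine ⟨μ - σ, κ, isFiniteMeasure_of_le _ Measure.sub_le, hκf, hsub, ?_, ?_⟩
  · have h1 := congrArg (fun ν : Measure ℝ => ν.real Set.univ) hsub
    beta_reduce at h1
    rw [measureReal_add_apply, hσm, probReal_univ] at h1
    linarith
  · rw [Measure.real, hmass, ENNReal.toReal_ofReal (by norm_num)]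

end EEK

open MeasureTheory ProbabilityTheory Filter
open scoped ENNReal Classical
set_option linter.unusedSectionVars false

namespace EEK

/-- binomial averaging -/
noncomputable def Bn (h : ℝ) (j : ℕ) (F : ℝ → ℝ) (x : ℝ) : ℝ :=
  (1 / 2 ^ j) * ∑ i ∈ Finset.range (j + 1), (j.choose i : ℝ) * F (x + i * h)

lemma Bn_succ (h : ℝ) (j : ℕ) (F : ℝ → ℝ) (x : ℝ) :
    Bn h (j + 1) F x = (Bn h j F x + Bn h j F (x + h)) / 2 := by
  have h1 : ∑ i ∈ Finset.range (j + 1), (j.choose i : ℝ) * F (x + i * h) =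
      ∑ i ∈ Finset.range (j + 2), (j.choose i : ℝ) * F (x + i * h) := by
    rw [Finset.sum_range_succ _ (j + 1)]; simp
  unfold Bn
  rw [h1, Finset.sum_range_succ' _ (j + 1), Finset.sum_range_succ' _ (j + 1)]
  have h2 : ∀ i : ℕ, F (x + h + i * h) = F (x + ((i + 1 : ℕ) : ℝ) * h) := by
    intro i; congr 1; push_cast; ring
  simp_rw [h2, Nat.choose_succ_succ]
  push_cast
  simp_rw [add_mul]
  rw [Finset.sum_add_distrib]
  simp only [Nat.choose_zero_right]
  ring

lemma binom_var (N : ℕ) : ∑ i ∈ Finset.range (N + 1), ((N:ℝ) - 2 * i) ^ 2 * (N.choose i : ℝ) * (1 / 2 : ℝ) ^ N = (N : ℝ) := by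
  have h1 := bernsteinPolynomial.variance ℝ N
  have h2 := congrArg (fun P => Polynomial.eval (1/2 : ℝ) P) h1
  simp only [Polynomial.eval_finsetSum, bernsteinPolynomial] at h2
  simp only [Polynomial.eval_mul, Polynomial.eval_pow, Polynomial.eval_sub,
    Polynomial.eval_X, Polynomial.eval_natCast, Polynomial.eval_one, nsmul_eq_mul, Polynomial.eval_natCast] at h2
  have h3 : ∑ i ∈ Finset.range (N + 1), ((N:ℝ) - 2 * i) ^ 2 * (N.choose i : ℝ) * (1 / 2) ^ N
    = 4 * ∑ x ∈ Finset.range (N + 1), ((N:ℝ) * (1 / 2) - (x:ℝ)) ^ 2 * ((N.choose x : ℝ) * (1 / 2) ^ x * (1 - 1 / 2) ^ (N - x)) := by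
    rw [Finset.mul_sum]
    apply Finset.sum_congr rfl
    intro i hi
    simp only [Finset.mem_range] at hi
    have : ((1:ℝ) / 2) ^ N = (1 / 2) ^ i * (1 - 1 / 2) ^ (N - i) := by
      rw [show (1:ℝ) - 1 / 2 = 1 / 2 by norm_num, ← pow_add]; congr 1; omega
    rw [this]; ring
  rw [h3, h2]; ring

lemma binom_abs (N : ℕ) (hN : 1 ≤ N) :
    ∑ i ∈ Finset.range (N + 1), |(N:ℝ) - 2 * i| * (N.choose i : ℝ) * (1 / 2) ^ N ≤ √N := by
  have hs : 0 < √(N:ℝ) := by positivity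
  have h1 : ∀ t : ℝ, |t| ≤ (t ^ 2 / √N + √N) / 2 := by
    intro t
    have : 2 * |t| * √N ≤ t ^ 2 + √N ^ 2 := by rw [← sq_abs t]; nlinarith [sq_nonneg (|t| - √N)]
    have h3 : t ^ 2 / √N + √N = (t ^ 2 + √N ^ 2) / √N := by field_simp
    rw [h3, div_div, le_div_iff₀ (by positivity)]
    linarith
  have hsum : ∑ i ∈ Finset.range (N + 1), (N.choose i : ℝ) * (1 / 2) ^ N = 1 := by
    rw [← Finset.sum_mul]
    have := Nat.sum_range_choose N
    have h2 : ∑ i ∈ Finset.range (N + 1), (N.choose i : ℝ) = 2 ^ N := by exact_mod_cast this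
    rw [h2, ← mul_pow]; norm_num
  calc _ ≤ ∑ i ∈ Finset.range (N + 1), ((((N:ℝ) - 2 * i) ^ 2 / √N + √N) / 2) * (N.choose i : ℝ) * (1 / 2) ^ N := by
        gcongr with i hi; exact h1 _
    _ = ∑ i ∈ Finset.range (N + 1), ((1 / (2 * √N)) * (((N:ℝ) - 2 * i) ^ 2 * (N.choose i : ℝ) * (1 / 2) ^ N)
          + (√N / 2) * ((N.choose i : ℝ) * (1 / 2) ^ N)) := by
        apply Finset.sum_congr rfl; intro i hi; field_simp
    _ = √N := by
        rw [Finset.sum_add_distrib, ← Finset.mul_sum, ← Finset.mul_sum, binom_var, hsum]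
        have : √(N:ℝ) ^ 2 = N := Real.sq_sqrt (by positivity)
        field_simp
        linarith

lemma Bn_diff (h : ℝ) (j : ℕ) (F : ℝ → ℝ) (hF : ∀ x, |F x| ≤ 1) (x : ℝ) :
    |Bn h j F x - Bn h j F (x + h)| ≤ 2 / √((j : ℝ) + 1) := by
  have h1 : ∑ i ∈ Finset.range (j + 1), (j.choose i : ℝ) * F (x + i * h) =
      ∑ i ∈ Finset.range (j + 2), (j.choose i : ℝ) * F (x + i * h) := by
    rw [Finset.sum_range_succ _ (j + 1)]; simp
  have h2 : ∀ i : ℕ, F (x + h + i * h) = F (x + ((i + 1 : ℕ) : ℝ) * h) := by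
    intro i; congr 1; push_cast; ring
  have hj : (0:ℝ) < (j:ℝ) + 1 := by positivity
  have key : Bn h j F x - Bn h j F (x + h) = (2 / ((j:ℝ) + 1)) *
      ∑ i ∈ Finset.range (j + 1 + 1), (((j + 1 : ℕ) : ℝ) - 2 * i) * ((j + 1).choose i : ℝ) * (1 / 2) ^ (j + 1) * F (x + i * h) := by
    unfold Bn
    rw [h1, Finset.sum_range_succ' _ (j + 1), Finset.sum_range_succ' _ (j + 1)]
    simp_rw [h2]
    have h3 : ∀ i : ℕ, (((j + 1 : ℕ) : ℝ) - 2 * ((i + 1 : ℕ) : ℝ)) * ((j + 1).choose (i + 1) : ℝ) =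
        ((j:ℝ) + 1) * ((j.choose (i + 1) : ℝ) - j.choose i) := by
      intro i
      have e1 : ((j:ℝ) + 1) * (j.choose i) = ((j + 1).choose (i + 1) : ℝ) * (i + 1) := by
        exact_mod_cast Nat.add_one_mul_choose_eq j i
      have e2 : (((j + 1).choose (i + 1) : ℕ) : ℝ) = j.choose i + j.choose (i + 1) := by
        rw [Nat.choose_succ_succ]; push_cast; rfl
      push_cast
      have e3 : ((j.choose (i + 1) : ℕ) : ℝ) = ((j + 1).choose (i + 1) : ℝ) - j.choose i := by rw [e2]; ring
      rw [e3]
      linear_combination (2:ℝ) * e1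
    simp_rw [h3]
    rw [mul_add (2 / ((j:ℝ) + 1))]
    rw [mul_add, ← sub_add_eq_add_sub, Finset.mul_sum, Finset.mul_sum, Finset.mul_sum, ← Finset.sum_sub_distrib]
    congr 1
    · apply Finset.sum_congr rfl
      intro i hi
      rw [pow_succ, one_div_pow]
      field_simp
    · simp only [Nat.choose_zero_right]
      push_cast
      rw [pow_succ, one_div_pow]
      field_simp
      ring
  rw [key, abs_mul, abs_of_pos (by positivity)]
  have h5 := binom_abs (j + 1) (by omega)
  have h6 : |∑ i ∈ Finset.range (j + 1 + 1), (((j + 1 : ℕ) : ℝ) - 2 * i) * ((j + 1).choose i : ℝ) * (1 / 2) ^ (j + 1) * F (x + i * h)| ≤ √((j + 1 : ℕ) : ℝ) := by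
    refine (Finset.abs_sum_le_sum_abs _ _).trans (le_trans ?_ h5)
    apply Finset.sum_le_sum
    intro i hi
    rw [abs_mul, abs_mul, abs_mul, abs_of_nonneg (show (0:ℝ) ≤ ((j + 1).choose i : ℝ) by positivity), abs_of_nonneg (show (0:ℝ) ≤ (1 / 2) ^ (j + 1) by positivity)]
    exact mul_le_of_le_one_right (by positivity) (hF _)
  push_cast at h6 ⊢
  have hs : 0 < √((j : ℝ) + 1) := by positivity
  calc _ ≤ 2 / ((j:ℝ) + 1) * √((j : ℝ) + 1) := by gcongr
    _ = _ := by
      have : √((j : ℝ) + 1) ^ 2 = j + 1 := Real.sq_sqrt (by positivity)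
      field_simp
      linarith

lemma half_ineq {x : ℝ} (hx : 1 ≤ x) : (2 / √x + 2 / √(x + 1)) / 2 ≤ 2 / √(x + 1 / 4) := by
  have h1 : (1 / √x + 1 / √(x + 1)) ^ 2 ≤ 2 * (1 / x + 1 / (x + 1)) := by
    have e1 : (1 / √x) ^ 2 = 1 / x := by rw [div_pow, Real.sq_sqrt (by linarith)]; norm_num
    have e2 : (1 / √(x + 1)) ^ 2 = 1 / (x + 1) := by rw [div_pow, Real.sq_sqrt (by linarith)]; norm_num
    nlinarith [sq_nonneg (1 / √x - 1 / √(x + 1))]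
  have h2 : 2 * (1 / x + 1 / (x + 1)) ≤ (2 / √(x + 1 / 4)) ^ 2 := by
    rw [div_pow, Real.sq_sqrt (by linarith)]
    rw [div_add_div _ _ (by linarith) (by linarith), ← mul_div_assoc, div_le_div_iff₀ (by nlinarith) (by linarith)]
    nlinarith
  have h3 : 1 / √x + 1 / √(x + 1) ≤ 2 / √(x + 1 / 4) :=
    le_of_sq_le_sq (h1.trans h2) (by positivity)
  calc _ = 1 / √x + 1 / √(x + 1) := by ring
    _ ≤ _ := h3

lemma Bn_shift (h : ℝ) (j : ℕ) (F : ℝ → ℝ) (x y : ℝ) :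
    Bn h j (fun z => F (z + y)) x = Bn h j F (x + y) := by
  unfold Bn; congr 1; apply Finset.sum_congr rfl; intro i _; congr 2; ring_nf

lemma Bn_meas (h : ℝ) (j : ℕ) {F : ℝ → ℝ} (hF : Measurable F) : Measurable (Bn h j F) := by
  unfold Bn; fun_prop

lemma Bn_iter (μ : Measure ℝ) [IsProbabilityMeasure μ] {h : ℝ} {ρ κ : Measure ℝ} [IsFiniteMeasure ρ]
    [IsFiniteMeasure κ] (hd : μ = ρ + ((1/2 : ℝ≥0∞) • κ + (1/2 : ℝ≥0∞) • κ.map (fun x => x + h)))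
    (hρ : ρ.real Set.univ = 1 / 2) (hκ : κ.real Set.univ = 1 / 2) (m j : ℕ) (F : ℝ → ℝ)
    (hFm : Measurable F) (hF : ∀ x, |F x| ≤ 1) :
    |∫ x, (Bn h j F x - Bn h j F (x + h)) ∂(cpow μ m)| ≤ 2 / √((j : ℝ) + 1 + m / 4) := by
  induction m generalizing j F with
  | zero => simpa [cpow] using Bn_diff h j F hF 0
  | succ m ih =>
    set H : ℝ → ℝ := fun x => Bn h j F x - Bn h j F (x + h) with hH
    have hHm : Measurable H := by
      have := Bn_meas h j hFm; rw [hH]; fun_prop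
    have hHb : ∀ x, |H x| ≤ 2 := by
      intro x
      refine (Bn_diff h j F hF x).trans ?_
      rw [div_le_iff₀ (by positivity)]
      have : 1 ≤ √((j:ℝ) + 1) := by rw [Real.one_le_sqrt]; linarith [show (0:ℝ) ≤ j by positivity]
      linarith
    have hIntg : ∀ ν : Measure ℝ, IsFiniteMeasure ν → Integrable H ν := fun ν _ =>
      Integrable.of_bound hHm.aestronglyMeasurable 2 (ae_of_all _ hHb)
    set K : ℝ → ℝ := fun y => ∫ x, H (y + x) ∂(cpow μ m) with hK
    have hKm : StronglyMeasurable K := by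
      rw [hK]
      apply StronglyMeasurable.integral_prod_right (f := fun y x => H (y + x))
      apply Measurable.stronglyMeasurable
      change Measurable (fun z : ℝ × ℝ => H (z.1 + z.2))
      exact hHm.comp (by fun_prop)
    have hKb : ∀ y, |K y| ≤ 2 / √((j : ℝ) + 1 + m / 4) := by
      intro y
      have := ih j (fun z => F (z + y)) (by fun_prop) (fun x => hF _)
      simp_rw [Bn_shift] at this
      rw [hK]
      convert this using 3
      ext x
      simp only [hH]
      congr 2 <;> ring_nf
    have hKb2 : ∀ y, |(K y + K (y + h)) / 2| ≤ 2 / √((j : ℝ) + 1 + 1 + m / 4) := by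
      intro y
      have := ih (j + 1) (fun z => F (z + y)) (by fun_prop) (fun x => hF _)
      simp_rw [Bn_shift, Bn_succ] at this
      push_cast at this
      refine le_trans (le_of_eq ?_) this
      congr 1
      rw [hK]
      have i1 : Integrable (fun x => H (y + x)) (cpow μ m) :=
        Integrable.of_bound (hHm.comp (by fun_prop)).aestronglyMeasurable 2 (ae_of_all _ fun x => hHb _)
      have i2 : Integrable (fun x => H (y + h + x)) (cpow μ m) :=
        Integrable.of_bound (hHm.comp (by fun_prop)).aestronglyMeasurable 2 (ae_of_all _ fun x => hHb _)
      simp only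
      rw [← integral_add i1 i2, ← integral_div]
      congr 1
      ext x
      simp only [hH]
      rw [show y + h + x = y + x + h by ring, show x + h + y = y + x + h by ring, show x + y = y + x by ring]
      ring
    have hKi : ∀ ν : Measure ℝ, IsFiniteMeasure ν → Integrable K ν := fun ν _ =>
      Integrable.of_bound hKm.aestronglyMeasurable _ (ae_of_all _ hKb)
    have e1 : ∫ x, H x ∂(cpow μ (m + 1)) = ∫ y, K y ∂μ := by
      simp only [cpow]
      rw [Measure.conv_comm, integral_conv (hIntg _ inferInstance)]
    have hKi2 : Integrable (fun y => K (y + h)) κ :=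
      Integrable.of_bound (hKm.measurable.comp (by fun_prop)).aestronglyMeasurable _ (ae_of_all _ fun y => hKb _)
    have e2 : ∫ y, K y ∂μ = ∫ y, K y ∂ρ + ∫ y, (K y + K (y + h)) / 2 ∂κ := by
      have s1 : IsFiniteMeasure ((1/2 : ℝ≥0∞) • κ) := smul_fin κ _ (by simp)
      have s2 : IsFiniteMeasure ((1/2 : ℝ≥0∞) • κ.map (fun x => x + h)) := smul_fin _ _ (by simp)
      rw [hd, integral_add_measure (hKi _ inferInstance) (hKi _ inferInstance),
        integral_add_measure (hKi _ inferInstance) (hKi _ inferInstance), integral_smul_measure, integral_smul_measure,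
        integral_map (by fun_prop) hKm.aestronglyMeasurable, integral_div, integral_add (hKi _ inferInstance) hKi2]
      simp
      ring
    rw [e1, e2]
    have b1 : |∫ y, K y ∂ρ| ≤ 2 / √((j : ℝ) + 1 + m / 4) * (1 / 2) := by
      have := norm_integral_le_of_norm_le_const (μ := ρ) (f := K) (ae_of_all _ hKb)
      rwa [hρ] at this
    have b2 : |∫ y, (K y + K (y + h)) / 2 ∂κ| ≤ 2 / √((j : ℝ) + 1 + 1 + m / 4) * (1 / 2) := by
      have := norm_integral_le_of_norm_le_const (μ := κ) (f := fun y => (K y + K (y + h)) / 2) (ae_of_all _ hKb2)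
      rwa [hκ] at this
    have b3 := half_ineq (x := (j:ℝ) + 1 + m / 4) (by
      have : (0:ℝ) ≤ j := by positivity
      have : (0:ℝ) ≤ m := by positivity
      linarith)
    rw [show (j:ℝ) + 1 + m / 4 + 1 = j + 1 + 1 + m / 4 by ring,
      show (j:ℝ) + 1 + m / 4 + 1 / 4 = j + 1 + ((m + 1 : ℕ) : ℝ) / 4 by push_cast; ring] at b3
    have := abs_add_le (∫ y, K y ∂ρ) (∫ y, (K y + K (y + h)) / 2 ∂κ)
    linarith

/-- Lemma A -/
lemma lemmaA (μ : Measure ℝ) [IsProbabilityMeasure μ] (hac : μ ≪ volume) :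
    ∃ C : ℝ, 0 < C ∧ ∀ (m : ℕ) (s : ℝ) (F : ℝ → ℝ), 1 ≤ m → Measurable F → (∀ x, |F x| ≤ 1) →
      |∫ x, F (x + s) ∂(cpow μ m) - ∫ x, F x ∂(cpow μ m)| ≤ C * (1 + |s|) / √m := by
  obtain ⟨h0, hh0, hdec⟩ := decomp μ hac
  have hIntg : ∀ (m : ℕ) (F : ℝ → ℝ), Measurable F → (∀ x, |F x| ≤ 1) → Integrable F (cpow μ m) :=
    fun m F hF hb => Integrable.of_bound hF.aestronglyMeasurable 1 (ae_of_all _ hb)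
  have base : ∀ h, |h| ≤ h0 → ∀ (m : ℕ) (F : ℝ → ℝ), 1 ≤ m → Measurable F → (∀ x, |F x| ≤ 1) →
      |∫ x, F (x + h) ∂(cpow μ m) - ∫ x, F x ∂(cpow μ m)| ≤ 4 / √m := by
    intro h hh m F hm hFm hF
    obtain ⟨ρ, κ, f1, f2, hd, hρ, hκ⟩ := hdec h hh
    have := Bn_iter μ hd hρ hκ m 0 F hFm hF
    simp only [Bn, pow_zero, zero_add, Finset.range_one, Finset.sum_singleton] at this
    simp only [Nat.choose_zero_right, Nat.cast_one, Nat.cast_zero, zero_mul, add_zero, one_mul, div_one, zero_add] at this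
    rw [integral_sub (hIntg m F hFm hF) (hIntg m (fun x => F (x + h)) (by fun_prop) (fun x => hF _)), abs_sub_comm] at this
    refine this.trans ?_
    have hm' : (0:ℝ) < m := by positivity
    calc 2 / √(1 + (m:ℝ) / 4) ≤ 2 / √((m:ℝ) / 4) := by gcongr; linarith
      _ = 4 / √m := by
        rw [Real.sqrt_div (by positivity), show √(4:ℝ) = 2 by rw [show (4:ℝ) = 2 ^ 2 by norm_num]; exact Real.sqrt_sq (by norm_num)]
        field_simp; norm_num
  have multi : ∀ (k : ℕ) h, |h| ≤ h0 → ∀ (m : ℕ) (F : ℝ → ℝ), 1 ≤ m → Measurable F → (∀ x, |F x| ≤ 1) →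
      |∫ x, F (x + k * h) ∂(cpow μ m) - ∫ x, F x ∂(cpow μ m)| ≤ k * (4 / √m) := by
    intro k h hh m F hm hFm hF
    induction k with
    | zero => simp
    | succ k ih =>
      have := base h hh m (fun x => F (x + k * h)) hm (by fun_prop) (fun x => hF _)
      have e : ∀ x, x + h + k * h = x + ((k + 1 : ℕ) : ℝ) * h := by intro x; push_cast; ring
      simp only [e] at this
      have t := abs_sub_le (∫ x, F (x + ((k + 1 : ℕ) : ℝ) * h) ∂(cpow μ m)) (∫ x, F (x + k * h) ∂(cpow μ m)) (∫ x, F x ∂(cpow μ m))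
      push_cast at *
      linarith
  refine ⟨4 * (2 + 1 / h0), by positivity, fun m s F hm hFm hF => ?_⟩
  set k : ℕ := ⌈|s| / h0⌉₊ + 1 with hk
  have hk0 : (0:ℝ) < k := by rw [hk]; positivity
  have hk1 : |s| / h0 ≤ k := by rw [hk]; push_cast; linarith [Nat.le_ceil (|s| / h0)]
  have hk2 : (k:ℝ) ≤ |s| / h0 + 2 := by rw [hk]; push_cast; linarith [Nat.ceil_lt_add_one (show 0 ≤ |s| / h0 by positivity)]
  have := multi k (s / k) (by
    rw [abs_div, abs_of_pos hk0, div_le_iff₀ hk0]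
    rw [div_le_iff₀ hh0] at hk1; linarith) m F hm hFm hF
  rw [mul_div_cancel₀ _ hk0.ne'] at this
  refine this.trans ?_
  rw [← mul_div_assoc]
  have hm' : (0:ℝ) < √m := by positivity
  refine div_le_div_of_nonneg_right ?_ hm'.le
  have e1 : (2 + 1 / h0) * (1 + |s|) = |s| / h0 + 2 + (2 * |s| + 1 / h0) := by ring
  have e2 : 0 ≤ 2 * |s| + 1 / h0 := by positivity
  linarith

end EEK

open MeasureTheory ProbabilityTheory Filter
open scoped ENNReal Classical
set_option linter.unusedSectionVars false

namespace EEK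

lemma conv_vol (ν : Measure ℝ) [IsFiniteMeasure ν] :
    Measure.conv ν volume = ν Set.univ • (volume : Measure ℝ) := by
  ext s hs
  rw [← lintegral_indicator_one hs, Measure.lintegral_conv (by measurability)]
  simp_rw [lintegral_add_left_eq_self]
  rw [lintegral_indicator_one hs]
  simp [mul_comm]

lemma conv_univ (ρ ν : Measure ℝ) [SFinite ρ] [SFinite ν] :
    Measure.conv ρ ν Set.univ = ρ Set.univ * ν Set.univ := by
  unfold Measure.conv
  rw [Measure.map_apply (by fun_prop) MeasurableSet.univ, Set.preimage_univ, ← Set.univ_prod_univ,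
    Measure.prod_prod]

lemma interval_bound (μ : Measure ℝ) [IsProbabilityMeasure μ] (hac : μ ≪ volume) :
    ∃ C : ℝ, 0 < C ∧ ∀ (m : ℕ) (x l : ℝ), 1 ≤ m → 0 ≤ l →
      cpow μ m (Set.Ioc (x - l) x) ≤ ENNReal.ofReal (C * (1 + l) / √m) := by
  obtain ⟨C, hC, h⟩ := lemmaA μ hac
  refine ⟨C, hC, fun m x l hm hl => ?_⟩
  have h1 := h m l ((Set.Ioi x).indicator 1) hm (by measurability) (by
    intro y; by_cases hy : y ∈ Set.Ioi x <;> simp [hy])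
  have e1 : (fun z => (Set.Ioi x).indicator (1 : ℝ → ℝ) (z + l)) = (Set.Ioi (x - l)).indicator 1 := by
    ext z; simp only [Set.indicator, Set.mem_Ioi, Pi.one_apply, sub_lt_iff_lt_add]
  rw [e1, integral_indicator_one measurableSet_Ioi, integral_indicator_one measurableSet_Ioi, abs_of_nonneg hl] at h1
  have e2 : (cpow μ m).real (Set.Ioi (x - l)) - (cpow μ m).real (Set.Ioi x) = (cpow μ m).real (Set.Ioc (x - l) x) := by
    rw [← measureReal_sdiff (Set.Ioi_subset_Ioi (by linarith)) measurableSet_Ioi]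
    congr 1
    ext z; simp
  rw [e2] at h1
  rw [← ENNReal.ofReal_toReal (measure_ne_top (cpow μ m) (Set.Ioc (x - l) x))]
  exact ENNReal.ofReal_le_ofReal ((le_abs_self _).trans h1)

lemma good_set (μ : Measure ℝ) [IsProbabilityMeasure μ] (hac : μ ≪ volume) :
    ∃ (S : Set ℝ) (N : ℕ), MeasurableSet S ∧ μ S ≠ 0 ∧
      μ.restrict S ≤ (N : ℝ≥0∞) • volume.restrict (Set.Icc (-N : ℝ) N) := by
  set p := μ.rnDeriv volume with hp
  have hpm : Measurable p := Measure.measurable_rnDeriv _ _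
  set S : ℕ → Set ℝ := fun N => {x | p x ≤ N} ∩ Set.Icc (-N : ℝ) N with hS
  have hSm : ∀ N, MeasurableSet (S N) := fun N => (measurableSet_le hpm measurable_const).inter measurableSet_Icc
  have hex : ∃ N, μ (S N) ≠ 0 := by
    by_contra hcon
    push Not at hcon
    have h1 := measure_iUnion_null hcon
    have h2 : ∀ᵐ x ∂μ, p x < ⊤ := hac.ae_le (Measure.rnDeriv_lt_top μ volume)
    have h3 : ∀ᵐ x ∂μ, False := by
      have h1' : ∀ᵐ x ∂μ, x ∉ ⋃ i, S i := measure_eq_zero_iff_ae_notMem.1 h1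
      filter_upwards [h2, h1'] with x hx hx'
      apply hx'
      obtain ⟨N1, hN1⟩ := ENNReal.exists_nat_gt hx.ne
      obtain ⟨N2, hN2⟩ := exists_nat_ge |x|
      simp only [Set.mem_iUnion]
      refine ⟨max N1 N2, ?_, ?_⟩
      · change p x ≤ ((max N1 N2 : ℕ) : ℝ≥0∞)
        exact hN1.le.trans (by exact_mod_cast le_max_left _ _)
      · have : |x| ≤ ((max N1 N2 : ℕ) : ℝ) := hN2.trans (by exact_mod_cast le_max_right _ _)
        exact abs_le.1 this
    rw [eventually_false_iff_eq_bot, ae_eq_bot] at h3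
    exact IsProbabilityMeasure.ne_zero μ h3
  obtain ⟨N, hN⟩ := hex
  refine ⟨S N, N, hSm N, hN, ?_⟩
  rw [Measure.le_iff]
  intro A hA
  rw [Measure.restrict_apply hA, Measure.smul_apply, Measure.restrict_apply hA, smul_eq_mul]
  conv_lhs => rw [← Measure.withDensity_rnDeriv_eq μ volume hac]
  rw [withDensity_apply _ (hA.inter (hSm N))]
  calc ∫⁻ a in A ∩ S N, p a ≤ ∫⁻ a in A ∩ S N, (N : ℝ≥0∞) := by
        apply setLIntegral_mono measurable_const
        intro x hx
        exact hx.2.1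
    _ = (N : ℝ≥0∞) * volume (A ∩ S N) := by simp
    _ ≤ _ := by gcongr; exact Set.inter_subset_right

lemma conv_box (ν : Measure ℝ) [IsFiniteMeasure ν] (R : ℝ) (c : ℝ≥0∞)
    (hc : ∀ x, ν (Set.Icc (x - R) (x + R)) ≤ c) :
    Measure.conv ν (volume.restrict (Set.Icc (-R) R)) ≤ c • volume := by
  rw [Measure.le_iff]
  intro A hA
  rw [← lintegral_indicator_one hA, Measure.lintegral_conv (by measurability)]
  calc ∫⁻ x, (∫⁻ y in Set.Icc (-R) R, A.indicator (1 : ℝ → ℝ≥0∞) (x + y)) ∂ν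
      = ∫⁻ x, (∫⁻ y, (Set.Icc (-R) R).indicator 1 (y - x) * A.indicator (1 : ℝ → ℝ≥0∞) y) ∂ν := by
        congr 1; ext x
        rw [← lintegral_indicator measurableSet_Icc,
          ← lintegral_add_left_eq_self (fun y => (Set.Icc (-R) R).indicator 1 (y - x) * A.indicator (1 : ℝ → ℝ≥0∞) y) x]
        congr 1; ext y
        by_cases hy : y ∈ Set.Icc (-R) R
        · simp [hy]
        · simp [hy]
    _ = ∫⁻ y, (∫⁻ x, (Set.Icc (-R) R).indicator 1 (y - x) * A.indicator (1 : ℝ → ℝ≥0∞) y ∂ν) := by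
        rw [lintegral_lintegral_swap]
        apply Measurable.aemeasurable
        have h1 : Measurable ((Set.Icc (-R) R).indicator (1 : ℝ → ℝ≥0∞)) := by measurability
        have h2 : Measurable (A.indicator (1 : ℝ → ℝ≥0∞)) := by measurability
        change Measurable (fun z : ℝ × ℝ => (Set.Icc (-R) R).indicator 1 (z.2 - z.1) * A.indicator (1 : ℝ → ℝ≥0∞) z.2)
        exact (h1.comp (by fun_prop)).mul (h2.comp (by fun_prop))
    _ ≤ ∫⁻ y, c * A.indicator (1 : ℝ → ℝ≥0∞) y := by
        apply lintegral_mono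
        intro y
        have h1 : Measurable ((Set.Icc (-R) R).indicator (1 : ℝ → ℝ≥0∞)) := by measurability
        have hm : Measurable (fun x => (Set.Icc (-R) R).indicator (1:ℝ→ℝ≥0∞) (y - x)) := h1.comp (by fun_prop)
        beta_reduce
        rw [lintegral_mul_const _ hm]
        gcongr
        refine le_trans (le_of_eq ?_) (hc y)
        rw [← lintegral_indicator_one measurableSet_Icc]
        congr 1; ext x
        simp only [Set.indicator, Set.mem_Icc]
        congr 1
        apply propext
        constructor <;> rintro ⟨h1, h2⟩ <;> constructor <;> linarith
    _ = _ := by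
        rw [lintegral_const_mul _ (by measurability), lintegral_indicator_one hA]; rfl

/-- Lemma B -/
lemma lemmaB (μ : Measure ℝ) [IsProbabilityMeasure μ] (hac : μ ≪ volume) :
    ∃ C θ : ℝ, 0 < C ∧ 0 ≤ θ ∧ θ < 1 ∧ ∀ m : ℕ, 1 ≤ m → ∃ E : Measure ℝ, IsFiniteMeasure E ∧
      cpow μ m ≤ ENNReal.ofReal (C / √m) • volume + E ∧ E Set.univ ≤ ENNReal.ofReal (θ ^ (m / 2)) := by
  obtain ⟨C, hC, hI⟩ := interval_bound μ hac
  obtain ⟨S, N, hSm, hS0, hSN⟩ := good_set μ hac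
  set θ : ℝ := μ.real Sᶜ with hθ
  have hθ0 : 0 ≤ θ := measureReal_nonneg
  have hθS : μ.real S + θ = 1 := probReal_add_probReal_compl hSm
  have hSp : 0 < μ.real S := by
    apply lt_of_le_of_ne measureReal_nonneg
    intro h
    exact hS0 ((measureReal_eq_zero_iff).1 h.symm)
  have hθ1 : θ < 1 := by linarith
  have hθE : μ Sᶜ = ENNReal.ofReal θ := by
    rw [hθ, Measure.real, ENNReal.ofReal_toReal (measure_ne_top _ _)]
  set C1 : ℝ := N * (C * (1 + (2 * N + 1))) with hC1
  have hC1' : 0 ≤ C1 := by positivity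
  have box : ∀ k l : ℕ, 1 ≤ k → k ≤ l →
      Measure.conv (cpow μ l) (μ.restrict S) ≤ ENNReal.ofReal (C1 / √k) • volume := by
    intro k l hk hkl
    have hk' : 0 < √(k:ℝ) := by positivity
    have b1 := conv_box (cpow μ l) N (ENNReal.ofReal (C * (1 + (2 * N + 1)) / √l)) (by
      intro x
      refine le_trans (measure_mono ?_) (hI l (x + N) (2 * N + 1) (by omega) (by positivity))
      intro y hy
      exact ⟨by linarith [hy.1], hy.2⟩)
    calc Measure.conv (cpow μ l) (μ.restrict S)
        ≤ Measure.conv (cpow μ l) ((N : ℝ≥0∞) • volume.restrict (Set.Icc (-N : ℝ) N)) :=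
          conv_mono_right _ hSN
      _ = (N : ℝ≥0∞) • Measure.conv (cpow μ l) (volume.restrict (Set.Icc (-N : ℝ) N)) := by
          rw [Measure.conv_smul_right]
      _ ≤ (N : ℝ≥0∞) • (ENNReal.ofReal (C * (1 + (2 * N + 1)) / √l) • volume) := by
          intro s
          simp only [Measure.smul_apply, smul_eq_mul]
          gcongr
          simpa using b1 s
      _ ≤ _ := by
          rw [smul_smul]
          intro s
          simp only [Measure.smul_apply, smul_eq_mul]
          gcongr
          rw [← ENNReal.ofReal_natCast, ← ENNReal.ofReal_mul (by positivity)]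
          apply ENNReal.ofReal_le_ofReal
          rw [← mul_div_assoc, ← hC1]
          gcongr
  have step : ∀ k : ℕ, 1 ≤ k → ∀ j : ℕ, ∃ E : Measure ℝ, IsFiniteMeasure E ∧
      cpow μ (k + j) ≤ ENNReal.ofReal (C1 / √k / (1 - θ)) • volume + E ∧
      E Set.univ ≤ ENNReal.ofReal (θ ^ j) := by
    intro k hk j
    induction j with
    | zero => exact ⟨cpow μ k, inferInstance, Measure.le_add_left le_rfl, by simp⟩
    | succ j ih =>
      obtain ⟨E, hE, h1, h2⟩ := ih
      refine ⟨Measure.conv E (μ.restrict Sᶜ), inferInstance, ?_, ?_⟩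
      · rw [← add_assoc]
        simp only [cpow]
        have e : Measure.conv (cpow μ (k + j)) μ = Measure.conv (cpow μ (k + j)) (μ.restrict S)
            + Measure.conv (cpow μ (k + j)) (μ.restrict Sᶜ) := by
          rw [← Measure.conv_add, Measure.restrict_add_restrict_compl hSm]
        rw [e]
        have := box k (k + j) hk (by omega)
        have h3 : Measure.conv (cpow μ (k + j)) (μ.restrict Sᶜ) ≤
            ENNReal.ofReal (C1 / √k / (1 - θ) * θ) • volume + Measure.conv E (μ.restrict Sᶜ) := by
          refine (conv_mono_left _ h1).trans ?_
          rw [Measure.add_conv, Measure.conv_smul_left, Measure.conv_comm, conv_vol, smul_smul,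
            Measure.restrict_apply MeasurableSet.univ, Set.univ_inter, hθE,
            ← ENNReal.ofReal_mul (div_nonneg (by positivity) (by linarith))]
        refine (add_le_add this h3).trans ?_
        rw [← add_assoc, ← add_smul, ← ENNReal.ofReal_add (by positivity)
          (mul_nonneg (div_nonneg (by positivity) (by linarith)) hθ0)]
        apply le_of_eq
        congr 3
        have : 1 - θ ≠ 0 := by linarith
        field_simp
        ring
      · rw [conv_univ, Measure.restrict_apply MeasurableSet.univ, Set.univ_inter, hθE, pow_succ,
          ENNReal.ofReal_mul (by positivity)]
        gcongr
  refine ⟨2 * C1 / (1 - θ) + 1, θ, ?_, hθ0, hθ1, fun m hm => ?_⟩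
  · have : 0 ≤ 2 * C1 / (1 - θ) := div_nonneg (by positivity) (by linarith)
    linarith
  · obtain ⟨E, hE, h1, h2⟩ := step (m - m / 2) (by omega) (m / 2)
    rw [show m - m / 2 + m / 2 = m by omega] at h1
    refine ⟨E, hE, h1.trans ?_, h2⟩
    intro s
    simp only [Measure.add_apply, Measure.smul_apply, smul_eq_mul]
    refine add_le_add (mul_le_mul' (ENNReal.ofReal_le_ofReal ?_) le_rfl) le_rfl
    have hm0 : 0 < √(m:ℝ) := by positivity
    have h4 : √(m:ℝ) ≤ 2 * √((m - m / 2 : ℕ) : ℝ) := by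
      rw [show 2 * √((m - m / 2 : ℕ) : ℝ) = √(4 * ((m - m / 2 : ℕ) : ℝ)) by
        rw [Real.sqrt_mul (by norm_num), show (4:ℝ) = 2 ^ 2 by norm_num, Real.sqrt_sq (by norm_num)]]
      apply Real.sqrt_le_sqrt
      have : m ≤ 4 * (m - m / 2) := by omega
      exact_mod_cast this
    have h5 : 0 < √((m - m / 2 : ℕ) : ℝ) := by linarith
    have h6 : C1 / √((m - m / 2 : ℕ) : ℝ) ≤ 2 * C1 / √m := by
      rw [div_le_div_iff₀ h5 hm0]
      nlinarith
    calc C1 / √((m - m / 2 : ℕ) : ℝ) / (1 - θ) ≤ 2 * C1 / √m / (1 - θ) :=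
          div_le_div_of_nonneg_right h6 (by linarith)
      _ = 2 * C1 / (1 - θ) / √m := by ring
      _ ≤ _ := div_le_div_of_nonneg_right (by linarith) hm0.le

end EEK

open MeasureTheory ProbabilityTheory Filter
open scoped ENNReal Classical
set_option linter.unusedSectionVars false

namespace EEK

lemma bdd_int (σ : Measure ℝ) [IsFiniteMeasure σ] {F : ℝ → ℝ} (hF : Measurable F)
    (hb : ∀ x, |F x| ≤ 1) : Integrable F σ :=
  Integrable.of_bound hF.aestronglyMeasurable 1 (ae_of_all _ (by simpa using hb))

lemma bdd_int_le (σ : Measure ℝ) [IsFiniteMeasure σ] {F : ℝ → ℝ} 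
    (hb : ∀ x, |F x| ≤ 1) : |∫ x, F x ∂σ| ≤ σ.real Set.univ := by
  have := norm_integral_le_of_norm_le_const (μ := σ) (f := F) (C := 1) (ae_of_all _ (by simpa using hb))
  simpa using this

lemma tv_sub {ρ P : Measure ℝ} [IsFiniteMeasure ρ] [IsFiniteMeasure P] (h : ρ ≤ P) {F : ℝ → ℝ}
    (hF : Measurable F) (hb : ∀ x, |F x| ≤ 1) :
    |∫ x, F x ∂P - ∫ x, F x ∂ρ| ≤ P.real Set.univ - ρ.real Set.univ := by
  have e := Measure.sub_add_cancel_of_le h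
  have hfin : IsFiniteMeasure (P - ρ) := inferInstance
  have e1 : ∫ x, F x ∂P = ∫ x, F x ∂(P - ρ) + ∫ x, F x ∂ρ := by
    rw [← integral_add_measure (bdd_int _ hF hb) (bdd_int _ hF hb), e]
  have e2 : P.real Set.univ = (P - ρ).real Set.univ + ρ.real Set.univ := by
    rw [← measureReal_add_apply, e]
  rw [e1, e2]
  simpa using bdd_int_le (P - ρ) hb

lemma stepf_approx {g : ℝ → ℝ} {L δ : ℝ} (hδ : 0 < δ) (hg : ∀ x y, |g x - g y| ≤ L * |x - y|) (hL : 0 ≤ L)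
    (x : ℝ) (hx : 0 ≤ x) (K : ℕ) :
    (K * δ < x → g 0 + ∑ k ∈ Finset.range K, (g ((k + 1 : ℕ) * δ) - g (k * δ)) *
      (Set.Ioi ((k + 1 : ℕ) * δ)).indicator 1 x = g (K * δ)) ∧
    (x ≤ K * δ → |g x - (g 0 + ∑ k ∈ Finset.range K, (g ((k + 1 : ℕ) * δ) - g (k * δ)) *
      (Set.Ioi ((k + 1 : ℕ) * δ)).indicator 1 x)| ≤ L * δ) := by
  induction K with
  | zero =>
    constructor
    · intro _; simp
    · intro h
      have : x = 0 := le_antisymm (by simpa using h) hx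
      subst this
      simp; positivity
  | succ K ih =>
    constructor
    · intro h
      have h1 : K * δ < x := by push_cast at h; nlinarith
      rw [Finset.sum_range_succ, ← add_assoc, ih.1 h1]
      rw [Set.indicator_of_mem (by exact h)]
      simp
    · intro h
      rw [Finset.sum_range_succ, ← add_assoc, Set.indicator_of_notMem (by simpa using h), mul_zero, add_zero]
      rcases le_or_gt x (K * δ) with h1 | h1
      · exact ih.2 h1
      · rw [ih.1 h1]
        refine (hg _ _).trans ?_
        gcongr
        rw [abs_of_pos (by linarith)]
        push_cast at h
        linarith

lemma stepf_int (σ φ : Measure ℝ) [IsProbabilityMeasure σ] [IsProbabilityMeasure φ] (hσ : σ (Set.Iio 0) = 0)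
    (hφ : φ (Set.Iio 0) = 0)
    {g : ℝ → ℝ} {L δ : ℝ} (hδ : 0 < δ) (hg : ∀ x y, |g x - g y| ≤ L * |x - y|) (hL : 0 ≤ L)
    (hgm : Measurable g) (hb : ∀ x, |g x| ≤ 1) (K : ℕ) :
    |∫ x, g x ∂σ - ∫ x, g x ∂φ| ≤ 2 * (L * δ) + 2 * σ.real (Set.Ioi (K * δ)) + 2 * φ.real (Set.Ioi (K * δ))
      + ∑ k ∈ Finset.range K, 2 * |σ.real (Set.Ioi ((k + 1 : ℕ) * δ)) - φ.real (Set.Ioi ((k + 1 : ℕ) * δ))| := by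
  set G : ℝ → ℝ := fun x => g 0 + ∑ k ∈ Finset.range K, (g ((k + 1 : ℕ) * δ) - g (k * δ)) *
      (Set.Ioi ((k + 1 : ℕ) * δ)).indicator 1 x with hG
  have hti : ∀ (τ : Measure ℝ) [IsFiniteMeasure τ], ∀ k ∈ Finset.range K, Integrable (fun x => (g ((k + 1 : ℕ) * δ) - g (k * δ)) *
      (Set.Ioi ((k + 1 : ℕ) * δ)).indicator (1 : ℝ → ℝ) x) τ := by
    intro τ _ k _
    apply Integrable.const_mul
    exact (integrable_const (1:ℝ)).indicator measurableSet_Ioi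
  have hGi : ∀ (τ : Measure ℝ) [IsFiniteMeasure τ], Integrable G τ := by
    intro τ _
    apply (integrable_const _).add
    apply integrable_finsetSum
    exact hti τ
  have key : ∀ (τ : Measure ℝ) [IsProbabilityMeasure τ], τ (Set.Iio 0) = 0 →
      |∫ x, g x ∂τ - ∫ x, G x ∂τ| ≤ L * δ + 2 * τ.real (Set.Ioi (K * δ)) := by
    intro τ _ hτ
    rw [← integral_sub (bdd_int τ hgm hb) (hGi τ)]
    have : ∀ᵐ x ∂τ, ‖g x - G x‖ ≤ L * δ + 2 * (Set.Ioi (K * δ)).indicator 1 x := by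
      have h0 : ∀ᵐ x ∂τ, x ∉ Set.Iio 0 := measure_eq_zero_iff_ae_notMem.1 hτ
      filter_upwards [h0] with x hx
      have hx' : 0 ≤ x := by simpa using hx
      have hs := stepf_approx hδ hg hL x hx' K
      rcases le_or_gt x (K * δ) with h1 | h1
      · rw [Set.indicator_of_notMem (by simpa using h1)]
        rw [mul_zero, add_zero]
        exact hs.2 h1
      · rw [Set.indicator_of_mem (by exact h1)]
        rw [hG]; beta_reduce
        rw [hs.1 h1, Real.norm_eq_abs]
        have h2 := abs_sub (g x) (g (K * δ))
        have h3 := hb x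
        have h4 := hb (K * δ)
        have : 0 ≤ L * δ := by positivity
        simp only [Pi.one_apply]
        linarith
    have hind : Integrable (fun x => 2 * (Set.Ioi (K * δ)).indicator (1 : ℝ → ℝ) x) τ :=
      ((integrable_const (1:ℝ)).indicator measurableSet_Ioi).const_mul 2
    have hi : Integrable (fun x => L * δ + 2 * (Set.Ioi (K * δ)).indicator (1 : ℝ → ℝ) x) τ :=
      (integrable_const _).add (((integrable_const (1:ℝ)).indicator measurableSet_Ioi).const_mul 2)
    refine (norm_integral_le_of_norm_le hi this).trans (le_of_eq ?_)
    rw [integral_add (integrable_const _) hind,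
      integral_const_mul (2:ℝ), integral_indicator_one measurableSet_Ioi]
    simp
  have hGint : ∀ (τ : Measure ℝ) [IsProbabilityMeasure τ], ∫ x, G x ∂τ = g 0 + ∑ k ∈ Finset.range K,
      (g ((k + 1 : ℕ) * δ) - g (k * δ)) * τ.real (Set.Ioi ((k + 1 : ℕ) * δ)) := by
    intro τ _
    rw [hG, integral_add (integrable_const _) (integrable_finsetSum _ (hti τ)), integral_finsetSum _ (hti τ)]
    congr 1
    · simp
    · apply Finset.sum_congr rfl
      intro k _
      rw [integral_const_mul, integral_indicator_one measurableSet_Ioi]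
  have hd : |∫ x, G x ∂σ - ∫ x, G x ∂φ| ≤ ∑ k ∈ Finset.range K, 2 * |σ.real (Set.Ioi ((k + 1 : ℕ) * δ)) - φ.real (Set.Ioi ((k + 1 : ℕ) * δ))| := by
    rw [hGint σ, hGint φ, add_sub_add_left_eq_sub, ← Finset.sum_sub_distrib]
    refine (Finset.abs_sum_le_sum_abs _ _).trans ?_
    apply Finset.sum_le_sum
    intro k _
    rw [← mul_sub, abs_mul]
    gcongr
    have h2 := abs_sub (g ((k + 1 : ℕ) * δ)) (g (k * δ))
    have h3 := hb ((k + 1 : ℕ) * δ)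
    have h4 := hb (k * δ)
    linarith
  have a1 := abs_le.1 (key σ hσ)
  have a2 := abs_le.1 (key φ hφ)
  have a3 := abs_le.1 hd
  rw [abs_le]
  constructor <;> linarith [a1.1, a1.2, a2.1, a2.2, a3.1, a3.2]

lemma BL (σ : ℕ → Measure ℝ) (φ : Measure ℝ) [∀ n, IsProbabilityMeasure (σ n)] [IsProbabilityMeasure φ]
    (hσ : ∀ n, σ n (Set.Iio 0) = 0) (hφ : φ (Set.Iio 0) = 0)
    (hlim : ∀ x, 0 ≤ x → Tendsto (fun n => (σ n).real (Set.Ioi x)) atTop (nhds (φ.real (Set.Ioi x))))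
    {L ε : ℝ} (hL : 0 ≤ L) (hε : 0 < ε) :
    ∀ᶠ n in atTop, ∀ g : ℝ → ℝ, Measurable g → (∀ x, |g x| ≤ 1) → (∀ x y, |g x - g y| ≤ L * |x - y|) →
      |∫ x, g x ∂(σ n) - ∫ x, g x ∂φ| ≤ ε := by
  set δ := ε / (8 * (L + 1)) with hδ
  have hδ0 : 0 < δ := by positivity
  have hLδ : L * δ ≤ ε / 8 := by
    rw [hδ, ← mul_div_assoc, div_le_div_iff₀ (by positivity) (by norm_num)]
    nlinarith
  have htail : Tendsto (fun K : ℕ => φ.real (Set.Ioi (K * δ))) atTop (nhds 0) := by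
    have h1 : Tendsto (fun x : ℝ => φ (Set.Ioi x)) atTop (nhds 0) := by
      have := tendsto_measure_iInter_atTop (μ := φ) (s := fun x : ℝ => Set.Ioi x)
        (fun i => measurableSet_Ioi.nullMeasurableSet) (fun x y h => Set.Ioi_subset_Ioi h) ⟨0, measure_ne_top _ _⟩
      have e : ⋂ x : ℝ, Set.Ioi x = ∅ := by
        ext y; simp only [Set.mem_iInter, Set.mem_Ioi, Set.mem_empty_iff_false, iff_false, not_forall]
        exact ⟨y, lt_irrefl _⟩
      rwa [e, measure_empty] at this
    have h2 := (ENNReal.tendsto_toReal ENNReal.zero_ne_top).comp h1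
    exact h2.comp (Tendsto.atTop_mul_const hδ0 tendsto_natCast_atTop_atTop)
  obtain ⟨K, hK⟩ := (htail.eventually (gt_mem_nhds (show 0 < ε / 16 by positivity))).exists
  have e1 := (hlim (K * δ) (by positivity)).eventually (gt_mem_nhds hK)
  have hs : Tendsto (fun n => ∑ k ∈ Finset.range K, 2 * |(σ n).real (Set.Ioi ((k + 1 : ℕ) * δ)) - φ.real (Set.Ioi ((k + 1 : ℕ) * δ))|)
      atTop (nhds (∑ k ∈ Finset.range K, 2 * |φ.real (Set.Ioi ((k + 1 : ℕ) * δ)) - φ.real (Set.Ioi ((k + 1 : ℕ) * δ))|)) := by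
    apply tendsto_finsetSum
    intro k _
    exact ((((hlim _ (by positivity)).sub_const _).abs).const_mul 2)
  simp only [sub_self, abs_zero, mul_zero, Finset.sum_const_zero] at hs
  have e2 := hs.eventually (gt_mem_nhds (show 0 < ε / 4 by positivity))
  filter_upwards [e1, e2] with n h1 h2 g hgm hb hg
  have := stepf_int (σ n) φ (hσ n) hφ hδ0 hg hL hgm hb K
  linarith

/-- TV convergence from BL convergence and equicontinuity of shifts -/
lemma avg_close (σ : Measure ℝ) [IsProbabilityMeasure σ] {F : ℝ → ℝ} (hF : Measurable F) (hb : ∀ x, |F x| ≤ 1)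
    {a ε : ℝ} (ha : 0 < a) (hsh : ∀ s ∈ Set.Icc 0 a, |∫ x, F (x + s) ∂σ - ∫ x, F x ∂σ| ≤ ε) :
    |∫ x, (a⁻¹ * ∫ s in Set.Ioc 0 a, F (x + s)) ∂σ - ∫ x, F x ∂σ| ≤ ε := by
  have hsw : ∫ x, (∫ s in Set.Ioc 0 a, F (x + s)) ∂σ = ∫ s in Set.Ioc 0 a, (∫ x, F (x + s) ∂σ) := by
    apply integral_integral_swap
    refine Integrable.of_bound (C := 1) ?_ (ae_of_all _ ?_)
    · exact (hF.comp (by fun_prop : Measurable fun z : ℝ × ℝ => z.1 + z.2)).aestronglyMeasurable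
    · intro z; simpa [Function.uncurry] using hb _
  rw [integral_const_mul, hsw]
  have hc : ∫ x, F x ∂σ = a⁻¹ * ∫ s in Set.Ioc 0 a, (∫ x, F x ∂σ) := by
    rw [setIntegral_const]
    simp [ha.le]
    field_simp
  have hmeas : Measurable (fun s => ∫ x, F (x + s) ∂σ) := by
    have : StronglyMeasurable (Function.uncurry fun s x => F (x + s)) :=
      (hF.comp (by fun_prop : Measurable fun z : ℝ × ℝ => z.2 + z.1)).stronglyMeasurable
    exact this.integral_prod_right.measurable
  have hi : IntegrableOn (fun s => ∫ x, F (x + s) ∂σ) (Set.Ioc 0 a) := by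
    refine Integrable.of_bound hmeas.aestronglyMeasurable 1 (ae_of_all _ ?_)
    intro s
    simpa using bdd_int_le σ (fun x => hb (x + s))
  have hi2 : IntegrableOn (fun s : ℝ => ∫ x, F x ∂σ) (Set.Ioc 0 a) := by
    apply integrableOn_const (by simp)
  conv_lhs => rw [hc]
  rw [← mul_sub, ← integral_sub hi hi2, abs_mul, abs_of_pos (inv_pos.2 ha)]
  have := norm_setIntegral_le_of_norm_le_const (μ := volume) (s := Set.Ioc 0 a) (C := ε)
    (f := fun s => ∫ x, F (x + s) ∂σ - ∫ x, F x ∂σ) (by simp) (fun s hs => hsh s ⟨hs.1.le, hs.2⟩)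
  simp only [Real.norm_eq_abs, Real.volume_real_Ioc, sub_zero] at this
  rw [max_eq_left ha.le] at this
  calc a⁻¹ * _ ≤ a⁻¹ * (ε * a) := by gcongr
    _ = ε := by field_simp

lemma avg_lip {F : ℝ → ℝ} (hF : Measurable F) (hb : ∀ x, |F x| ≤ 1) {a : ℝ} (ha : 0 < a) (x y : ℝ) :
    |a⁻¹ * (∫ s in Set.Ioc 0 a, F (x + s)) - a⁻¹ * ∫ s in Set.Ioc 0 a, F (y + s)| ≤ (2 / a) * |x - y| := by
  have hii : ∀ u v : ℝ, IntervalIntegrable F volume u v := fun u v =>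
    (intervalIntegrable_const (c := (1:ℝ))).mono_fun hF.aestronglyMeasurable (ae_of_all _ (by simpa using hb))
  have e : ∀ z, ∫ s in Set.Ioc 0 a, F (z + s) = ∫ s in z..(z + a), F s := by
    intro z
    rw [← intervalIntegral.integral_of_le ha.le, intervalIntegral.integral_comp_add_left]
    simp
  rw [e x, e y, ← mul_sub, abs_mul, abs_of_pos (inv_pos.2 ha)]
  have e2 : (∫ s in x..(x + a), F s) - ∫ s in y..(y + a), F s = (∫ s in x..y, F s) - ∫ s in (x + a)..(y + a), F s := by
    have h1 := intervalIntegral.integral_add_adjacent_intervals (hii x y) (hii y (y + a))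
    have h2 := intervalIntegral.integral_add_adjacent_intervals (hii x (x + a)) (hii (x + a) (y + a))
    linarith
  rw [e2]
  have b1 := intervalIntegral.norm_integral_le_of_norm_le_const (C := 1) (f := F) (a := x) (b := y) (fun z _ => by simpa using hb z)
  have b2 := intervalIntegral.norm_integral_le_of_norm_le_const (C := 1) (f := F) (a := x + a) (b := y + a) (fun z _ => by simpa using hb z)
  simp only [Real.norm_eq_abs, one_mul, add_sub_add_right_eq_sub] at b1 b2
  have b3 := abs_sub (∫ s in x..y, F s) (∫ s in (x + a)..(y + a), F s)
  calc a⁻¹ * _ ≤ a⁻¹ * (2 * |x - y|) := by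
        gcongr
        rw [abs_sub_comm x y]
        linarith
    _ = _ := by ring

lemma avg_bdd {F : ℝ → ℝ} (hb : ∀ x, |F x| ≤ 1) {a : ℝ} (ha : 0 < a) (x : ℝ) :
    |a⁻¹ * (∫ s in Set.Ioc 0 a, F (x + s))| ≤ 1 := by
  have := norm_setIntegral_le_of_norm_le_const (μ := volume) (s := Set.Ioc 0 a) (C := 1)
    (f := fun s => F (x + s)) (by simp) (fun s hs => by simpa using hb _)
  simp only [Real.norm_eq_abs, Real.volume_real_Ioc, sub_zero, one_mul] at this
  rw [max_eq_left ha.le] at this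
  rw [abs_mul, abs_of_pos (inv_pos.2 ha)]
  calc a⁻¹ * _ ≤ a⁻¹ * a := by gcongr
    _ = 1 := by field_simp

lemma TV_abs (σ : ℕ → Measure ℝ) (φ : Measure ℝ) [∀ n, IsProbabilityMeasure (σ n)] [IsProbabilityMeasure φ]
    (hσ : ∀ n, σ n (Set.Iio 0) = 0) (hφ : φ (Set.Iio 0) = 0)
    (hlim : ∀ x, 0 ≤ x → Tendsto (fun n => (σ n).real (Set.Ioi x)) atTop (nhds (φ.real (Set.Ioi x))))
    (hs1 : ∀ ε > 0, ∃ a > 0, ∀ᶠ n in atTop, ∀ F : ℝ → ℝ, Measurable F → (∀ x, |F x| ≤ 1) → ∀ s ∈ Set.Icc 0 a,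
      |∫ x, F (x + s) ∂(σ n) - ∫ x, F x ∂(σ n)| ≤ ε)
    (hs2 : ∀ ε > 0, ∃ a > 0, ∀ F : ℝ → ℝ, Measurable F → (∀ x, |F x| ≤ 1) → ∀ s ∈ Set.Icc 0 a,
      |∫ x, F (x + s) ∂φ - ∫ x, F x ∂φ| ≤ ε) {ε : ℝ} (hε : 0 < ε) :
    ∀ᶠ n in atTop, ∀ F : ℝ → ℝ, Measurable F → (∀ x, |F x| ≤ 1) → |∫ x, F x ∂(σ n) - ∫ x, F x ∂φ| ≤ ε := by
  obtain ⟨a1, ha1, h1⟩ := hs1 (ε / 3) (by positivity)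
  obtain ⟨a2, ha2, h2⟩ := hs2 (ε / 3) (by positivity)
  set a := min a1 a2
  have ha : 0 < a := lt_min ha1 ha2
  have h3 := BL σ φ hσ hφ hlim (L := 2 / a) (ε := ε / 3) (by positivity) (by positivity)
  filter_upwards [h1, h3] with n h1 h3 F hF hb
  have c1 := avg_close (σ n) hF hb ha (fun s hs => h1 F hF hb s ⟨hs.1, hs.2.trans (min_le_left _ _)⟩)
  have c2 := avg_close φ hF hb ha (fun s hs => h2 F hF hb s ⟨hs.1, hs.2.trans (min_le_right _ _)⟩)
  have hm : Measurable (fun x => a⁻¹ * ∫ s in Set.Ioc 0 a, F (x + s)) := by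
    apply Measurable.const_mul
    have : StronglyMeasurable (Function.uncurry fun x s => F (x + s)) :=
      (hF.comp (by fun_prop : Measurable fun z : ℝ × ℝ => z.1 + z.2)).stronglyMeasurable
    exact this.integral_prod_right.measurable
  have c3 := h3 _ hm (avg_bdd hb ha) (avg_lip hF hb ha)
  rw [abs_le] at c1 c2 c3 ⊢
  constructor <;> linarith [c1.1, c1.2, c2.1, c2.2, c3.1, c3.2]

end EEK

open MeasureTheory ProbabilityTheory Filter
open scoped ENNReal Classical
set_option linter.unusedSectionVars false

namespace EEK

instance hn_prob : IsProbabilityMeasure halfNormal := by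
  unfold halfNormal
  exact Measure.isProbabilityMeasure_map (by fun_prop)

lemma hn_eq : halfNormal = (2 : ℝ≥0∞) • (gaussianReal 0 1).restrict (Set.Ioi 0) := by
  have := nullSingletonClass_gaussianReal (μ := 0) (v := 1) (by norm_num)
  have hneg : (gaussianReal 0 1).map (fun x => -x) = gaussianReal 0 1 := by
    simpa using gaussianReal_map_neg (μ := 0) (v := 1)
  ext s hs
  unfold halfNormal
  rw [Measure.map_apply (by fun_prop) hs, Measure.smul_apply, Measure.restrict_apply hs, smul_eq_mul]
  have hT : MeasurableSet ((fun y : ℝ => |y|) ⁻¹' s) := by measurability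
  rw [← measure_inter_add_sdiff _ (measurableSet_Ioi (a := (0:ℝ))), two_mul]
  congr 1
  · congr 1
    ext x
    simp only [Set.mem_inter_iff, Set.mem_preimage, Set.mem_Ioi]
    constructor <;> rintro ⟨h1, h2⟩ <;> refine ⟨?_, h2⟩ <;> simpa [abs_of_pos h2] using h1
  · conv_rhs => rw [← hneg]
    rw [Measure.map_apply (by fun_prop) (hs.inter measurableSet_Ioi)]
    apply measure_congr
    have h0 : ∀ᵐ x ∂(gaussianReal 0 1), x ∉ ({0} : Set ℝ) := measure_eq_zero_iff_ae_notMem.1 (measure_singleton 0)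
    filter_upwards [h0] with x hx
    apply propext
    have hx0 : x ≠ 0 := by simpa using hx
    change (|x| ∈ s ∧ ¬ (0 < x)) ↔ (-x ∈ s ∧ 0 < -x)
    constructor
    · rintro ⟨h1, h2⟩
      have h3 : x < 0 := lt_of_le_of_ne (not_lt.1 h2) hx0
      rw [abs_of_neg h3] at h1
      exact ⟨h1, by linarith⟩
    · rintro ⟨h1, h2⟩
      have h3 : x < 0 := by linarith
      rw [abs_of_neg h3]
      exact ⟨h1, by linarith⟩

/-- the half-normal density -/
noncomputable def psi (x : ℝ) : ℝ := (Set.Ioi 0).indicator (fun x => 2 * gaussianPDFReal 0 1 x) x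

lemma psi_meas : Measurable psi := by
  unfold psi
  exact ((measurable_gaussianPDFReal 0 1).const_mul 2).indicator measurableSet_Ioi

lemma psi_nonneg (x : ℝ) : 0 ≤ psi x := by
  unfold psi
  apply Set.indicator_nonneg
  intro x _
  have := gaussianPDFReal_nonneg 0 1 x
  positivity

lemma psi_int : Integrable psi := by
  have := ((integrable_gaussianPDFReal 0 1).const_mul 2).indicator (measurableSet_Ioi (a := (0:ℝ)))
  exact this

lemma hn_density : halfNormal = volume.withDensity (fun x => ENNReal.ofReal (psi x)) := by
  rw [hn_eq, gaussianReal_of_var_ne_zero 0 (by norm_num), restrict_withDensity measurableSet_Ioi,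
    ← withDensity_smul 2 (by fun_prop), ← withDensity_indicator measurableSet_Ioi]
  congr 1
  ext x
  unfold psi
  by_cases hx : x ∈ Set.Ioi (0:ℝ)
  · simp only [Set.indicator_of_mem hx, Pi.smul_apply, smul_eq_mul, gaussianPDF]
    rw [ENNReal.ofReal_mul (by norm_num)]; simp
  · simp [Set.indicator_of_notMem hx]

lemma hn_Iio : halfNormal (Set.Iio 0) = 0 := by
  rw [hn_eq, Measure.smul_apply, Measure.restrict_apply measurableSet_Iio]
  have : Set.Iio (0:ℝ) ∩ Set.Ioi 0 = ∅ := by ext x; simp; intro h; exact h.le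
  simp [this]

lemma hn_Ioi {x : ℝ} (hx : 0 ≤ x) : halfNormal.real (Set.Ioi x) = 2 * G x := by
  have : Set.Ioi x ∩ Set.Ioi 0 = Set.Ioi x := by
    rw [Set.Ioi_inter_Ioi, sup_eq_left.2 hx]
  unfold G Measure.real
  rw [hn_eq, Measure.smul_apply, Measure.restrict_apply measurableSet_Ioi, this]
  simp

lemma hn_integral (F : ℝ → ℝ) : ∫ x, F x ∂halfNormal = ∫ x, psi x * F x := by
  rw [hn_density, integral_withDensity_eq_integral_toReal_smul (by have := psi_meas; fun_prop) (by simp)]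
  congr 1; ext x
  rw [ENNReal.toReal_ofReal (psi_nonneg x), smul_eq_mul]

lemma hn_shift : ∀ ε > 0, ∃ a > 0, ∀ F : ℝ → ℝ, Measurable F → (∀ x, |F x| ≤ 1) → ∀ s ∈ Set.Icc 0 a,
      |∫ x, F (x + s) ∂halfNormal - ∫ x, F x ∂halfNormal| ≤ ε := by
  intro ε hε
  have h1 := (L1_trans psi_int).eventually (gt_mem_nhds hε)
  obtain ⟨a, ha, h2⟩ := Metric.eventually_nhds_iff.1 h1
  refine ⟨a / 2, by positivity, fun F hF hb s hs => ?_⟩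
  have h3 := @h2 (-s) (by simp [abs_of_nonneg hs.1]; linarith [hs.2])
  rw [hn_integral, hn_integral]
  have e : ∫ x, psi x * F (x + s) = ∫ x, psi (x + -s) * F x := by
    rw [← integral_add_right_eq_self (fun x => psi (x + -s) * F x) s]
    congr 1; ext x; simp
  have i1 : Integrable (fun x => psi (x + -s) * F x) := by
    refine (psi_int.comp_add_right (-s)).mul_bdd (c := 1) hF.aestronglyMeasurable (ae_of_all _ (by simpa using hb))
  have i2 : Integrable (fun x => psi x * F x) := by
    refine psi_int.mul_bdd (c := 1) hF.aestronglyMeasurable (ae_of_all _ (by simpa using hb))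
  rw [e, ← integral_sub i1 i2]
  have i3 : Integrable (fun x => |psi (x + -s) - psi x|) := ((psi_int.comp_add_right (-s)).sub psi_int).abs
  rw [← Real.norm_eq_abs]
  refine (norm_integral_le_of_norm_le i3 (ae_of_all _ ?_)).trans h3.le
  intro x
  simp only [Real.norm_eq_abs, Pi.sub_apply]
  rw [← sub_mul, abs_mul]
  calc _ ≤ |psi (x + -s) - psi x| * 1 := by gcongr; exact hb x
    _ = _ := mul_one _

section
variable (μ : Measure ℝ) [IsProbabilityMeasure μ]

lemma shift_bound (hac : μ ≪ volume) : ∃ C : ℝ, 0 < C ∧ ∀ (n m : ℕ), 1 ≤ m → m ≤ n → ∀ F : ℝ → ℝ, Measurable F →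
    (∀ x, |F x| ≤ 1) → ∀ s : ℝ,
    |∫ x, F (x + s) ∂(lam μ n) - ∫ x, F x ∂(lam μ n)| ≤ 4 * (beta μ n m).toReal + C * (1 + |s|) / √m := by
  obtain ⟨C, hC, hA⟩ := lemmaA μ hac
  refine ⟨C, hC, fun n m hm hmn F hF hb s => ?_⟩
  set ρ := (kill μ)^[m] (lamp μ (n - m)) with hρ
  set Q := Measure.conv (lam μ (n - m)) (cpow μ m) with hQ
  have h1 : ρ ≤ lam μ n := by
    refine le_trans ?_ (show lamp μ n ≤ lam μ n from Measure.restrict_le_self)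
    rw [lamp_split μ hmn]
    exact Measure.le_add_left le_rfl
  have h2 : ρ ≤ Q := (kill_iter_le μ m _).trans (conv_mono_left _ Measure.restrict_le_self)
  have hb1 : 1 - ρ.real Set.univ = (beta μ n m).toReal := by
    have := beta_add μ hmn
    have hfin : beta μ n m ≠ ⊤ := ne_top_of_le_ne_top ENNReal.one_ne_top (this ▸ le_self_add)
    have h := congrArg ENNReal.toReal this
    rw [ENNReal.toReal_add hfin (measure_ne_top _ _)] at h
    simp only [ENNReal.toReal_one] at h
    unfold Measure.real
    linarith
  have key : ∀ H : ℝ → ℝ, Measurable H → (∀ x, |H x| ≤ 1) →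
      |∫ x, H x ∂(lam μ n) - ∫ x, H x ∂Q| ≤ 2 * (beta μ n m).toReal := by
    intro H hH hHb
    have a1 := tv_sub h1 hH hHb
    have a2 := tv_sub h2 hH hHb
    rw [probReal_univ, hb1] at a1 a2
    rw [abs_le] at a1 a2 ⊢
    constructor <;> linarith [a1.1, a1.2, a2.1, a2.2]
  have k1 := key F hF hb
  have hFs : Measurable (fun x => F (x + s)) := hF.comp (by fun_prop)
  have k2 := key (fun x => F (x + s)) hFs (fun x => hb _)
  have k3 : |∫ x, F (x + s) ∂Q - ∫ x, F x ∂Q| ≤ C * (1 + |s|) / √m := by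
    rw [hQ, integral_conv (bdd_int _ hFs (fun x => hb _)), integral_conv (bdd_int _ hF hb)]
    have meas : ∀ t, Measurable (fun x => ∫ y, F (x + y + t) ∂(cpow μ m)) := by
      intro t
      have : StronglyMeasurable (Function.uncurry fun x y => F (x + y + t)) :=
        (hF.comp (by fun_prop : Measurable fun z : ℝ × ℝ => z.1 + z.2 + t)).stronglyMeasurable
      exact this.integral_prod_right.measurable
    have i1 : Integrable (fun x => ∫ y, F (x + y + s) ∂(cpow μ m)) (lam μ (n - m)) := by
      apply bdd_int _ (meas s)
      intro x
      simpa using bdd_int_le (cpow μ m) (fun y => hb (x + y + s))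
    have i2 : Integrable (fun x => ∫ y, F (x + y) ∂(cpow μ m)) (lam μ (n - m)) := by
      apply bdd_int _ (by simpa using meas 0)
      intro x
      simpa using bdd_int_le (cpow μ m) (fun y => hb (x + y))
    rw [← integral_sub i1 i2]
    have := norm_integral_le_of_norm_le_const (μ := lam μ (n - m)) (C := C * (1 + |s|) / √m)
      (f := fun x => ∫ y, F (x + y + s) ∂(cpow μ m) - ∫ y, F (x + y) ∂(cpow μ m)) (ae_of_all _ (by
        intro x
        have := hA m s (fun y => F (x + y)) hm (hF.comp (by fun_prop)) (fun y => hb _)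
        simpa [add_assoc] using this))
    simpa using this
  rw [abs_le] at k1 k2 k3 ⊢
  constructor <;> linarith [k1.1, k1.2, k2.1, k2.2, k3.1, k3.2]

noncomputable def sig (n : ℕ) : Measure ℝ := (lam μ n).map (fun x => x / √n)

instance (n : ℕ) : IsProbabilityMeasure (sig μ n) :=
  Measure.isProbabilityMeasure_map (by fun_prop)

lemma sig_Iio (n : ℕ) : sig μ n (Set.Iio 0) = 0 := by
  unfold sig
  rw [Measure.map_apply (by fun_prop) measurableSet_Iio]
  refine measure_mono_null ?_ (lam_Iio μ n)
  intro x hx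
  by_contra h
  have : 0 ≤ x / √n := div_nonneg (by simpa using h) (by positivity)
  exact absurd hx (by simpa using this)

lemma sig_lim (hm : M2 μ) (hclt : CLT μ) (x : ℝ) (hx : 0 ≤ x) :
    Tendsto (fun n => (sig μ n).real (Set.Ioi x)) atTop (nhds (halfNormal.real (Set.Ioi x))) := by
  rw [hn_Ioi hx]
  refine (erdos_kac μ hm hclt hx).congr' ?_
  filter_upwards [eventually_ge_atTop 1] with n hn
  unfold sig Measure.real
  rw [Measure.map_apply (by fun_prop) measurableSet_Ioi]
  congr 2
  ext y
  have : 0 < √(n:ℝ) := by positivity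
  simp only [Set.mem_Ioi, Set.mem_preimage, lt_div_iff₀ this]

lemma sig_shift (hac : μ ≪ volume) (hm : M2 μ) (hclt : CLT μ) :
    ∀ ε > 0, ∃ a > 0, ∀ᶠ n in atTop, ∀ F : ℝ → ℝ, Measurable F → (∀ x, |F x| ≤ 1) → ∀ s ∈ Set.Icc 0 a,
      |∫ x, F (x + s) ∂(sig μ n) - ∫ x, F x ∂(sig μ n)| ≤ ε := by
  intro ε hε
  obtain ⟨C, hC, hS⟩ := shift_bound μ hac
  obtain ⟨j, hj⟩ := exists_nat_gt (48 / ε)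
  have hj1 : 1 ≤ j := by
    rcases Nat.eq_zero_or_pos j with h | h
    · subst h; have : 0 < 48 / ε := by positivity
      simp at hj; linarith
    · exact h
  have hj0 : (0:ℝ) < j := by exact_mod_cast hj1
  have hjε : 16 / (j:ℝ) ≤ ε / 3 := by
    rw [div_le_div_iff₀ hj0 (by norm_num)]
    rw [div_lt_iff₀ hε] at hj
    linarith
  set T : ℕ := j ^ 4 + 1 with hT
  have hT0 : 0 < T := by positivity
  set a : ℝ := ε / (3 * C * √(2 * T)) with ha
  have ha0 : 0 < a := by positivity
  refine ⟨a, ha0, ?_⟩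
  have htm : Tendsto (fun n : ℕ => n / T) atTop atTop := Nat.tendsto_div_const_atTop (by omega)
  have ev1 := htm.eventually (beta_upper μ hm hclt hj1)
  have ev2 : ∀ᶠ n : ℕ in atTop, C / √((n / T : ℕ) : ℝ) ≤ ε / 3 := by
    have : Tendsto (fun n : ℕ => C / √((n / T : ℕ) : ℝ)) atTop (nhds 0) :=
      Tendsto.div_atTop tendsto_const_nhds (Real.tendsto_sqrt_atTop.comp (tendsto_natCast_atTop_atTop.comp htm))
    exact (this.eventually (gt_mem_nhds (show 0 < ε / 3 by positivity))).mono fun n h => h.le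
  filter_upwards [ev1, ev2, eventually_ge_atTop T] with n h1 h2 h3 F hF hb s hs
  set m := n / T with hmdef
  have hm1 : 1 ≤ m := (Nat.one_le_div_iff hT0).2 h3
  have hmn : T * m ≤ n := Nat.mul_div_le n T
  have hn2 : n ≤ 2 * T * m := by
    have := Nat.lt_mul_div_succ n hT0
    rw [← hmdef] at this
    nlinarith
  have hn0 : 0 < √(n:ℝ) := by
    have : 0 < n := by omega
    positivity
  have hm0 : 0 < √(m:ℝ) := by positivity
  have hF' : Measurable (fun x => F (x / √n)) := hF.comp (by fun_prop)
  have hS' := hS n m hm1 (by nlinarith) (fun x => F (x / √n)) hF' (fun x => hb _) (s * √n)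
  have e1 : ∫ x, F (x + s) ∂(sig μ n) = ∫ x, F ((x + s * √n) / √n) ∂(lam μ n) := by
    unfold sig
    have hFs : Measurable (fun x => F (x + s)) := hF.comp (by fun_prop)
    rw [integral_map (by fun_prop) hFs.aestronglyMeasurable]
    congr 1; ext x
    rw [add_div, mul_div_cancel_right₀ _ hn0.ne']
  have e2 : ∫ x, F x ∂(sig μ n) = ∫ x, F (x / √n) ∂(lam μ n) := by
    unfold sig
    rw [integral_map (by fun_prop) hF.aestronglyMeasurable]
  rw [e1, e2]
  refine hS'.trans ?_
  have hbeta : 4 * (beta μ n m).toReal ≤ ε / 3 := by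
    have := ENNReal.toReal_mono ENNReal.ofReal_ne_top (h1 n hmn)
    rw [ENNReal.toReal_ofReal (by positivity)] at this
    have e : 16 / (j:ℝ) = 4 * (4 / j) := by ring
    linarith
  have hrest : C * (1 + |s * √n|) / √m ≤ 2 * ε / 3 := by
    rw [abs_of_nonneg (mul_nonneg hs.1 hn0.le)]
    have hsq : √(n:ℝ) ≤ √(2 * T) * √m := by
      rw [← Real.sqrt_mul (by positivity)]
      apply Real.sqrt_le_sqrt
      exact_mod_cast hn2
    have : C * (s * √n) / √m ≤ ε / 3 := by
      rw [div_le_iff₀ hm0]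
      calc C * (s * √n) ≤ C * (a * (√(2 * T) * √m)) := by gcongr; exact hs.2
        _ = ε / 3 * √m := by
          rw [ha]; field_simp
    calc C * (1 + s * √n) / √m = C / √m + C * (s * √n) / √m := by ring
      _ ≤ _ := by linarith
  linarith

lemma TV (hac : μ ≪ volume) (hm : M2 μ) (hclt : CLT μ) {ε : ℝ} (hε : 0 < ε) :
    ∀ᶠ n in atTop, ∀ F : ℝ → ℝ, Measurable F → (∀ x, |F x| ≤ 1) →
      |∫ x, F x ∂(sig μ n) - ∫ x, F x ∂halfNormal| ≤ ε :=
  TV_abs (sig μ) halfNormal (sig_Iio μ) hn_Iio (sig_lim μ hm hclt) (sig_shift μ hac hm hclt) hn_shift hε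

end

end EEK

open MeasureTheory ProbabilityTheory Filter
open scoped ENNReal Classical
set_option linter.unusedSectionVars false

namespace EEK

lemma log_one_mul {a b : ℝ} (ha : 0 ≤ a) (hb : 0 ≤ b) :
    Real.log (1 + a * b) ≤ Real.log (1 + a) + Real.log (1 + b) := by
  rw [← Real.log_mul (by positivity) (by positivity)]
  apply Real.log_le_log (by positivity)
  nlinarith

lemma log_one_nonneg {a : ℝ} (ha : 0 ≤ a) : 0 ≤ Real.log (1 + a) := Real.log_nonneg (by linarith)

lemma log_one_mono {a b : ℝ} (ha : 0 ≤ a) (hb : a ≤ b) : Real.log (1 + a) ≤ Real.log (1 + b) :=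
  Real.log_le_log (by linarith) (by linarith)

lemma mul_log_swap {a b t : ℝ} (ha : 0 ≤ a) (hb : 0 ≤ b) (ht : 0 ≤ t) :
    a * Real.log (1 + t * b) ≤ a * Real.log (1 + t * a) + b := by
  rcases le_or_gt b a with h | h
  · have := log_one_mono (mul_nonneg ht hb) (mul_le_mul_of_nonneg_left h ht)
    nlinarith
  · rcases ha.eq_or_lt with h0 | h0
    · rw [← h0]; simpa using hb
    · have h1 : 1 < b / a := (one_lt_div h0).2 h
      have h2 : Real.log (1 + t * b) ≤ Real.log (1 + t * a) + Real.log (b / a) := by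
        rw [← Real.log_mul (by positivity) (by positivity)]
        apply Real.log_le_log (by positivity)
        have : (1 + t * a) * (b / a) = b / a + t * b := by field_simp
        rw [this]; linarith
      have h3 : Real.log (b / a) ≤ b / a - 1 := Real.log_le_sub_one_of_pos (by positivity)
      have h4 : a * (b / a - 1) = b - a := by field_simp
      have h5 := mul_le_mul_of_nonneg_left h2 ha
      have h6 := mul_le_mul_of_nonneg_left h3 ha
      linarith

/-- `x log (1 + t x)` on extended nonnegative numbers -/
noncomputable def xl (t : ℝ) (a : ℝ≥0∞) : ℝ≥0∞ := a * ENNReal.ofReal (Real.log (1 + t * a.toReal))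

lemma xl_meas (t : ℝ) : Measurable (xl t) := by
  unfold xl; fun_prop

lemma xl_mono {t : ℝ} (ht : 0 ≤ t) {a b : ℝ≥0∞} (hb : b ≠ ⊤) (h : a ≤ b) : xl t a ≤ xl t b := by
  unfold xl
  have := ENNReal.toReal_mono hb h
  refine mul_le_mul' h (ENNReal.ofReal_le_ofReal (log_one_mono (by positivity) (by gcongr)))

lemma xl_swap {t : ℝ} (ht : 0 ≤ t) {a b : ℝ≥0∞} (ha : a ≠ ⊤) (hb : b ≠ ⊤) :
    a * ENNReal.ofReal (Real.log (1 + t * b.toReal)) ≤ xl t a + b := by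
  unfold xl
  have h := mul_log_swap (a := a.toReal) (b := b.toReal) ENNReal.toReal_nonneg ENNReal.toReal_nonneg ht
  have h' := ENNReal.ofReal_le_ofReal h
  have hn := log_one_nonneg (mul_nonneg ht (ENNReal.toReal_nonneg (a := a)))
  rw [ENNReal.ofReal_add (by positivity) ENNReal.toReal_nonneg, ENNReal.ofReal_mul ENNReal.toReal_nonneg,
    ENNReal.ofReal_mul ENNReal.toReal_nonneg, ENNReal.ofReal_toReal ha, ENNReal.ofReal_toReal hb] at h'
  exact h'

lemma xl_scale {s t : ℝ} (hs : 0 ≤ s) (ht : 0 ≤ t) (a : ℝ≥0∞) :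
    xl (s * t) a ≤ ENNReal.ofReal (Real.log (1 + s)) * a + xl t a := by
  unfold xl
  rw [mul_comm _ a, ← mul_add, ← ENNReal.ofReal_add (log_one_nonneg hs) (log_one_nonneg (by positivity))]
  gcongr
  rw [mul_assoc]
  exact log_one_mul hs (by positivity)

lemma xl_smul {t : ℝ} (ht : 0 ≤ t) {r a : ℝ≥0∞} (ha : a ≠ ⊤) (hr : r ≤ 1) : xl t (r * a) ≤ r * xl t a := by
  unfold xl
  rw [mul_assoc]
  have : (r * a).toReal ≤ a.toReal := ENNReal.toReal_mono ha (by simpa using mul_le_mul_left hr a)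
  gcongr

lemma xl_three {t c : ℝ} (ht : 0 ≤ t) (hc : 0 ≤ c) {f w v : ℝ≥0∞} (hf : f ≠ ⊤) (hw : w ≠ ⊤) (hv : v ≠ ⊤)
    (h : f ≤ ENNReal.ofReal c + w + v) :
    xl t f ≤ ENNReal.ofReal (Real.log (1 + 3 * t * c)) * f + 3 * xl (3 * t) w + 3 * xl (3 * t) v := by
  have key : ∀ a : ℝ≥0∞, a ≠ ⊤ → f ≤ 3 * a → xl t f ≤ 3 * xl (3 * t) a := by
    intro a ha h
    refine (xl_mono ht (ENNReal.mul_ne_top (by norm_num) ha) h).trans (le_of_eq ?_)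
    unfold xl
    rw [ENNReal.toReal_mul, ← mul_assoc t, mul_comm t]
    simp [mul_assoc]
  have h3 : ∀ a b c : ℝ≥0∞, b ≤ a → c ≤ a → a + b + c ≤ 3 * a := by
    intro a b c hb hc
    calc a + b + c ≤ a + a + a := by gcongr
      _ = 3 * a := by ring
  have h3' : ∀ a b c : ℝ≥0∞, a ≤ b → c ≤ b → a + b + c ≤ 3 * b := by
    intro a b c hb hc
    calc a + b + c ≤ b + b + b := by gcongr
      _ = 3 * b := by ring
  have h3'' : ∀ a b c : ℝ≥0∞, a ≤ c → b ≤ c → a + b + c ≤ 3 * c := by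
    intro a b c hb hc
    calc a + b + c ≤ c + c + c := by gcongr
      _ = 3 * c := by ring
  rcases le_total w (ENNReal.ofReal c) with hwc | hwc
  · rcases le_total v (ENNReal.ofReal c) with hvc | hvc
    · have h1 := h.trans (h3 _ _ _ hwc hvc)
      have h2 : f.toReal ≤ 3 * c := by
        have := ENNReal.toReal_mono (ENNReal.mul_ne_top (by norm_num) ENNReal.ofReal_ne_top) h1
        rw [ENNReal.toReal_mul, ENNReal.toReal_ofReal hc] at this
        simpa using this
      refine le_trans ?_ (le_add_right le_self_add)
      unfold xl
      rw [mul_comm]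
      refine mul_le_mul' (ENNReal.ofReal_le_ofReal (log_one_mono (by positivity) ?_)) le_rfl
      nlinarith
    · exact (key v hv (h.trans (h3'' _ _ _ hvc (hwc.trans hvc)))).trans le_add_self
  · rcases le_total v w with hvc | hvc
    · exact (key w hw (h.trans (h3' _ _ _ hwc hvc))).trans (le_add_right le_add_self)
    · exact (key v hv (h.trans (h3'' _ _ _ (hwc.trans hvc) hvc))).trans le_add_self

/-- density -/
noncomputable def dn (ρ : Measure ℝ) : ℝ → ℝ≥0∞ := ρ.rnDeriv volume

lemma dn_meas (ρ : Measure ℝ) : Measurable (dn ρ) := Measure.measurable_rnDeriv _ _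

lemma dn_top (ρ : Measure ℝ) [IsFiniteMeasure ρ] : ∀ᵐ x, dn ρ x ≠ ⊤ :=
  (Measure.rnDeriv_lt_top ρ volume).mono fun _ h => h.ne

lemma dn_wd {ρ : Measure ℝ} [IsFiniteMeasure ρ] (h : ρ ≪ volume) : volume.withDensity (dn ρ) = ρ :=
  Measure.withDensity_rnDeriv_eq _ _ h

lemma dn_le {ρ : Measure ℝ} {g : ℝ → ℝ≥0∞} (h : ρ ≤ volume.withDensity g) :
    dn ρ ≤ᵐ[volume] g := by
  apply ae_le_of_forall_setLIntegral_le_of_sigmaFinite (dn_meas ρ)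
  intro s hs _
  rw [← withDensity_apply g hs]
  exact (Measure.setLIntegral_rnDeriv_le s).trans (h s)

noncomputable def ent (t : ℝ) (ρ : Measure ℝ) : ℝ≥0∞ := ∫⁻ x, xl t (dn ρ x)

lemma ent_le {t : ℝ} (ht : 0 ≤ t) {ρ : Measure ℝ} {g : ℝ → ℝ≥0∞} (hg : ∀ᵐ x, g x ≠ ⊤)
    (h : ρ ≤ volume.withDensity g) : ent t ρ ≤ ∫⁻ x, xl t (g x) := by
  apply lintegral_mono_ae
  filter_upwards [hg, dn_le h] with x h1 h2
  exact xl_mono ht h1 h2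

lemma ent_mono {t : ℝ} (ht : 0 ≤ t) {ρ ρ' : Measure ℝ} [IsFiniteMeasure ρ'] (hac : ρ' ≪ volume) (h : ρ ≤ ρ') :
    ent t ρ ≤ ent t ρ' :=
  ent_le ht (dn_top ρ') (by rwa [dn_wd hac])

lemma dn_lint (ρ : Measure ℝ) : ∫⁻ x, dn ρ x ≤ ρ Set.univ := by
  have h := Measure.setLIntegral_rnDeriv_le (μ := ρ) (ν := volume) Set.univ
  rw [setLIntegral_univ] at h
  exact h

lemma ent_scale {s t : ℝ} (hs : 0 ≤ s) (ht : 0 ≤ t) (ρ : Measure ℝ) :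
    ent (s * t) ρ ≤ ENNReal.ofReal (Real.log (1 + s)) * ρ Set.univ + ent t ρ := by
  unfold ent
  calc _ ≤ ∫⁻ x, ENNReal.ofReal (Real.log (1 + s)) * dn ρ x + xl t (dn ρ x) :=
        lintegral_mono fun x => xl_scale hs ht _
    _ = ENNReal.ofReal (Real.log (1 + s)) * (∫⁻ x, dn ρ x) + ∫⁻ x, xl t (dn ρ x) := by
        have m1 : Measurable fun x => xl t (dn ρ x) := (xl_meas t).comp (dn_meas ρ)
        rw [lintegral_add_right _ m1, lintegral_const_mul _ (dn_meas ρ)]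
    _ ≤ _ := by gcongr; exact dn_lint ρ

lemma ent_smul {t : ℝ} (ht : 0 ≤ t) {r : ℝ≥0∞} (hr : r ≤ 1) (ρ : Measure ℝ) [IsFiniteMeasure ρ] (hac : ρ ≪ volume) :
    ent t (r • ρ) ≤ r * ent t ρ := by
  have hr' : r ≠ ⊤ := ne_top_of_le_ne_top ENNReal.one_ne_top hr
  have h1 : ent t (r • ρ) ≤ ∫⁻ x, xl t (r * dn ρ x) := by
    apply ent_le ht (g := fun x => r * dn ρ x)
    · filter_upwards [dn_top ρ] with x hx
      exact ENNReal.mul_ne_top hr' hx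
    · rw [show (fun x => r * dn ρ x) = r • dn ρ from rfl, withDensity_smul _ (dn_meas ρ), dn_wd hac]
  refine h1.trans ?_
  unfold ent
  have m1 : Measurable fun x => xl t (dn ρ x) := (xl_meas t).comp (dn_meas ρ)
  rw [← lintegral_const_mul _ m1]
  apply lintegral_mono_ae
  filter_upwards [dn_top ρ] with x hx
  exact xl_smul ht hx hr

lemma ent_three {t c : ℝ} (ht : 0 ≤ t) (hc : 0 ≤ c) {ρ w v : Measure ℝ} [IsFiniteMeasure ρ] [IsFiniteMeasure w]
    [IsFiniteMeasure v] (hw : w ≪ volume) (hv : v ≪ volume)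
    (h : ρ ≤ ENNReal.ofReal c • volume + w + v) (B : Set ℝ) :
    ∫⁻ x in B, xl t (dn ρ x) ≤ ENNReal.ofReal (Real.log (1 + 3 * t * c)) * ρ B + 3 * ent (3 * t) w + 3 * ent (3 * t) v := by
  have h1 : dn ρ ≤ᵐ[volume] fun x => ENNReal.ofReal c + dn w x + dn v x := by
    apply dn_le
    refine h.trans (le_of_eq ?_)
    have e : (fun x => ENNReal.ofReal c + dn w x + dn v x) = ((fun _ => ENNReal.ofReal c) + dn w) + dn v := rfl
    rw [e, withDensity_add_right _ (dn_meas v), withDensity_add_right _ (dn_meas w), dn_wd hw, dn_wd hv, withDensity_const]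
  calc ∫⁻ x in B, xl t (dn ρ x) ≤ ∫⁻ x in B, (ENNReal.ofReal (Real.log (1 + 3 * t * c)) * dn ρ x
        + (3 * xl (3 * t) (dn w x) + 3 * xl (3 * t) (dn v x))) := by
        apply lintegral_mono_ae
        apply ae_restrict_of_ae
        filter_upwards [h1, dn_top ρ, dn_top w, dn_top v] with x h1 h2 h3 h4
        rw [← add_assoc]
        exact xl_three ht hc h2 h3 h4 h1
    _ = ENNReal.ofReal (Real.log (1 + 3 * t * c)) * (∫⁻ x in B, dn ρ x) + ∫⁻ x in B, (3 * xl (3 * t) (dn w x) + 3 * xl (3 * t) (dn v x)) := by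
        rw [lintegral_add_left ((dn_meas ρ).const_mul _), lintegral_const_mul _ (dn_meas ρ)]
    _ ≤ ENNReal.ofReal (Real.log (1 + 3 * t * c)) * ρ B + ∫⁻ x, (3 * xl (3 * t) (dn w x) + 3 * xl (3 * t) (dn v x)) := by
        gcongr
        · exact Measure.setLIntegral_rnDeriv_le B
        · exact Measure.restrict_le_self
    _ = _ := by
        have m1 : Measurable fun x => xl (3 * t) (dn w x) := (xl_meas _).comp (dn_meas w)
        have m2 : Measurable fun x => xl (3 * t) (dn v x) := (xl_meas _).comp (dn_meas v)
        rw [lintegral_add_left (m1.const_mul _), lintegral_const_mul _ m1, lintegral_const_mul _ m2, add_assoc]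
        rfl

lemma conv_wd (κ : Measure ℝ) [IsFiniteMeasure κ] {f : ℝ → ℝ≥0∞} (hf : Measurable f)
    [SFinite (volume.withDensity f)] :
    Measure.conv κ (volume.withDensity f) = volume.withDensity (fun x => ∫⁻ y, f (x - y) ∂κ) := by
  ext s hs
  have hsm : Measurable (s.indicator (1 : ℝ → ℝ≥0∞)) := measurable_one.indicator hs
  rw [← lintegral_indicator_one hs, Measure.lintegral_conv hsm, withDensity_apply _ hs]
  calc ∫⁻ y, (∫⁻ z, s.indicator (1 : ℝ → ℝ≥0∞) (y + z) ∂(volume.withDensity f)) ∂κ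
      = ∫⁻ y, (∫⁻ x, s.indicator (1 : ℝ → ℝ≥0∞) x * f (x - y)) ∂κ := by
        congr 1; ext y
        have m1 : Measurable fun z => s.indicator (1 : ℝ → ℝ≥0∞) (y + z) := hsm.comp (by fun_prop)
        rw [lintegral_withDensity_eq_lintegral_mul _ hf m1,
          ← lintegral_add_left_eq_self (fun x => s.indicator (1 : ℝ → ℝ≥0∞) x * f (x - y)) y]
        congr 1; ext z
        simp [mul_comm]
    _ = ∫⁻ x, (∫⁻ y, s.indicator (1 : ℝ → ℝ≥0∞) x * f (x - y) ∂κ) := by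
        rw [lintegral_lintegral_swap]
        apply Measurable.aemeasurable
        change Measurable (fun z : ℝ × ℝ => s.indicator (1 : ℝ → ℝ≥0∞) z.2 * f (z.2 - z.1))
        exact (hsm.comp (by fun_prop)).mul (hf.comp (by fun_prop))
    _ = ∫⁻ x in s, (∫⁻ y, f (x - y) ∂κ) := by
        rw [← lintegral_indicator hs]
        congr 1; ext x
        by_cases hx : x ∈ s <;> simp [hx]

lemma conv_ac (κ ρ : Measure ℝ) [IsFiniteMeasure κ] [IsFiniteMeasure ρ] (hac : ρ ≪ volume) :
    Measure.conv κ ρ ≪ volume := by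
  have : IsFiniteMeasure (volume.withDensity (dn ρ)) := by rw [dn_wd hac]; infer_instance
  rw [← dn_wd hac, conv_wd κ (dn_meas ρ)]
  exact withDensity_absolutelyContinuous _ _

lemma ent_conv {t : ℝ} (ht : 0 ≤ t) (κ ρ : Measure ℝ) [IsFiniteMeasure κ] [IsFiniteMeasure ρ] (hac : ρ ≪ volume) :
    ent t (Measure.conv κ ρ) ≤ κ Set.univ * ent t ρ + κ Set.univ * (κ Set.univ * ρ Set.univ) := by
  have : IsFiniteMeasure (volume.withDensity (dn ρ)) := by rw [dn_wd hac]; infer_instance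
  set f := dn ρ with hf
  have hfm : Measurable f := dn_meas ρ
  set g : ℝ → ℝ≥0∞ := fun x => ∫⁻ y, f (x - y) ∂κ with hg
  have hgm : Measurable g := by
    apply Measurable.lintegral_prod_right' (f := fun z : ℝ × ℝ => f (z.1 - z.2))
    exact hfm.comp (by fun_prop)
  have e : Measure.conv κ ρ = volume.withDensity g := by
    rw [hg, ← conv_wd κ hfm, hf, dn_wd hac]
  have hgi : ∫⁻ x, g x = κ Set.univ * ρ Set.univ := by
    rw [← conv_univ κ ρ, e, withDensity_apply _ MeasurableSet.univ, setLIntegral_univ]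
  have hgt : ∀ᵐ x, g x < ⊤ := by
    apply ae_lt_top hgm
    rw [hgi]
    exact ENNReal.mul_ne_top (measure_ne_top _ _) (measure_ne_top _ _)
  have hxm : Measurable fun x => xl t (f x) := (xl_meas t).comp hfm
  calc ent t (Measure.conv κ ρ) ≤ ∫⁻ x, xl t (g x) := ent_le ht (hgt.mono fun _ h => h.ne) e.le
    _ ≤ ∫⁻ x, ((∫⁻ y, xl t (f (x - y)) ∂κ) + κ Set.univ * g x) := by
        apply lintegral_mono_ae
        filter_upwards [hgt] with x hx
        have hfx : Measurable fun y => f (x - y) := hfm.comp (by fun_prop)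
        have hft := ae_lt_top hfx hx.ne
        calc xl t (g x) = ∫⁻ y, f (x - y) * ENNReal.ofReal (Real.log (1 + t * (g x).toReal)) ∂κ := by
              rw [lintegral_mul_const _ hfx]; rfl
          _ ≤ ∫⁻ y, (xl t (f (x - y)) + g x) ∂κ := by
              apply lintegral_mono_ae
              filter_upwards [hft] with y hy
              exact xl_swap ht hy.ne hx.ne
          _ = _ := by
              rw [lintegral_add_right _ measurable_const, lintegral_const, mul_comm (g x)]
    _ = (∫⁻ x, (∫⁻ y, xl t (f (x - y)) ∂κ)) + κ Set.univ * ∫⁻ x, g x := by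
        rw [lintegral_add_right _ (hgm.const_mul _), lintegral_const_mul _ hgm]
    _ = _ := by
        rw [hgi, lintegral_lintegral_swap]
        · congr 1
          have : ∀ y, ∫⁻ x, xl t (f (x - y)) = ent t ρ := by
            intro y
            rw [lintegral_sub_right_eq_self (fun x => xl t (f x)) y]
            rfl
          simp_rw [this]
          rw [lintegral_const, mul_comm]
        · apply Measurable.aemeasurable
          change Measurable (fun z : ℝ × ℝ => xl t (f (z.1 - z.2)))
          exact hxm.comp (by fun_prop : Measurable fun z : ℝ × ℝ => z.1 - z.2)

end EEK

open MeasureTheory ProbabilityTheory Filter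
open scoped ENNReal Classical
set_option linter.unusedSectionVars false

namespace EEK

section
variable (μ : Measure ℝ) [IsProbabilityMeasure μ]

noncomputable def Ksum (n : ℕ) : Measure ℝ := ∑ k ∈ Finset.range n, cpow μ k

instance Ksum_fin (n : ℕ) : IsFiniteMeasure (Ksum μ n) := by
  induction n with
  | zero => unfold Ksum; simp; infer_instance
  | succ n ih =>
    have : Ksum μ (n + 1) = Ksum μ n + cpow μ n := by unfold Ksum; rw [Finset.sum_range_succ]
    rw [this]; infer_instance

lemma Ksum_univ (n : ℕ) : Ksum μ n Set.univ = n := by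
  unfold Ksum
  simp

lemma sum_conv (ρ : Measure ℝ) [IsFiniteMeasure ρ] (n : ℕ) :
    ∑ k ∈ Finset.range n, Measure.conv ρ (cpow μ k) = Measure.conv ρ (Ksum μ n) := by
  induction n with
  | zero => simp [Ksum]
  | succ n ih =>
    have : Ksum μ (n + 1) = Ksum μ n + cpow μ n := by unfold Ksum; rw [Finset.sum_range_succ]
    rw [this, Finset.sum_range_succ, ih, Measure.conv_add]

lemma lamp_le_conv (n : ℕ) : lamp μ n ≤ Measure.conv (Ksum μ n) (μ.restrict (Set.Ioi 0)) := by
  rw [Measure.conv_comm, ← sum_conv, lamp_eq]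
  apply Finset.sum_le_sum
  intro k _
  rw [← gam_one]
  refine le_trans ?_ (gam_le μ k)
  intro s
  rw [Measure.smul_apply, smul_eq_mul]
  calc _ ≤ 1 * gam μ (k + 1) s := by gcongr; exact q_le_one μ _
    _ = _ := one_mul _

lemma mup_ac (hac : μ ≪ volume) : μ.restrict (Set.Ioi 0) ≪ volume :=
  (Measure.restrict_le_self.absolutelyContinuous).trans hac

lemma lamp_ac (hac : μ ≪ volume) (n : ℕ) : lamp μ n ≪ volume :=
  (lamp_le_conv μ n).absolutelyContinuous.trans (conv_ac _ _ (mup_ac μ hac))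

lemma mup_univ : (μ.restrict (Set.Ioi 0)) Set.univ ≤ 1 := by
  rw [Measure.restrict_apply_univ]; exact prob_le_one

lemma lamp_univ_le (n : ℕ) : lamp μ n Set.univ ≤ 1 := by
  rw [lamp_univ]; exact prob_le_one

lemma ent_mup {t : ℝ} (ht : 0 ≤ t) : ent t (μ.restrict (Set.Ioi 0)) ≤
    ENNReal.ofReal (Real.log (1 + t)) + ent 1 (μ.restrict (Set.Ioi 0)) := by
  have := ent_scale ht zero_le_one (μ.restrict (Set.Ioi 0))
  rw [mul_one] at this
  refine this.trans ?_
  gcongr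
  calc _ ≤ ENNReal.ofReal (Real.log (1 + t)) * 1 := by gcongr; exact mup_univ μ
    _ = _ := mul_one _

lemma ent_conv_mup (hac : μ ≪ volume) {t : ℝ} (ht : 0 ≤ t) (κ : Measure ℝ) [IsFiniteMeasure κ] :
    ent t (Measure.conv κ (μ.restrict (Set.Ioi 0))) ≤ κ Set.univ *
      (ENNReal.ofReal (Real.log (1 + t)) + ent 1 (μ.restrict (Set.Ioi 0)) + κ Set.univ) := by
  refine (ent_conv ht κ _ (mup_ac μ hac)).trans ?_
  rw [← mul_add]
  gcongr
  · exact ent_mup μ ht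
  · calc _ ≤ κ Set.univ * 1 := by gcongr; exact mup_univ μ
      _ = _ := mul_one _

lemma ent_lamp_fin (hac : μ ≪ volume) (hA : ent 1 (μ.restrict (Set.Ioi 0)) ≠ ⊤) {t : ℝ} (ht : 0 ≤ t) (n : ℕ) :
    ent t (lamp μ n) ≠ ⊤ := by
  refine ne_top_of_le_ne_top ?_ ((ent_mono ht (conv_ac _ _ (mup_ac μ hac)) (lamp_le_conv μ n)).trans
    (ent_conv_mup μ hac ht (Ksum μ n)))
  rw [Ksum_univ]
  exact ENNReal.mul_ne_top (by simp) (by simp [hA])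

/-- geometric smallness of the error term -/
lemma small_err {θ : ℝ} (h0 : 0 ≤ θ) (h1 : θ < 1) {L : ℕ} (hL : 1 ≤ L) (A : ℝ) :
    Tendsto (fun n : ℕ => (n * θ ^ (n / L / 2)) * (Real.log (1 + 3 * √n) + A + n * θ ^ (n / L / 2)))
      atTop (nhds 0) := by
  have hM : 1 ≤ L * 2 := by omega
  have base : ∀ k : ℕ, Tendsto (fun n : ℕ => (n:ℝ) ^ k * θ ^ (n / L / 2)) atTop (nhds 0) := by
    intro k
    have hb := (tendsto_pow_const_mul_const_pow_of_abs_lt_one k (show |θ| < 1 by rwa [abs_of_nonneg h0]))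
    have hb1 := (tendsto_pow_const_mul_const_pow_of_abs_lt_one 0 (show |θ| < 1 by rwa [abs_of_nonneg h0]))
    have hc := (hb.const_mul ((2 * (L * 2 : ℕ) : ℝ) ^ k)).comp (Nat.tendsto_div_const_atTop (n := L * 2) (by omega))
    rw [mul_zero] at hc
    refine squeeze_zero' (Eventually.of_forall fun n => by positivity) ?_ hc
    filter_upwards [eventually_ge_atTop (L * 2)] with n hn
    simp only [Function.comp]
    rw [Nat.div_div_eq_div_mul, ← mul_assoc, ← mul_pow]
    gcongr
    have h3 : n ≤ 2 * (L * 2) * (n / (L * 2)) := by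
      have h4 := Nat.lt_mul_div_succ n (show 0 < L * 2 by omega)
      have h5 : 1 ≤ n / (L * 2) := (Nat.one_le_div_iff (by omega)).2 hn
      nlinarith
    exact_mod_cast h3
  have b1 : Tendsto (fun n : ℕ => (n:ℝ) * θ ^ (n / L / 2)) atTop (nhds 0) := by simpa using base 1
  have b2 := base 2
  have b3 : Tendsto (fun n : ℕ => (n:ℝ) * θ ^ (n / L / 2) * Real.log (1 + 3 * √n)) atTop (nhds 0) := by
    have hc := b2.const_mul 3
    rw [mul_zero] at hc
    refine squeeze_zero (fun n => mul_nonneg (by positivity) (log_one_nonneg (by positivity))) (fun n => ?_) hc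
    have l1 : Real.log (1 + 3 * √n) ≤ 3 * n := by
      rcases Nat.eq_zero_or_pos n with h | h
      · subst h; simp
      · have h1 := Real.log_le_sub_one_of_pos (show 0 < 1 + 3 * √(n:ℝ) by positivity)
        have h2 : √(n:ℝ) ≤ n := by
          rw [Real.sqrt_le_left (by positivity)]
          have : (1:ℝ) ≤ n := by exact_mod_cast h
          nlinarith
        linarith
    calc _ ≤ (n:ℝ) * θ ^ (n / L / 2) * (3 * n) := by gcongr
      _ = _ := by ring
  have := (b3.add (b1.mul_const A)).add (b1.mul b1)
  simp only [zero_mul, add_zero] at this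
  refine this.congr fun n => ?_
  ring

lemma rec_step (hac : μ ≪ volume) (hm : M2 μ) (hclt : CLT μ) (hneg : μ (Set.Iic 0) ≠ 0)
    (hA : ent 1 (μ.restrict (Set.Ioi 0)) ≠ ⊤) :
    ∃ C : ℝ, 0 < C ∧ ∀ j : ℕ, 1 ≤ j → C / j ≤ 1 → ∃ Λ : ℝ, ∀ η : ℝ, 0 < η → ∀ᶠ n : ℕ in atTop,
      ∃ m < n, ∀ B : Set ℝ, ∫⁻ x in B, xl (√n) (dn (lamp μ n) x) ≤
        ENNReal.ofReal Λ * lamp μ n B + ENNReal.ofReal η +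
          3 * (ENNReal.ofReal (C / j) * (ENNReal.ofReal (8 * √j) + ent (√m) (lamp μ m))) := by
  obtain ⟨C, hC, hq⟩ := q_ratio μ hm hclt
  obtain ⟨D, θ, hD, hθ0, hθ1, hB⟩ := lemmaB μ hac
  refine ⟨C, hC, fun j hj hCj => ?_⟩
  set L : ℕ := j ^ 4 + 2 with hL
  have hL1 : 1 ≤ L := by omega
  refine ⟨Real.log (1 + 3 * (D * √(2 * L))), fun η hη => ?_⟩
  set A := (ent 1 (μ.restrict (Set.Ioi 0))).toReal with hAdef
  have htm : Tendsto (fun n : ℕ => n / L) atTop atTop := Nat.tendsto_div_const_atTop (by omega)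
  have ev1 := htm.eventually (hq j hj)
  have ev2 := (small_err hθ0 hθ1 hL1 A).eventually (gt_mem_nhds (show 0 < η / 3 by positivity))
  filter_upwards [ev1, ev2, eventually_ge_atTop L] with n h1 h2 h3
  set m := n / L with hmdef
  have hm1 : 1 ≤ m := (Nat.one_le_div_iff (by omega)).2 h3
  have hLm : L * m ≤ n := Nat.mul_div_le n L
  have hn2 : n ≤ 2 * L * m := by
    have := Nat.lt_mul_div_succ n (show 0 < L by omega)
    rw [← hmdef] at this
    nlinarith
  have h2L : 2 ≤ L := by omega
  have hmn : m < n := by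
    have : 2 * m ≤ L * m := Nat.mul_le_mul_right m h2L
    omega
  have hn0 : 0 < √(n:ℝ) := by
    have : 0 < n := by omega
    positivity
  have hm0 : 0 < √(m:ℝ) := by positivity
  have hsq : √(n:ℝ) ≤ √(2 * L) * √m := by
    rw [← Real.sqrt_mul (by positivity)]
    apply Real.sqrt_le_sqrt
    exact_mod_cast hn2
  refine ⟨m, hmn, fun B => ?_⟩
  obtain ⟨E, hEf, hE1, hE2⟩ := hB m hm1
  set r := q μ (n - m) / q μ m with hr
  have hqm := q_pos μ hneg m
  have hrle : r ≤ ENNReal.ofReal (C / j) := by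
    rw [hr, ENNReal.div_le_iff hqm (q_ne_top μ m)]
    refine (q_anti μ ?_).trans h1
    have : (j ^ 4 + 1) * m + m = L * m := by rw [hL]; ring
    omega
  have hr1 : r ≤ 1 := hrle.trans (by simpa using hCj)
  have hrt : r ≠ ⊤ := ne_top_of_le_ne_top ENNReal.one_ne_top hr1
  set w := Measure.conv E (lamp μ (n - m)) with hw
  have hwac : w ≪ volume := conv_ac _ _ (lamp_ac μ hac _)
  have hvfin : IsFiniteMeasure (r • lamp μ m) := smul_fin _ _ hrt
  have hvac : r • lamp μ m ≪ volume := (Measure.AbsolutelyContinuous.rfl.smul_left r).trans (lamp_ac μ hac m)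
  have hdom : lamp μ n ≤ ENNReal.ofReal (D / √m) • volume + w + r • lamp μ m := by
    rw [lamp_split μ hmn.le, add_comm]
    refine add_le_add ?_ (vpart_le μ hneg hmn.le)
    refine (kill_iter_le μ m _).trans ((conv_mono_right _ hE1).trans ?_)
    rw [Measure.conv_add, Measure.conv_smul_right, conv_vol, Measure.conv_comm _ E]
    refine add_le_add ?_ le_rfl
    intro s
    simp only [Measure.smul_apply, smul_eq_mul]
    gcongr
    calc _ ≤ 1 * volume s := by gcongr; exact lamp_univ_le μ _
      _ = _ := one_mul _
  have main := ent_three (t := √n) (c := D / √m) hn0.le (by positivity) hwac hvac hdom B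
  have t1 : ENNReal.ofReal (Real.log (1 + 3 * √n * (D / √m))) ≤ ENNReal.ofReal (Real.log (1 + 3 * (D * √(2 * L)))) := by
    apply ENNReal.ofReal_le_ofReal
    apply log_one_mono (by positivity)
    rw [mul_assoc]
    refine mul_le_mul_of_nonneg_left ?_ (by norm_num)
    rw [← mul_div_assoc, div_le_iff₀ hm0]
    calc √n * D ≤ (√(2 * L) * √m) * D := by gcongr
      _ = _ := by ring
  have t2 : 3 * ent (3 * √n) w ≤ ENNReal.ofReal η := by
    set κ := Measure.conv E (Ksum μ (n - m)) with hκ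
    have hwle : w ≤ Measure.conv κ (μ.restrict (Set.Ioi 0)) := by
      rw [hw, hκ, Measure.conv_assoc]
      exact conv_mono_right _ (lamp_le_conv μ _)
    have hκu : κ Set.univ ≤ ENNReal.ofReal (n * θ ^ (m / 2)) := by
      rw [hκ, conv_univ, Ksum_univ, mul_comm, ENNReal.ofReal_mul (by positivity), ENNReal.ofReal_natCast]
      gcongr
      omega
    have b1 := (ent_mono (t := 3 * √n) (by positivity) (conv_ac _ _ (mup_ac μ hac)) hwle).trans
      (ent_conv_mup μ hac (by positivity) κ)
    have b2 : ent (3 * √n) w ≤ ENNReal.ofReal (η / 3) := by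
      refine b1.trans ?_
      calc _ ≤ ENNReal.ofReal (n * θ ^ (m / 2)) * (ENNReal.ofReal (Real.log (1 + 3 * √n)) + ENNReal.ofReal A + ENNReal.ofReal (n * θ ^ (m / 2))) := by
            rw [hAdef, ENNReal.ofReal_toReal hA]
            gcongr
        _ = ENNReal.ofReal ((n * θ ^ (m / 2)) * (Real.log (1 + 3 * √n) + A + n * θ ^ (m / 2))) := by
            have aux : ∀ x l A : ℝ, 0 ≤ x → 0 ≤ l → 0 ≤ A → ENNReal.ofReal x * (ENNReal.ofReal l + ENNReal.ofReal A + ENNReal.ofReal x) = ENNReal.ofReal (x * (l + A + x)) := by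
              intro x l A hx hl hA
              rw [ENNReal.ofReal_mul hx, ENNReal.ofReal_add (add_nonneg hl hA) hx, ENNReal.ofReal_add hl hA]
            exact aux _ _ _ (by positivity) (log_one_nonneg (by positivity)) ENNReal.toReal_nonneg
        _ ≤ _ := ENNReal.ofReal_le_ofReal h2.le
    calc _ ≤ 3 * ENNReal.ofReal (η / 3) := by gcongr
      _ = ENNReal.ofReal η := by
        rw [show (3 : ℝ≥0∞) = ENNReal.ofReal 3 by simp, ← ENNReal.ofReal_mul (by norm_num)]
        congr 1; ring
  have t3 : ent (3 * √n) (r • lamp μ m) ≤ ENNReal.ofReal (C / j) * (ENNReal.ofReal (8 * √j) + ent (√m) (lamp μ m)) := by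
    refine (ent_smul (by positivity) hr1 _ (lamp_ac μ hac m)).trans ?_
    refine mul_le_mul' hrle ?_
    have e : 3 * √(n:ℝ) = (3 * √n / √m) * √m := by field_simp
    rw [e]
    refine (ent_scale (by positivity) hm0.le _).trans ?_
    gcongr
    calc _ ≤ ENNReal.ofReal (Real.log (1 + 3 * √n / √m)) * 1 := by gcongr; exact lamp_univ_le μ _
      _ = ENNReal.ofReal (Real.log (1 + 3 * √n / √m)) := mul_one _
      _ ≤ _ := by
        apply ENNReal.ofReal_le_ofReal
        have hj1 : (1:ℝ) ≤ j := by exact_mod_cast hj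
        have hx : 3 * √(n:ℝ) / √m ≤ 9 * j ^ 2 := by
          rw [div_le_iff₀ hm0]
          have : √(2 * (L:ℝ)) ≤ 3 * j ^ 2 := by
            rw [Real.sqrt_le_left (by positivity)]
            have h4 : (1:ℝ) ≤ (j:ℝ) ^ 4 := one_le_pow₀ hj1
            rw [hL]; push_cast
            nlinarith
          calc 3 * √(n:ℝ) ≤ 3 * (3 * j ^ 2 * √m) := by
                gcongr
                exact hsq.trans (by gcongr)
            _ = _ := by ring
        have hlog : ∀ x : ℝ, 0 < x → Real.log x ≤ 2 * √x := by
          intro x hx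
          have h1 := Real.log_le_sub_one_of_pos (Real.sqrt_pos.2 hx)
          rw [Real.log_sqrt hx.le] at h1
          linarith [Real.sqrt_nonneg x]
        calc Real.log (1 + 3 * √n / √m) ≤ Real.log (1 + 9 * j ^ 2) := log_one_mono (by positivity) hx
          _ ≤ Real.log ((1 + 3 * j) ^ 2) := by
              apply Real.log_le_log (by positivity)
              nlinarith
          _ = 2 * Real.log (1 + 3 * j) := by rw [Real.log_pow]; norm_num
          _ ≤ 2 * (2 * √(1 + 3 * j)) := by
              have := hlog (1 + 3 * j) (by positivity)
              linarith
          _ ≤ 2 * (2 * (2 * √j)) := by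
              have : √(1 + 3 * (j:ℝ)) ≤ 2 * √j := by
                rw [Real.sqrt_le_left (by positivity), mul_pow, Real.sq_sqrt (by positivity)]
                linarith
              linarith
          _ = 8 * √j := by ring
  refine main.trans ?_
  gcongr

lemma ent_bdd (hac : μ ≪ volume) (hm : M2 μ) (hclt : CLT μ) (hneg : μ (Set.Iic 0) ≠ 0)
    (hA : ent 1 (μ.restrict (Set.Ioi 0)) ≠ ⊤) :
    ∃ M : ℝ≥0∞, M ≠ ⊤ ∧ ∀ n : ℕ, ent (√n) (lamp μ n) ≤ M := by
  obtain ⟨C, hC, h⟩ := rec_step μ hac hm hclt hneg hA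
  obtain ⟨j, hj⟩ := exists_nat_gt (6 * C + 1)
  have hj1 : 1 ≤ j := by
    have : (1:ℝ) < j := by linarith
    exact_mod_cast this.le
  have hj0 : (0:ℝ) < j := by linarith
  have hCj : C / j ≤ 1 / 6 := by
    rw [div_le_div_iff₀ hj0 (by norm_num)]; linarith
  obtain ⟨Λ, hΛ⟩ := h j hj1 (by linarith)
  obtain ⟨N, hN⟩ := eventually_atTop.1 (hΛ 1 one_pos)
  set K : ℝ≥0∞ := ENNReal.ofReal Λ + 1 + ENNReal.ofReal (8 * √j) with hK
  set M : ℝ≥0∞ := 2 * K + ∑ n ∈ Finset.range N, ent (√n) (lamp μ n) with hM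
  refine ⟨M, ?_, ?_⟩
  · apply ENNReal.add_ne_top.2 ⟨ENNReal.mul_ne_top (by simp) (ENNReal.add_ne_top.2 ⟨ENNReal.add_ne_top.2 ⟨ENNReal.ofReal_ne_top, ENNReal.one_ne_top⟩, ENNReal.ofReal_ne_top⟩), ?_⟩
    rw [ENNReal.sum_ne_top]
    intro n _
    exact ent_lamp_fin μ hac hA (by positivity) n
  · intro n
    induction n using Nat.strong_induction_on with
    | _ n ih =>
      rcases lt_or_ge n N with hn | hn
      · refine le_trans ?_ le_add_self
        exact Finset.single_le_sum (f := fun n : ℕ => ent (√n) (lamp μ n)) (fun _ _ => zero_le) (Finset.mem_range.2 hn)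
      · obtain ⟨m, hmn, hr⟩ := hN n hn
        have h1 := hr Set.univ
        rw [setLIntegral_univ] at h1
        have h2 : ENNReal.ofReal (C / j) ≤ 6⁻¹ := by
          rw [show (6⁻¹ : ℝ≥0∞) = ENNReal.ofReal (1 / 6) by
            rw [one_div, ENNReal.ofReal_inv_of_pos (by norm_num)]; simp]
          exact ENNReal.ofReal_le_ofReal hCj
        have h36 : (3 : ℝ≥0∞) * 6⁻¹ = 2⁻¹ := by
          rw [show (6:ℝ≥0∞) = 3 * 2 by norm_num, ENNReal.mul_inv (by simp) (by simp), ← mul_assoc,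
            ENNReal.mul_inv_cancel (by simp) (by simp), one_mul]
        have hKM : K ≤ 2⁻¹ * M := by
          calc K = 2⁻¹ * (2 * K) := by rw [← mul_assoc, ENNReal.inv_mul_cancel (by simp) (by simp), one_mul]
            _ ≤ _ := by gcongr; exact le_self_add
        calc ent (√n) (lamp μ n) ≤ _ := h1
          _ ≤ ENNReal.ofReal Λ * 1 + 1 + 3 * (6⁻¹ * (ENNReal.ofReal (8 * √j) + M)) := by
              rw [ENNReal.ofReal_one]
              gcongr
              · exact lamp_univ_le μ n
              · exact ih m hmn
          _ = ENNReal.ofReal Λ + 1 + 2⁻¹ * ENNReal.ofReal (8 * √j) + 2⁻¹ * M := by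
              rw [← mul_assoc, h36, mul_add, mul_one, ← add_assoc]
          _ ≤ ENNReal.ofReal Λ + 1 + 1 * ENNReal.ofReal (8 * √j) + 2⁻¹ * M := by
              gcongr
              simp
          _ = K + 2⁻¹ * M := by rw [one_mul]
          _ ≤ 2⁻¹ * M + 2⁻¹ * M := by gcongr
          _ = M := by rw [← add_mul, ENNReal.inv_two_add_inv_two, one_mul]

lemma ent_UI (hac : μ ≪ volume) (hm : M2 μ) (hclt : CLT μ) (hneg : μ (Set.Iic 0) ≠ 0)
    (hA : ent 1 (μ.restrict (Set.Ioi 0)) ≠ ⊤) {ε : ℝ} (hε : 0 < ε) :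
    ∃ Λ : ℝ, ∀ᶠ n : ℕ in atTop, ∀ B : Set ℝ, ∫⁻ x in B, xl (√n) (dn (lamp μ n) x) ≤
        ENNReal.ofReal Λ * lamp μ n B + ENNReal.ofReal ε := by
  obtain ⟨C, hC, h⟩ := rec_step μ hac hm hclt hneg hA
  obtain ⟨M, hMt, hM⟩ := ent_bdd μ hac hm hclt hneg hA
  have lim : Tendsto (fun j : ℕ => 3 * (8 * C / √j + C * M.toReal / j)) atTop (nhds 0) := by
    have h1 : Tendsto (fun j : ℕ => 8 * C / √(j:ℝ)) atTop (nhds 0) :=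
      Tendsto.div_atTop tendsto_const_nhds (Real.tendsto_sqrt_atTop.comp tendsto_natCast_atTop_atTop)
    have h2 : Tendsto (fun j : ℕ => C * M.toReal / (j:ℝ)) atTop (nhds 0) :=
      Tendsto.div_atTop tendsto_const_nhds tendsto_natCast_atTop_atTop
    simpa using (h1.add h2).const_mul 3
  have ev := lim.eventually (gt_mem_nhds (show 0 < ε / 2 by positivity))
  have ev2 : ∀ᶠ j : ℕ in atTop, C / (j:ℝ) < 1 :=
    (Tendsto.div_atTop tendsto_const_nhds tendsto_natCast_atTop_atTop).eventually (gt_mem_nhds one_pos)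
  obtain ⟨j, h1, h2, hj⟩ := (ev.and (ev2.and (eventually_ge_atTop 1))).exists
  obtain ⟨Λ, hΛ⟩ := h j hj h2.le
  refine ⟨Λ, ?_⟩
  filter_upwards [hΛ (ε / 2) (by positivity)] with n hn B
  obtain ⟨m, -, hr⟩ := hn
  refine (hr B).trans ?_
  have hj0 : (0:ℝ) < j := by exact_mod_cast hj
  have e : 3 * (ENNReal.ofReal (C / j) * (ENNReal.ofReal (8 * √j) + ent (√m) (lamp μ m))) ≤ ENNReal.ofReal (ε / 2) := by
    calc _ ≤ 3 * (ENNReal.ofReal (C / j) * (ENNReal.ofReal (8 * √j) + ENNReal.ofReal M.toReal)) := by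
          gcongr
          rw [ENNReal.ofReal_toReal hMt]; exact hM m
      _ = ENNReal.ofReal (3 * (C / j * (8 * √j + M.toReal))) := by
          have aux : ∀ c a b : ℝ, 0 ≤ c → 0 ≤ a → 0 ≤ b → 3 * (ENNReal.ofReal c * (ENNReal.ofReal a + ENNReal.ofReal b)) = ENNReal.ofReal (3 * (c * (a + b))) := by
            intro c a b hc ha hb
            rw [ENNReal.ofReal_mul (by norm_num), ENNReal.ofReal_mul hc, ENNReal.ofReal_add ha hb]
            simp
          exact aux _ _ _ (by positivity) (by positivity) ENNReal.toReal_nonneg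
      _ ≤ _ := by
          apply ENNReal.ofReal_le_ofReal
          refine le_trans (le_of_eq ?_) h1.le
          have hs : √(j:ℝ) * √j = j := Real.mul_self_sqrt hj0.le
          have hs0 : 0 < √(j:ℝ) := Real.sqrt_pos.2 hj0
          have : C / j * (8 * √j) = 8 * C / √j := by
            rw [div_mul_eq_mul_div, div_eq_div_iff hj0.ne' hs0.ne']
            nlinarith
          rw [mul_add, this]; ring
  calc _ ≤ ENNReal.ofReal Λ * lamp μ n B + ENNReal.ofReal (ε / 2) + ENNReal.ofReal (ε / 2) := by gcongr
    _ = _ := by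
      rw [add_assoc, ← ENNReal.ofReal_add (by positivity) (by positivity)]
      congr 2; ring

end

end EEK

open MeasureTheory ProbabilityTheory Filter
open scoped ENNReal Classical
set_option linter.unusedSectionVars false

namespace EEK

lemma KL_le {ν : Measure ℝ} [IsProbabilityMeasure ν] (h : ν ≪ halfNormal) :
    KL ν halfNormal ≤ ∫⁻ x, ENNReal.ofReal (llr ν halfNormal x) ∂ν := by
  by_cases ht : ∫⁻ x, ENNReal.ofReal (llr ν halfNormal x) ∂ν = ⊤
  · rw [ht]; exact le_top
  have hIntg : Integrable (llr ν halfNormal) ν := by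
    rw [← InformationTheory.integrable_klFun_rnDeriv_iff h]
    refine ⟨(InformationTheory.measurable_klFun.comp (Measure.measurable_rnDeriv _ _).ennreal_toReal).aestronglyMeasurable, ?_⟩
    rw [hasFiniteIntegral_iff_ofReal (ae_of_all _ fun x => InformationTheory.klFun_nonneg ENNReal.toReal_nonneg)]
    have mm : Measurable fun x => ENNReal.ofReal (llr ν halfNormal x) := (measurable_llr _ _).ennreal_ofReal
    have b : ∫⁻ x, ENNReal.ofReal (InformationTheory.klFun (ν.rnDeriv halfNormal x).toReal) ∂halfNormal ≤
        ∫⁻ x, (ν.rnDeriv halfNormal x * ENNReal.ofReal (llr ν halfNormal x) + 1) ∂halfNormal := by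
      apply lintegral_mono
      intro x
      simp only [InformationTheory.klFun, llr]
      set a := ν.rnDeriv halfNormal x
      calc _ ≤ ENNReal.ofReal (a.toReal * Real.log a.toReal + 1) :=
            ENNReal.ofReal_le_ofReal (by linarith [ENNReal.toReal_nonneg (a := a)])
        _ ≤ ENNReal.ofReal (a.toReal * Real.log a.toReal) + ENNReal.ofReal 1 := ENNReal.ofReal_add_le
        _ ≤ _ := by
          rw [ENNReal.ofReal_one, ENNReal.ofReal_mul ENNReal.toReal_nonneg]
          gcongr
          exact ENNReal.ofReal_toReal_le
    refine b.trans_lt ?_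
    rw [lintegral_add_right _ measurable_const, lintegral_rnDeriv_mul h mm.aemeasurable]
    simp only [lintegral_const, measure_univ, mul_one]
    exact ENNReal.add_lt_top.2 ⟨lt_top_iff_ne_top.2 ht, ENNReal.one_lt_top⟩
  unfold KL
  rw [if_pos ⟨h, hIntg⟩, integral_eq_lintegral_pos_part_sub_lintegral_neg_part hIntg]
  refine le_trans (ENNReal.ofReal_le_ofReal (sub_le_self _ ENNReal.toReal_nonneg)) ?_
  exact ENNReal.ofReal_toReal_le

lemma psi_pos {x : ℝ} (hx : 0 < x) : psi x = 2 * ((√(2 * Real.pi))⁻¹ * Real.exp (-x ^ 2 / 2)) := by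
  unfold psi
  rw [Set.indicator_of_mem (by exact hx)]
  simp [gaussianPDFReal]

lemma psi_pos' {x : ℝ} (hx : 0 < x) : 0 < psi x := by
  rw [psi_pos hx]; positivity

lemma psi_log {x : ℝ} (hx : 0 < x) : ∃ c : ℝ, 0 ≤ c ∧ c ≤ 1 ∧ Real.log (psi x) = - c - x ^ 2 / 2 := by
  refine ⟨Real.log (√(2 * Real.pi)) - Real.log 2, ?_, ?_, ?_⟩
  · rw [sub_nonneg]
    apply Real.log_le_log (by norm_num)
    apply Real.le_sqrt_of_sq_le
    nlinarith [Real.pi_gt_three]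
  · have : Real.log (√(2 * Real.pi)) ≤ Real.log (2 * 2) := by
      apply Real.log_le_log (by positivity)
      rw [Real.sqrt_le_left (by norm_num)]
      nlinarith [Real.pi_lt_four]
    rw [Real.log_mul (by norm_num) (by norm_num)] at this
    linarith [Real.log_two_lt_d9]
  · rw [psi_pos hx, Real.log_mul (by norm_num) (by positivity), Real.log_mul (by positivity) (by positivity),
      Real.log_inv, Real.log_exp]
    ring

section
variable {ν : Measure ℝ} [IsProbabilityMeasure ν]

lemma hn_wd (hac : ν ≪ volume) (h0 : ν (Set.Iic 0) = 0) :
    ν = halfNormal.withDensity (fun x => dn ν x / ENNReal.ofReal (psi x)) := by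
  have mpsi : Measurable fun x => ENNReal.ofReal (psi x) := psi_meas.ennreal_ofReal
  have md : Measurable fun x => dn ν x / ENNReal.ofReal (psi x) := (dn_meas ν).div mpsi
  have hz : ∀ᵐ x, x ∈ Set.Iic (0:ℝ) → dn ν x = 0 := by
    have h1 : ∫⁻ x in Set.Iic 0, dn ν x = 0 := by
      rw [← withDensity_apply _ measurableSet_Iic, dn_wd hac, h0]
    rw [lintegral_eq_zero_iff (dn_meas ν)] at h1
    exact (ae_restrict_iff' measurableSet_Iic).1 h1
  conv_lhs => rw [← dn_wd hac]
  rw [hn_density, ← withDensity_mul _ mpsi md]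
  apply withDensity_congr_ae
  filter_upwards [hz] with x hx
  simp only [Pi.mul_apply]
  rcases le_or_gt x 0 with h | h
  · rw [hx h]; simp
  · rw [ENNReal.mul_div_cancel (by simpa using psi_pos' h) ENNReal.ofReal_ne_top]

lemma hn_ac (hac : ν ≪ volume) (h0 : ν (Set.Iic 0) = 0) : ν ≪ halfNormal := by
  rw [hn_wd hac h0]; exact withDensity_absolutelyContinuous _ _

lemma llr_eq (hac : ν ≪ volume) (h0 : ν (Set.Iic 0) = 0) :
    ∀ᵐ x ∂ν, 0 < x ∧ 0 < (dn ν x).toReal ∧ llr ν halfNormal x = Real.log (dn ν x).toReal - Real.log (psi x) := by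
  have mpsi : Measurable fun x => ENNReal.ofReal (psi x) := psi_meas.ennreal_ofReal
  have md : Measurable fun x => dn ν x / ENNReal.ofReal (psi x) := (dn_meas ν).div mpsi
  have h1 := Measure.rnDeriv_withDensity halfNormal md
  rw [← hn_wd hac h0] at h1
  have h2 := (hn_ac hac h0).ae_le h1
  have h3 : ∀ᵐ x ∂ν, 0 < x := by
    rw [ae_iff]; convert h0 using 2; ext x; simp
  have h4 : ∀ᵐ x ∂ν, dn ν x ≠ ⊤ := hac.ae_le (dn_top ν)
  have h5 : ∀ᵐ x ∂ν, 0 < dn ν x := Measure.rnDeriv_pos hac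
  filter_upwards [h2, h3, h4, h5] with x a b c d
  have p1 := psi_pos' b
  have p2 : 0 < (dn ν x).toReal := ENNReal.toReal_pos d.ne' c
  refine ⟨b, p2, ?_⟩
  unfold llr
  rw [a, ENNReal.toReal_div, ENNReal.toReal_ofReal p1.le, Real.log_div p2.ne' p1.ne']

lemma xl_set (hac : ν ≪ volume) {B : Set ℝ} (hB : MeasurableSet B) :
    ∫⁻ x in B, ENNReal.ofReal (Real.log (1 + (dn ν x).toReal)) ∂ν = ∫⁻ x in B, xl 1 (dn ν x) := by
  have m1 : Measurable fun x => ENNReal.ofReal (Real.log (1 + (dn ν x).toReal)) := by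
    have := (dn_meas ν).ennreal_toReal
    fun_prop
  rw [← lintegral_indicator hB, ← lintegral_rnDeriv_mul hac (m1.indicator hB).aemeasurable, ← lintegral_indicator hB]
  congr 1; ext x
  by_cases hx : x ∈ B
  · simp [hx, xl, dn]
  · simp [hx]

lemma KL_bound (hac : ν ≪ volume) (h0 : ν (Set.Iic 0) = 0) {η : ℝ} (hη : 0 ≤ η) {B : Set ℝ} (hB : MeasurableSet B)
    (hBc : ∀ x ∉ B, (dn ν x).toReal ≤ (1 + η) * psi x) :
    KL ν halfNormal ≤ ENNReal.ofReal η + ((∫⁻ x in B, xl 1 (dn ν x)) + ν B + ∫⁻ x in B, ENNReal.ofReal (x ^ 2) ∂ν) := by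
  refine (KL_le (hn_ac hac h0)).trans ?_
  have m1 : Measurable fun x => ENNReal.ofReal (Real.log (1 + (dn ν x).toReal)) := by
    have := (dn_meas ν).ennreal_toReal
    fun_prop
  have m2 : Measurable fun x : ℝ => ENNReal.ofReal (x ^ 2) := by fun_prop
  calc _ ≤ ∫⁻ x, (ENNReal.ofReal η + B.indicator (fun x => ENNReal.ofReal (Real.log (1 + (dn ν x).toReal)) + 1 + ENNReal.ofReal (x ^ 2)) x) ∂ν := by
        apply lintegral_mono_ae
        filter_upwards [llr_eq hac h0] with x ⟨a, b, c⟩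
        rw [c]
        by_cases hx : x ∈ B
        · rw [Set.indicator_of_mem hx]
          refine le_trans ?_ le_add_self
          rw [← ENNReal.ofReal_one, ← ENNReal.ofReal_add (log_one_nonneg b.le) zero_le_one,
            ← ENNReal.ofReal_add (add_nonneg (log_one_nonneg b.le) zero_le_one) (by positivity)]
          apply ENNReal.ofReal_le_ofReal
          obtain ⟨k, k0, k1, k2⟩ := psi_log a
          have : Real.log (dn ν x).toReal ≤ Real.log (1 + (dn ν x).toReal) := Real.log_le_log b (by linarith)
          nlinarith
        · rw [Set.indicator_of_notMem hx, add_zero]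
          apply ENNReal.ofReal_le_ofReal
          have p := psi_pos' a
          have h1 := Real.log_le_log b (hBc x hx)
          rw [Real.log_mul (by positivity) p.ne'] at h1
          have := Real.log_le_sub_one_of_pos (show 0 < 1 + η by linarith)
          linarith
    _ = _ := by
        rw [lintegral_add_left measurable_const, lintegral_indicator hB, lintegral_add_right _ m2,
          lintegral_add_right _ measurable_const, xl_set hac hB]
        simp

lemma KL_fin (hac : ν ≪ volume) (h0 : ν (Set.Iic 0) = 0) (h2 : ∫⁻ x, ENNReal.ofReal (x ^ 2) ∂ν ≠ ⊤)
    (he : ent 1 ν ≠ ⊤) : KL ν halfNormal < ⊤ := by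
  refine (KL_bound hac h0 le_rfl MeasurableSet.univ (by simp)).trans_lt ?_
  rw [setLIntegral_univ, setLIntegral_univ]
  change _ + (ent 1 ν + _ + _) < _
  simp [lt_top_iff_ne_top, he, h2]

lemma ent_fin (hac : ν ≪ volume) (h0 : ν (Set.Iic 0) = 0) (h2 : ∫⁻ x, ENNReal.ofReal (x ^ 2) ∂ν ≠ ⊤)
    (hK : KL ν halfNormal < ⊤) : ent 1 ν ≠ ⊤ := by
  have hIntg : Integrable (llr ν halfNormal) ν := by
    by_contra h
    unfold KL at hK
    rw [if_neg (fun h' => h h'.2)] at hK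
    exact lt_irrefl _ hK
  have e : ent 1 ν = ∫⁻ x, ENNReal.ofReal (Real.log (1 + (dn ν x).toReal)) ∂ν := by
    have := xl_set hac MeasurableSet.univ
    rw [setLIntegral_univ, setLIntegral_univ] at this
    exact this.symm
  rw [e]
  have hfin : ∫⁻ x, ENNReal.ofReal |llr ν halfNormal x| ∂ν ≠ ⊤ := by
    have := hIntg.abs.2
    rw [hasFiniteIntegral_iff_ofReal (ae_of_all _ fun x => abs_nonneg _)] at this
    exact this.ne
  have m2 : Measurable fun x : ℝ => ENNReal.ofReal (x ^ 2) := by fun_prop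
  have b : ∫⁻ x, ENNReal.ofReal (Real.log (1 + (dn ν x).toReal)) ∂ν ≤
      ∫⁻ x, (ENNReal.ofReal |llr ν halfNormal x| + 1 + ENNReal.ofReal (x ^ 2)) ∂ν := by
    apply lintegral_mono_ae
    filter_upwards [llr_eq hac h0] with x ⟨a, b, c⟩
    rw [← ENNReal.ofReal_one, ← ENNReal.ofReal_add (abs_nonneg _) zero_le_one, ← ENNReal.ofReal_add (by positivity) (by positivity)]
    apply ENNReal.ofReal_le_ofReal
    obtain ⟨k, k0, k1, k2⟩ := psi_log a
    have l1 : Real.log (dn ν x).toReal ≤ |llr ν halfNormal x| := by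
      have := le_abs_self (llr ν halfNormal x)
      rw [c] at this ⊢
      nlinarith
    set d := (dn ν x).toReal
    have l2 : Real.log (1 + d) ≤ 1 + |llr ν halfNormal x| := by
      rcases le_or_gt d 1 with h | h
      · have : Real.log (1 + d) ≤ Real.log 2 := Real.log_le_log (by linarith) (by linarith)
        linarith [Real.log_two_lt_d9, abs_nonneg (llr ν halfNormal x)]
      · have : Real.log (1 + d) ≤ Real.log (2 * d) := Real.log_le_log (by linarith) (by linarith)
        rw [Real.log_mul (by norm_num) b.ne'] at this
        linarith [Real.log_two_lt_d9]
    nlinarith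
  refine ne_top_of_le_ne_top ?_ b
  rw [lintegral_add_right _ m2, lintegral_add_right _ measurable_const]
  simp [hfin, h2]

end
end EEK

open MeasureTheory ProbabilityTheory Filter
open scoped ENNReal Classical
set_option linter.unusedSectionVars false

namespace EEK

lemma hn_sq_int : Integrable (fun x : ℝ => x ^ 2) halfNormal := by
  have mabs : AEMeasurable (fun y : ℝ => |y|) (gaussianReal 0 1) := by fun_prop
  unfold halfNormal
  rw [integrable_map_measure (by fun_prop) mabs]
  have h := (memLp_id_gaussianReal (μ := 0) (v := 1) 2).integrable_sq
  refine h.congr (ae_of_all _ fun x => ?_)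
  simp

lemma hn_sq : ∫ x, x ^ 2 ∂halfNormal = 1 := by
  have mabs : AEMeasurable (fun y : ℝ => |y|) (gaussianReal 0 1) := by fun_prop
  unfold halfNormal
  rw [integral_map mabs (by fun_prop)]
  simp only [sq_abs]
  have h := variance_id_gaussianReal (μ := 0) (v := 1)
  rw [variance_eq_sub (memLp_id_gaussianReal 2)] at h
  simpa using h

lemma hn_trunc {ε : ℝ} (hε : 0 < ε) : ∃ R : ℝ, 1 ≤ R ∧ 1 - ε ≤ ∫ x in Set.Icc (-R) R, x ^ 2 ∂halfNormal := by
  have h := (aecover_Icc (μ := halfNormal) tendsto_neg_atTop_atBot tendsto_id).integral_tendsto_of_countably_generated hn_sq_int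
  rw [hn_sq] at h
  obtain ⟨R, h1, h2⟩ := ((h.eventually (lt_mem_nhds (show 1 - ε < 1 by linarith))).and (eventually_ge_atTop 1)).exists
  exact ⟨R, h2, h1.le⟩

lemma sq_part {ν : Measure ℝ} [IsProbabilityMeasure ν] {ε κ R v : ℝ} (hε : 0 ≤ ε) (hκ : 0 ≤ κ) (hR : 1 ≤ R)
    (h1 : 1 - ε ≤ ∫ x in Set.Icc (-R) R, x ^ 2 ∂halfNormal)
    (hTV : ∀ F : ℝ → ℝ, Measurable F → (∀ x, |F x| ≤ 1) → |∫ x, F x ∂ν - ∫ x, F x ∂halfNormal| ≤ κ)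
    (h2 : ∫⁻ x, ENNReal.ofReal (x ^ 2) ∂ν ≤ ENNReal.ofReal (1 + ε)) {B : Set ℝ} (hB : MeasurableSet B)
    (hv0 : 0 ≤ v) (hv : ν B ≤ ENNReal.ofReal v) :
    ∫⁻ x in B, ENNReal.ofReal (x ^ 2) ∂ν ≤ ENNReal.ofReal (R ^ 2 * v + (2 * ε + R ^ 2 * κ)) := by
  set I := Set.Icc (-R) R with hI
  have mI : MeasurableSet I := measurableSet_Icc
  have hR2 : 0 < R ^ 2 := by positivity
  have bd : ∀ x ∈ I, x ^ 2 ≤ R ^ 2 := by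
    intro x hx
    exact sq_le_sq' hx.1 hx.2
  set F : ℝ → ℝ := I.indicator (fun x => x ^ 2 / R ^ 2) with hF
  have mF : Measurable F := Measurable.indicator (by fun_prop) mI
  have bF : ∀ x, |F x| ≤ 1 := by
    intro x
    by_cases hx : x ∈ I
    · rw [hF, Set.indicator_of_mem hx, abs_of_nonneg (by positivity), div_le_one hR2]
      exact bd x hx
    · rw [hF, Set.indicator_of_notMem hx]; simp
  have eF : ∀ σ : Measure ℝ, ∫ x, F x ∂σ = (∫ x in I, x ^ 2 ∂σ) / R ^ 2 := by
    intro σ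
    rw [hF, integral_indicator mI, integral_div]
  have t := hTV F mF bF
  rw [eF, eF, ← sub_div, abs_div, abs_of_pos hR2, div_le_iff₀ hR2, abs_le] at t
  have low : ENNReal.ofReal (1 - ε - R ^ 2 * κ) ≤ ∫⁻ x in I, ENNReal.ofReal (x ^ 2) ∂ν := by
    rw [← ofReal_integral_eq_lintegral_ofReal]
    · apply ENNReal.ofReal_le_ofReal
      nlinarith [t.1]
    · refine Integrable.of_bound (by fun_prop) (R ^ 2) ?_
      rw [ae_restrict_iff' mI]
      refine ae_of_all _ fun x hx => ?_
      rw [Real.norm_eq_abs, abs_of_nonneg (by positivity)]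
      exact bd x hx
    · exact ae_of_all _ fun x => by positivity
  have up : ∫⁻ x in Iᶜ, ENNReal.ofReal (x ^ 2) ∂ν ≤ ENNReal.ofReal (2 * ε + R ^ 2 * κ) := by
    rw [← lintegral_add_compl _ mI] at h2
    by_cases hneg : 0 ≤ 1 - ε - R ^ 2 * κ
    · have h3 := (add_le_add low le_rfl).trans h2
      have h4 := ENNReal.le_sub_of_add_le_left ENNReal.ofReal_ne_top h3
      rw [← ENNReal.ofReal_sub _ hneg] at h4
      refine h4.trans (ENNReal.ofReal_le_ofReal ?_)
      linarith
    · refine (le_add_self.trans h2).trans (ENNReal.ofReal_le_ofReal ?_)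
      push Not at hneg
      linarith
  calc _ ≤ ∫⁻ x in (B ∩ I) ∪ Iᶜ, ENNReal.ofReal (x ^ 2) ∂ν := by
        apply lintegral_mono_set
        intro x hx
        by_cases h : x ∈ I
        · exact Or.inl ⟨hx, h⟩
        · exact Or.inr h
    _ ≤ ∫⁻ x in (B ∩ I), ENNReal.ofReal (x ^ 2) ∂ν + ∫⁻ x in Iᶜ, ENNReal.ofReal (x ^ 2) ∂ν := lintegral_union_le _ _ _
    _ ≤ ENNReal.ofReal (R ^ 2) * ENNReal.ofReal v + ENNReal.ofReal (2 * ε + R ^ 2 * κ) := by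
        refine add_le_add ?_ up
        calc _ ≤ ∫⁻ x in (B ∩ I), ENNReal.ofReal (R ^ 2) ∂ν := by
              apply setLIntegral_mono measurable_const
              intro x hx
              exact ENNReal.ofReal_le_ofReal (bd x hx.2)
          _ = ENNReal.ofReal (R ^ 2) * ν (B ∩ I) := by rw [setLIntegral_const]
          _ ≤ _ := by
            gcongr
            exact (measure_mono Set.inter_subset_left).trans hv
    _ = _ := by
        rw [← ENNReal.ofReal_mul hR2.le, ← ENNReal.ofReal_add (by positivity) (by positivity)]

lemma bad_set {ν : Measure ℝ} [IsProbabilityMeasure ν] (hac : ν ≪ volume) {η κ : ℝ} (hη : 0 < η)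
    (hTV : ∀ F : ℝ → ℝ, Measurable F → (∀ x, |F x| ≤ 1) → |∫ x, F x ∂ν - ∫ x, F x ∂halfNormal| ≤ κ) :
    ∃ B : Set ℝ, MeasurableSet B ∧ (∀ x ∉ B, (dn ν x).toReal ≤ (1 + η) * psi x) ∧
      ν B ≤ ENNReal.ofReal (κ * (1 + η) / η) := by
  have mg := (dn_meas ν).ennreal_toReal
  set B : Set ℝ := {x | (1 + η) * psi x < (dn ν x).toReal} with hB
  have mB : MeasurableSet B := measurableSet_lt (psi_meas.const_mul _) mg
  refine ⟨B, mB, fun x hx => by simpa [hB] using hx, ?_⟩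
  have t := hTV (B.indicator 1) (measurable_one.indicator mB) (fun x => by
    by_cases hx : x ∈ B <;> simp [hx])
  rw [integral_indicator_one mB, integral_indicator_one mB] at t
  have mpsi : Measurable fun x => ENNReal.ofReal (psi x) := psi_meas.ennreal_ofReal
  have h1 : ENNReal.ofReal (1 + η) * halfNormal B ≤ ν B := by
    conv_rhs => rw [← dn_wd hac]
    rw [hn_density, withDensity_apply _ mB, withDensity_apply _ mB, ← lintegral_const_mul _ mpsi]
    apply setLIntegral_mono (dn_meas ν)
    intro x hx
    rw [← ENNReal.ofReal_mul (by positivity)]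
    exact (ENNReal.ofReal_le_ofReal hx.le).trans ENNReal.ofReal_toReal_le
  have h2 : (1 + η) * halfNormal.real B ≤ ν.real B := by
    have := ENNReal.toReal_mono (measure_ne_top ν B) h1
    rwa [ENNReal.toReal_mul, ENNReal.toReal_ofReal (by positivity)] at this
  rw [← ENNReal.ofReal_toReal (measure_ne_top ν B)]
  apply ENNReal.ofReal_le_ofReal
  change ν.real B ≤ _
  rw [le_div_iff₀ hη]
  have h3 := (abs_le.1 t).2
  nlinarith

lemma KL_tendsto {ν : ℕ → Measure ℝ} (hp : ∀ᶠ n in atTop, IsProbabilityMeasure (ν n))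
    (hac : ∀ᶠ n in atTop, ν n ≪ volume)
    (h0 : ∀ᶠ n in atTop, ν n (Set.Iic 0) = 0)
    (hTV : ∀ κ : ℝ, 0 < κ → ∀ᶠ n in atTop, ∀ F : ℝ → ℝ, Measurable F → (∀ x, |F x| ≤ 1) → |∫ x, F x ∂(ν n) - ∫ x, F x ∂halfNormal| ≤ κ)
    (h2 : ∀ ε : ℝ, 0 < ε → ∀ᶠ n in atTop, ∫⁻ x, ENNReal.ofReal (x ^ 2) ∂(ν n) ≤ ENNReal.ofReal (1 + ε))
    (hUI : ∀ ε : ℝ, 0 < ε → ∃ Λ : ℝ, ∀ᶠ n in atTop, ∀ B : Set ℝ, MeasurableSet B →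
      ∫⁻ x in B, xl 1 (dn (ν n) x) ≤ ENNReal.ofReal Λ * ν n B + ENNReal.ofReal ε) :
    Tendsto (fun n => KL (ν n) halfNormal) atTop (nhds 0) := by
  have key : ∀ δ : ℝ, 0 < δ → ∀ᶠ n in atTop, KL (ν n) halfNormal ≤ ENNReal.ofReal δ := by
    intro δ hδ
    set e := δ / 10 with he
    have he0 : 0 < e := by positivity
    obtain ⟨R, hR, hR2⟩ := hn_trunc he0
    obtain ⟨Λ, hΛ⟩ := hUI e he0
    set S := |Λ| + 1 + R ^ 2 with hS
    have hS0 : 0 < S := by positivity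
    set κ := e * e / ((1 + e) * S) with hκ
    have hκ0 : 0 < κ := by positivity
    filter_upwards [hp, hac, h0, hTV κ hκ0, h2 e he0, hΛ] with n p1 p2 p3 p4 p5 p6
    obtain ⟨B, mB, hB1, hB2⟩ := bad_set p2 he0 p4
    have hb : κ * (1 + e) / e = e / S := by rw [hκ]; field_simp
    rw [hb] at hB2
    have hb0 : 0 ≤ e / S := by positivity
    have r1 := KL_bound p2 p3 he0.le mB hB1
    have r2 := sq_part he0.le hκ0.le hR hR2 p4 p5 mB hb0 hB2
    have r3 : ∫⁻ x in B, xl 1 (dn (ν n) x) ≤ ENNReal.ofReal (|Λ| * (e / S) + e) := by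
      refine (p6 B mB).trans ?_
      rw [ENNReal.ofReal_add (by positivity) he0.le, ENNReal.ofReal_mul (abs_nonneg _)]
      gcongr
      exact le_abs_self Λ
    refine r1.trans ((add_le_add le_rfl (add_le_add (add_le_add r3 hB2) r2)).trans ?_)
    rw [← ENNReal.ofReal_add (by positivity) (by positivity), ← ENNReal.ofReal_add (by positivity) (by positivity),
      ← ENNReal.ofReal_add (by positivity) (by positivity)]
    apply ENNReal.ofReal_le_ofReal
    have q1 : S * (e / S) = e := by field_simp
    have q2 : κ ≤ e / S := by
      rw [hκ, div_le_div_iff₀ (by positivity) hS0]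
      nlinarith [mul_pos he0 hS0]
    have q3 : R ^ 2 * κ ≤ e := by
      calc _ ≤ R ^ 2 * (e / S) := by gcongr
        _ ≤ S * (e / S) := by
          gcongr
          rw [hS]; linarith [abs_nonneg Λ]
        _ = e := q1
    have q4 : |Λ| * (e / S) + e / S + R ^ 2 * (e / S) = e := by
      calc _ = (|Λ| + 1 + R ^ 2) * (e / S) := by ring
        _ = e := q1
    have : δ = 10 * e := by rw [he]; ring
    linarith
  rw [ENNReal.tendsto_nhds_zero]
  intro ε hε
  rcases eq_or_ne ε ⊤ with h | h
  · subst h; exact Eventually.of_forall fun _ => le_top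
  · filter_upwards [key ε.toReal (ENNReal.toReal_pos hε.ne' h)] with n hn
    rwa [ENNReal.ofReal_toReal h] at hn

end EEK

open MeasureTheory ProbabilityTheory Filter
open scoped ENNReal Classical
set_option linter.unusedSectionVars false

namespace EEK

lemma cv {a : ℝ} (ha : 0 < a) {H : ℝ → ℝ≥0∞} (hH : Measurable H) {B : Set ℝ} (hB : MeasurableSet B) :
    ∫⁻ x in (fun x => x / a) ⁻¹' B, H x = ENNReal.ofReal a * ∫⁻ y in B, H (a * y) := by
  have mB : MeasurableSet ((fun x => x / a) ⁻¹' B) := (by fun_prop : Measurable fun x : ℝ => x / a) hB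
  conv_lhs => rw [← Real.smul_map_volume_mul_left ha.ne', abs_of_pos ha]
  rw [Measure.restrict_smul, lintegral_smul_measure, setLIntegral_map mB hH (by fun_prop), smul_eq_mul]
  congr 3
  ext y
  simp [ha.ne']

lemma sc_wd {a : ℝ} (ha : 0 < a) {ρ : Measure ℝ} [IsFiniteMeasure ρ] (hac : ρ ≪ volume) :
    ρ.map (fun x => x / a) = volume.withDensity (fun y => ENNReal.ofReal a * dn ρ (a * y)) := by
  have md : Measurable fun y => dn ρ (a * y) := (dn_meas ρ).comp (by fun_prop)
  ext s hs
  have ms : MeasurableSet ((fun x => x / a) ⁻¹' s) := (by fun_prop : Measurable fun x : ℝ => x / a) hs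
  rw [Measure.map_apply (by fun_prop) hs, withDensity_apply _ hs, lintegral_const_mul _ md, ← cv ha (dn_meas ρ) hs,
    ← withDensity_apply _ ms, dn_wd hac]

lemma sc_ac {a : ℝ} (ha : 0 < a) {ρ : Measure ℝ} [IsFiniteMeasure ρ] (hac : ρ ≪ volume) :
    ρ.map (fun x => x / a) ≪ volume := by
  rw [sc_wd ha hac]; exact withDensity_absolutelyContinuous _ _

lemma sc_ent {a : ℝ} (ha : 0 < a) {ρ : Measure ℝ} [IsFiniteMeasure ρ] (hac : ρ ≪ volume) {B : Set ℝ} (hB : MeasurableSet B) :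
    ∫⁻ y in B, xl 1 (dn (ρ.map (fun x => x / a)) y) ≤ ∫⁻ x in (fun x => x / a) ⁻¹' B, xl a (dn ρ x) := by
  have m1 : Measurable fun x => xl a (dn ρ x) := (xl_meas a).comp (dn_meas ρ)
  have m2 : Measurable fun x => xl a (dn ρ (a * x)) := m1.comp (by fun_prop)
  have h1 := dn_le (sc_wd ha hac).le
  have h3 : ∀ᵐ y, dn ρ (a * y) ≠ ⊤ := by
    have qmp : Measure.QuasiMeasurePreserving (fun y : ℝ => a * y) volume volume := by
      refine ⟨by fun_prop, ?_⟩
      rw [Real.map_volume_mul_left ha.ne']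
      exact Measure.AbsolutelyContinuous.rfl.smul_left _
    exact qmp.ae (dn_top ρ)
  rw [cv ha m1 hB, ← lintegral_const_mul _ m2]
  apply lintegral_mono_ae
  apply ae_restrict_of_ae
  filter_upwards [h1, h3] with y e1 e2
  refine (xl_mono zero_le_one (ENNReal.mul_ne_top ENNReal.ofReal_ne_top e2) e1).trans (le_of_eq ?_)
  unfold xl
  rw [one_mul, ENNReal.toReal_mul, ENNReal.toReal_ofReal ha.le, mul_assoc]

lemma smul_ent {c : ℝ≥0∞} (hc : c ≠ ⊤) {ρ : Measure ℝ} [IsFiniteMeasure ρ] (hac : ρ ≪ volume) (B : Set ℝ) :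
    ∫⁻ x in B, xl 1 (dn (c • ρ) x) ≤ c * (ENNReal.ofReal (Real.log (1 + c.toReal)) * ρ B + ∫⁻ x in B, xl 1 (dn ρ x)) := by
  have h : c • ρ ≤ volume.withDensity (c • dn ρ) := by
    rw [withDensity_smul _ (dn_meas ρ), dn_wd hac]
  have m1 : Measurable fun x => xl 1 (dn ρ x) := (xl_meas 1).comp (dn_meas ρ)
  have m3 : Measurable fun x => ENNReal.ofReal (Real.log (1 + c.toReal)) * dn ρ x := (dn_meas ρ).const_mul _
  have m2 : Measurable fun x => ENNReal.ofReal (Real.log (1 + c.toReal)) * dn ρ x + xl 1 (dn ρ x) := m3.add m1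
  calc _ ≤ ∫⁻ x in B, c * (ENNReal.ofReal (Real.log (1 + c.toReal)) * dn ρ x + xl 1 (dn ρ x)) := by
        apply lintegral_mono_ae
        apply ae_restrict_of_ae
        filter_upwards [dn_le h, dn_top ρ] with x e1 e2
        refine (xl_mono zero_le_one (ENNReal.mul_ne_top hc e2) e1).trans ?_
        refine le_trans (le_of_eq ?_) (mul_le_mul' le_rfl (xl_scale (s := c.toReal) ENNReal.toReal_nonneg zero_le_one (dn ρ x)))
        unfold xl
        simp only [Pi.smul_apply, smul_eq_mul, ENNReal.toReal_mul]
        rw [one_mul, mul_one, mul_assoc]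
    _ ≤ _ := by
        rw [lintegral_const_mul _ m2, lintegral_add_right _ m1, lintegral_const_mul _ (dn_meas ρ)]
        gcongr
        exact Measure.setLIntegral_rnDeriv_le B

lemma smul_ent_fin {c : ℝ≥0∞} (hc : c ≠ ⊤) {ρ : Measure ℝ} [IsFiniteMeasure ρ] (hac : ρ ≪ volume) (h : ent 1 ρ ≠ ⊤) :
    ent 1 (c • ρ) ≠ ⊤ := by
  have := smul_ent hc hac Set.univ
  rw [setLIntegral_univ, setLIntegral_univ] at this
  refine ne_top_of_le_ne_top ?_ this
  apply ENNReal.mul_ne_top hc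
  exact ENNReal.add_ne_top.2 ⟨ENNReal.mul_ne_top ENNReal.ofReal_ne_top (measure_ne_top _ _), h⟩

lemma cond_ge (σ : Measure ℝ) [IsProbabilityMeasure σ] : σ.restrict (Set.Ioi 0) ≤ σ[|Set.Ioi 0] := by
  intro s
  unfold ProbabilityTheory.cond
  rw [Measure.smul_apply, smul_eq_mul]
  calc _ = 1 * σ.restrict (Set.Ioi 0) s := (one_mul _).symm
    _ ≤ _ := by
      gcongr
      rw [ENNReal.one_le_inv]; exact prob_le_one

lemma cond_Iic (σ : Measure ℝ) : σ[|Set.Ioi 0] (Set.Iic 0) = 0 := by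
  rw [cond_apply measurableSet_Ioi]
  have : Set.Ioi (0:ℝ) ∩ Set.Iic 0 = ∅ := by ext x; simp
  simp [this]

lemma cond_ac (σ : Measure ℝ) (h : σ.restrict (Set.Ioi 0) ≪ volume) : σ[|Set.Ioi 0] ≪ volume := by
  unfold ProbabilityTheory.cond
  exact (Measure.AbsolutelyContinuous.rfl.smul_left _).trans h

lemma cond_lint (σ : Measure ℝ) (f : ℝ → ℝ≥0∞) :
    ∫⁻ x, f x ∂(σ[|Set.Ioi 0]) ≤ (σ (Set.Ioi 0))⁻¹ * ∫⁻ x, f x ∂σ := by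
  unfold ProbabilityTheory.cond
  rw [lintegral_smul_measure, smul_eq_mul]
  gcongr
  exact Measure.restrict_le_self

section
variable (μ : Measure ℝ) [IsProbabilityMeasure μ]

lemma tau_eq {n : ℕ} (hn : 1 ≤ n) : (sig μ n).restrict (Set.Ioi 0) = (lamp μ n).map (fun x => x / √n) := by
  have h : 0 < √(n:ℝ) := by positivity
  unfold sig lamp
  rw [Measure.restrict_map (by fun_prop) measurableSet_Ioi]
  congr 2
  ext x
  simp [h, div_pos_iff_of_pos_right]

lemma sig_sq (hm : M2 μ) {n : ℕ} (hn : 1 ≤ n) : ∫⁻ x, ENNReal.ofReal (x ^ 2) ∂(sig μ n) ≤ 1 := by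
  have h : (0:ℝ) < n := by positivity
  unfold sig
  rw [lintegral_map (by fun_prop) (by fun_prop)]
  have : ∀ x : ℝ, ENNReal.ofReal ((x / √n) ^ 2) = ENNReal.ofReal ((n:ℝ)⁻¹) * ENNReal.ofReal (x ^ 2) := by
    intro x
    rw [← ENNReal.ofReal_mul (by positivity), div_pow, Real.sq_sqrt h.le, div_eq_inv_mul]
  simp only [this]
  rw [lintegral_const_mul _ (by fun_prop)]
  calc _ ≤ ENNReal.ofReal ((n:ℝ)⁻¹) * n := by gcongr; exact lam_sq μ hm n
    _ = 1 := by
      rw [← ENNReal.ofReal_natCast, ← ENNReal.ofReal_mul (by positivity), inv_mul_cancel₀ h.ne', ENNReal.ofReal_one]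

lemma P_lim (hm : M2 μ) (hclt : CLT μ) : Tendsto (fun n => (sig μ n).real (Set.Ioi 0)) atTop (nhds 1) := by
  have := sig_lim μ hm hclt 0 le_rfl
  rw [hn_Ioi le_rfl, G_zero] at this
  simpa using this

noncomputable def nu (n : ℕ) : Measure ℝ := (sig μ n)[|Set.Ioi 0]

lemma nu_TV {n : ℕ} (h : sig μ n (Set.Ioi 0) ≠ 0) {κ : ℝ} (hP : 1 - κ ≤ (sig μ n).real (Set.Ioi 0))
    {F : ℝ → ℝ} (hF : Measurable F) (hb : ∀ x, |F x| ≤ 1)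
    (hTV : |∫ x, F x ∂(sig μ n) - ∫ x, F x ∂halfNormal| ≤ κ) :
    |∫ x, F x ∂(nu μ n) - ∫ x, F x ∂halfNormal| ≤ 3 * κ := by
  have : IsProbabilityMeasure (nu μ n) := cond_isProbabilityMeasure h
  have a1 := tv_sub (cond_ge (sig μ n)) hF hb
  have a2 := tv_sub (Measure.restrict_le_self (μ := sig μ n) (s := Set.Ioi 0)) hF hb
  change |∫ x, F x ∂(nu μ n) - _| ≤ (nu μ n).real _ - _ at a1
  have e : ((sig μ n).restrict (Set.Ioi 0)).real Set.univ = (sig μ n).real (Set.Ioi 0) := by simp [Measure.real]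
  rw [e, probReal_univ] at a1 a2
  rw [abs_le] at *
  constructor <;> linarith [a1.1, a1.2, a2.1, a2.2]

theorem bwd (hac : μ ≪ volume) (hm : M2 μ) (hclt : CLT μ) (hneg : μ (Set.Iic 0) ≠ 0)
    (hA : ent 1 (μ.restrict (Set.Ioi 0)) ≠ ⊤) :
    Tendsto (fun n => KL (nu μ n) halfNormal) atTop (nhds 0) := by
  have hP := P_lim μ hm hclt
  have ev1 : ∀ᶠ n in atTop, sig μ n (Set.Ioi 0) ≠ 0 := by
    filter_upwards [hP.eventually (lt_mem_nhds (show (0:ℝ) < 1 by norm_num))] with n hn h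
    simp [Measure.real, h] at hn
  have hinv : Tendsto (fun n => ((sig μ n).real (Set.Ioi 0))⁻¹) atTop (nhds 1) := by
    simpa using hP.inv₀ one_ne_zero
  have hc : ∀ ε : ℝ, 0 < ε → ∀ᶠ n in atTop, (sig μ n (Set.Ioi 0))⁻¹ ≤ ENNReal.ofReal (1 + ε) := by
    intro ε hε
    filter_upwards [ev1, hinv.eventually (gt_mem_nhds (show (1:ℝ) < 1 + ε by linarith))] with n h1 h2
    rw [← ENNReal.ofReal_toReal (ENNReal.inv_ne_top.2 h1), ENNReal.toReal_inv]
    exact ENNReal.ofReal_le_ofReal h2.le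
  apply KL_tendsto
  · filter_upwards [ev1] with n hn
    exact cond_isProbabilityMeasure hn
  · filter_upwards [eventually_ge_atTop 1] with n hn
    apply cond_ac
    rw [tau_eq μ hn]
    exact sc_ac (by positivity) (lamp_ac μ hac n)
  · exact Eventually.of_forall fun n => cond_Iic _
  · intro κ hκ
    filter_upwards [ev1, TV μ hac hm hclt (show 0 < κ / 3 by positivity),
      hP.eventually (lt_mem_nhds (show 1 - κ / 3 < 1 by linarith))] with n h1 h2 h3 F hF hb
    have := nu_TV μ h1 h3.le hF hb (h2 F hF hb)
    linarith
  · intro ε hε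
    filter_upwards [hc ε hε, eventually_ge_atTop 1] with n h1 hn
    refine (cond_lint _ _).trans ?_
    calc _ ≤ ENNReal.ofReal (1 + ε) * 1 := mul_le_mul' h1 (sig_sq μ hm hn)
      _ = _ := mul_one _
  · intro ε hε
    obtain ⟨Λ, hΛ⟩ := ent_UI μ hac hm hclt hneg hA (show 0 < ε / 2 by positivity)
    refine ⟨2 * (Real.log 3 + |Λ|), ?_⟩
    filter_upwards [ev1, hΛ, hc 1 one_pos, eventually_ge_atTop 1] with n h1 h2 h3 hn B hB
    have hs : 0 < √(n:ℝ) := by positivity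
    have hct : (sig μ n (Set.Ioi 0))⁻¹ ≠ ⊤ := ENNReal.inv_ne_top.2 h1
    set c := (sig μ n (Set.Ioi 0))⁻¹ with hcdef
    have tac : (sig μ n).restrict (Set.Ioi 0) ≪ volume := by
      rw [tau_eq μ hn]
      exact sc_ac (by positivity) (lamp_ac μ hac n)
    have e : nu μ n = c • (sig μ n).restrict (Set.Ioi 0) := rfl
    have tle : (sig μ n).restrict (Set.Ioi 0) B ≤ nu μ n B := cond_ge (sig μ n) B
    have c2 : c.toReal ≤ 2 := by
      have := ENNReal.toReal_mono ENNReal.ofReal_ne_top h3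
      rw [ENNReal.toReal_ofReal (by norm_num)] at this
      linarith
    have h3' : c ≤ 2 := by
      rw [show (1:ℝ) + 1 = 2 by norm_num] at h3
      simpa using h3
    have b1 : ∫⁻ x in B, xl 1 (dn ((sig μ n).restrict (Set.Ioi 0)) x) ≤
        ENNReal.ofReal |Λ| * nu μ n B + ENNReal.ofReal (ε / 2) := by
      have k := sc_ent hs (lamp_ac μ hac n) hB
      rw [← tau_eq μ hn] at k
      refine k.trans ((h2 _).trans ?_)
      have e2 : lamp μ n ((fun x => x / √n) ⁻¹' B) = (sig μ n).restrict (Set.Ioi 0) B := by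
        rw [tau_eq μ hn, Measure.map_apply (by fun_prop) hB]
      rw [e2]
      gcongr
      exact le_abs_self Λ
    conv_lhs => rw [e]
    refine (smul_ent hct tac B).trans ?_
    calc _ ≤ 2 * (ENNReal.ofReal (Real.log 3) * nu μ n B + (ENNReal.ofReal |Λ| * nu μ n B + ENNReal.ofReal (ε / 2))) := by
          gcongr
          linarith
      _ = _ := by
        have l3 : 0 ≤ Real.log 3 := Real.log_nonneg (by norm_num)
        rw [ENNReal.ofReal_mul (by norm_num), ENNReal.ofReal_add l3 (abs_nonneg _), ← add_assoc, ← add_mul, mul_add]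
        have : (2:ℝ≥0∞) * ENNReal.ofReal (ε / 2) = ENNReal.ofReal ε := by
          rw [show (2:ℝ≥0∞) = ENNReal.ofReal 2 by simp, ← ENNReal.ofReal_mul (by norm_num)]
          congr 1; ring
        rw [this, mul_assoc]
        simp

theorem fwd (hac : μ ≪ volume) (hm : M2 μ) (hclt : CLT μ) (hneg : μ (Set.Iic 0) ≠ 0)
    (h : Tendsto (fun n => KL (nu μ n) halfNormal) atTop (nhds 0)) :
    ent 1 (μ.restrict (Set.Ioi 0)) ≠ ⊤ := by
  have hP := P_lim μ hm hclt
  have ev1 : ∀ᶠ n in atTop, sig μ n (Set.Ioi 0) ≠ 0 := by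
    filter_upwards [hP.eventually (lt_mem_nhds (show (0:ℝ) < 1 by norm_num))] with n hn h
    simp [Measure.real, h] at hn
  obtain ⟨n, h1, h2, hn⟩ := (ev1.and ((h.eventually (gt_mem_nhds ENNReal.zero_lt_top)).and (eventually_ge_atTop 1))).exists
  have hs : 0 < √(n:ℝ) := by positivity
  have hp : IsProbabilityMeasure (nu μ n) := cond_isProbabilityMeasure h1
  have tac : (sig μ n).restrict (Set.Ioi 0) ≪ volume := by
    rw [tau_eq μ hn]
    exact sc_ac (by positivity) (lamp_ac μ hac n)
  have nac : nu μ n ≪ volume := cond_ac _ tac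
  have sq : ∫⁻ x, ENNReal.ofReal (x ^ 2) ∂(nu μ n) ≠ ⊤ := by
    refine ne_top_of_le_ne_top ?_ (cond_lint _ _)
    exact ENNReal.mul_ne_top (ENNReal.inv_ne_top.2 h1) (ne_top_of_le_ne_top ENNReal.one_ne_top (sig_sq μ hm hn))
  have e1 := ent_fin nac (cond_Iic _) sq h2
  have e2 : ent 1 ((sig μ n).restrict (Set.Ioi 0)) ≠ ⊤ :=
    ne_top_of_le_ne_top e1 (ent_mono zero_le_one nac (cond_ge _))
  have e3 : ent 1 (lamp μ n) ≠ ⊤ := by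
    have k := sc_ent (inv_pos.2 hs) tac MeasurableSet.univ
    have e : ((sig μ n).restrict (Set.Ioi 0)).map (fun x => x / (√(n:ℝ))⁻¹) = lamp μ n := by
      rw [tau_eq μ hn, Measure.map_map (by fun_prop) (by fun_prop)]
      have : ((fun x : ℝ => x / (√(n:ℝ))⁻¹) ∘ fun x => x / √n) = id := by
        ext x; simp [Function.comp]; field_simp
      rw [this, Measure.map_id]
    rw [e, Set.preimage_univ, setLIntegral_univ, setLIntegral_univ] at k
    have k2 := ent_scale (inv_pos.2 hs).le zero_le_one ((sig μ n).restrict (Set.Ioi 0))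
    rw [mul_one] at k2
    refine ne_top_of_le_ne_top ?_ (LE.le.trans k k2)
    exact ENNReal.add_ne_top.2 ⟨ENNReal.mul_ne_top ENNReal.ofReal_ne_top (measure_ne_top _ _), e2⟩
  have e4 := ne_top_of_le_ne_top e3 (ent_mono zero_le_one (lamp_ac μ hac n) (lamp_ge μ hn))
  have hq := q_pos μ hneg (n - 1)
  have hqt := q_ne_top μ (n - 1)
  have hfin : IsFiniteMeasure (q μ (n - 1) • μ.restrict (Set.Ioi 0)) := smul_fin _ _ hqt
  have e5 := smul_ent_fin (ENNReal.inv_ne_top.2 hq) ((Measure.AbsolutelyContinuous.rfl.smul_left _).trans (mup_ac μ hac)) e4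
  rwa [smul_smul, ENNReal.inv_mul_cancel hq hqt, one_smul] at e5

theorem main_meas (hac : μ ≪ volume) (hm : M2 μ) (hclt : CLT μ) (hneg : μ (Set.Iic 0) ≠ 0) (hpos : μ (Set.Ioi 0) ≠ 0) :
    Tendsto (fun n => KL (nu μ n) halfNormal) atTop (nhds 0) ↔ KL (μ[|Set.Ioi 0]) halfNormal < ⊤ := by
  have hp : IsProbabilityMeasure (μ[|Set.Ioi 0]) := cond_isProbabilityMeasure hpos
  have nac := cond_ac μ (mup_ac μ hac)
  have sq : ∫⁻ x, ENNReal.ofReal (x ^ 2) ∂(μ[|Set.Ioi 0]) ≠ ⊤ := by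
    refine ne_top_of_le_ne_top ?_ (cond_lint _ _)
    refine ENNReal.mul_ne_top (ENNReal.inv_ne_top.2 hpos) ?_
    have := hm 0
    simp at this
    simp [this]
  constructor
  · intro h
    have h1 := fwd μ hac hm hclt hneg h
    apply KL_fin nac (cond_Iic _) sq
    exact smul_ent_fin (ENNReal.inv_ne_top.2 hpos) (mup_ac μ hac) h1
  · intro h
    apply bwd μ hac hm hclt hneg
    exact ne_top_of_le_ne_top (ent_fin nac (cond_Iic _) sq h) (ent_mono zero_le_one nac (cond_ge _))

end
end EEK

open MeasureTheory ProbabilityTheory Filter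
open scoped ENNReal Classical
set_option linter.unusedSectionVars false
namespace EEK

/-- running maximum, recursively from the front -/
noncomputable def Mx : ℕ → (ℕ → ℝ) → ℝ
  | 0, _ => 0
  | n + 1, y => max (y 0 + Mx n (fun i => y (i + 1))) 0

lemma Mx_meas (n : ℕ) : Measurable (Mx n) := by
  induction n with
  | zero => exact measurable_const
  | succ n ih =>
    have h1 : Measurable fun y : ℕ → ℝ => Mx n (fun i => y (i + 1)) :=
      ih.comp (measurable_pi_lambda _ fun i => measurable_pi_apply (i + 1))
    have h2 : Measurable fun y : ℕ → ℝ => max (y 0 + Mx n (fun i => y (i + 1))) 0 :=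
      ((measurable_pi_apply 0).add h1).max measurable_const
    exact h2

lemma Mx_local (n : ℕ) (y z : ℕ → ℝ) (h : ∀ i < n, y i = z i) : Mx n y = Mx n z := by
  induction n generalizing y z with
  | zero => rfl
  | succ n ih =>
    simp only [Mx]
    rw [h 0 (by omega), ih (fun i => y (i + 1)) (fun i => z (i + 1)) (fun i hi => h (i + 1) (by omega))]

lemma Mx_le_iff (n : ℕ) (y : ℕ → ℝ) (c : ℝ) :
    Mx n y ≤ c ↔ ∀ k ≤ n, ∑ i ∈ Finset.range k, y i ≤ c := by
  induction n generalizing y c with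
  | zero => simp [Mx]
  | succ n ih =>
    simp only [Mx, max_le_iff]
    rw [← le_sub_iff_add_le', ih]
    constructor
    · rintro ⟨h1, h2⟩ k hk
      cases k with
      | zero => simpa using h2
      | succ k =>
        rw [Finset.sum_range_succ']
        have := h1 k (by omega)
        linarith
    · intro h
      refine ⟨fun k hk => ?_, by simpa using h 0 (by omega)⟩
      have := h (k + 1) (by omega)
      rw [Finset.sum_range_succ'] at this
      linarith

section
variable {Ω : Type*} [MeasurableSpace Ω] (P : Measure Ω) [IsProbabilityMeasure P]

lemma indep_Mx (Y : ℕ → Ω → ℝ) (hm : ∀ i, Measurable (Y i)) (hi : iIndepFun Y P) (n : ℕ) :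
    IndepFun (fun ω => Mx n (fun i => Y (i + 1) ω)) (Y 0) P := by
  have hd : Disjoint (Finset.Icc 1 n) ({0} : Finset ℕ) := by simp
  have h := hi.indepFun_finset (Finset.Icc 1 n) {0} hd hm
  let g : ((Finset.Icc 1 n : Finset ℕ) → ℝ) → ℝ := fun v =>
    Mx n (fun i => if h : i + 1 ∈ Finset.Icc 1 n then v ⟨i + 1, h⟩ else 0)
  have hg : Measurable g := by
    refine (Mx_meas n).comp (measurable_pi_lambda _ fun i => ?_)
    by_cases h : i + 1 ∈ Finset.Icc 1 n
    · simp only [h, dite_true]; exact measurable_pi_apply _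
    · simp only [h, dite_false]; exact measurable_const
  let f : (({0} : Finset ℕ) → ℝ) → ℝ := fun v => v ⟨0, by simp⟩
  have hf : Measurable f := measurable_pi_apply _
  have h2 := h.comp hg hf
  have e1 : (fun ω => Mx n (fun i => Y (i + 1) ω)) = g ∘ (fun a (i : (Finset.Icc 1 n : Finset ℕ)) => Y i a) := by
    funext ω
    refine Mx_local _ _ _ fun i hi => ?_
    have : i + 1 ∈ Finset.Icc 1 n := by simp; omega
    simp only [this, dite_true]
  rw [e1]
  exact h2

lemma law_Mx (μ : Measure ℝ) (n : ℕ) (Y : ℕ → Ω → ℝ) (hm : ∀ i, Measurable (Y i))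
    (hi : iIndepFun Y P) (hl : ∀ i, Measure.map (Y i) P = μ) :
    Measure.map (fun ω => Mx n (fun i => Y i ω)) P = lam μ n := by
  induction n generalizing Y with
  | zero => simp [Mx, lam]
  | succ n ih =>
    have hs := ih (fun i => Y (i + 1)) (fun i => hm _)
      (hi.precomp (g := fun i : ℕ => i + 1) (fun a b h => by simpa using h)) (fun i => hl _)
    have mM : Measurable fun ω => Mx n (fun i => Y (i + 1) ω) :=
      (Mx_meas n).comp (measurable_pi_lambda _ fun i => hm (i + 1))
    have hc := (indep_Mx P Y hm hi n).map_add_eq_map_conv_map mM (hm 0)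
    rw [hs, hl 0] at hc
    rw [lam, ← hc, Measure.map_map (by fun_prop) (mM.add (hm 0))]
    congr 1
    funext ω
    simp [Mx, add_comm]

lemma law_sum (μ : Measure ℝ) (n : ℕ) (Y : ℕ → Ω → ℝ) (hm : ∀ i, Measurable (Y i))
    (hi : iIndepFun Y P) (hl : ∀ i, Measure.map (Y i) P = μ) :
    Measure.map (fun ω => ∑ i ∈ Finset.range n, Y i ω) P = cpow μ n := by
  induction n with
  | zero => simp [cpow]
  | succ n ih =>
    have h := hi.indepFun_finsetSum_of_notMem hm (s := Finset.range n) (i := n) (by simp)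
    have e : (∑ j ∈ Finset.range n, Y j) = fun ω => ∑ i ∈ Finset.range n, Y i ω := by
      funext ω; simp
    have mS : Measurable fun ω => ∑ i ∈ Finset.range n, Y i ω :=
      Finset.measurable_sum _ fun i _ => hm i
    rw [e] at h
    have hc := h.map_add_eq_map_conv_map mS (hm n)
    rw [ih, hl n] at hc
    rw [cpow, ← hc]
    congr 1
    funext ω
    simp [Finset.sum_range_succ]

lemma clt_of (X : ℕ → Ω → ℝ) (hmeas : ∀ i, Measurable (X i)) (hindep : iIndepFun X P)
    (hident : ∀ i, Measure.map (X i) P = Measure.map (X 0) P)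
    (hmean : ∫ ω, X 0 ω ∂P = 0) (hvar : ∫ ω, (X 0 ω) ^ 2 ∂P = 1) :
    CLT (Measure.map (X 0) P) := by
  intro x
  have h := tendstoInDistribution_inv_sqrt_mul_sum (P := P) (P' := gaussianReal 0 1) (Y := id)
    (X := X) HasLaw.id hmean hvar hindep
    (fun i => ⟨(hmeas i).aemeasurable, (hmeas 0).aemeasurable, hident i⟩)
  have hna := nullSingletonClass_gaussianReal (μ := 0) (v := 1) (by norm_num)
  have k := ProbabilityMeasure.tendsto_measure_of_null_frontier_of_tendsto' h.tendsto
    (E := Set.Ioi x) (by simp)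
  have k2 := (ENNReal.tendsto_toReal (by
    change Measure.map id (gaussianReal 0 1) (Set.Ioi x) ≠ ⊤
    rw [Measure.map_id]; exact measure_ne_top _ _)).comp k
  have e : G x = ((Measure.map id (gaussianReal 0 1)) (Set.Ioi x)).toReal := by
    rw [Measure.map_id]; rfl
  rw [e]
  refine Tendsto.congr' ?_ k2
  filter_upwards [eventually_ge_atTop 1] with n hn
  have hn0 : (0:ℝ) < √(n:ℝ) := Real.sqrt_pos.2 (by exact_mod_cast hn)
  have mS : Measurable fun ω => ∑ i ∈ Finset.range n, X i ω :=
      Finset.measurable_sum _ fun i _ => hmeas i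
  rw [← law_sum P _ n X hmeas hindep hident, Measure.real]
  simp only [Function.comp]
  change (Measure.map (fun ω => (√(n:ℝ))⁻¹ * ∑ k ∈ Finset.range n, X k ω) P (Set.Ioi x)).toReal = _
  rw [Measure.map_apply (mS.const_mul _) measurableSet_Ioi, Measure.map_apply mS measurableSet_Ioi]
  congr 2
  ext ω
  simp only [Set.mem_preimage, Set.mem_Ioi]
  rw [inv_mul_eq_div, lt_div_iff₀ hn0]

lemma m2_of (Z : Ω → ℝ) (hm : Measurable Z) (hL2 : MemLp Z 2 P)
    (hmean : ∫ ω, Z ω ∂P = 0) (hvar : ∫ ω, (Z ω) ^ 2 ∂P = 1) : M2 (Measure.map Z P) := by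
  intro c
  rw [lintegral_map (by fun_prop) hm]
  have i1 : Integrable Z P := hL2.integrable (by norm_num)
  have i2 : Integrable (fun ω => Z ω ^ 2) P := hL2.integrable_sq
  have e : (fun ω => (c + Z ω) ^ 2) = fun ω => (c ^ 2 + 2 * c * Z ω) + Z ω ^ 2 := by
    funext ω; ring
  have i3 : Integrable (fun ω => c ^ 2 + 2 * c * Z ω) P := (integrable_const _).add (i1.const_mul _)
  have hi : Integrable (fun ω => (c + Z ω) ^ 2) P := by
    rw [e]; exact i3.add i2
  rw [← ofReal_integral_eq_lintegral_ofReal hi (ae_of_all _ fun ω => sq_nonneg _)]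
  congr 1
  rw [e, integral_add i3 i2, integral_add (integrable_const _) (i1.const_mul _), integral_const_mul,
    hmean, hvar]
  simp

lemma not_ae_zero (Z : Ω → ℝ) (hvar : ∫ ω, (Z ω) ^ 2 ∂P = 1) (h : Z =ᵐ[P] 0) : False := by
  have : ∫ ω, (Z ω) ^ 2 ∂P = ∫ ω, (0:ℝ) ∂P := integral_congr_ae (by
    filter_upwards [h] with ω hω; simp [hω])
  rw [hvar] at this
  simp at this

lemma pos_of (Z : Ω → ℝ) (hm : Measurable Z) (hL2 : MemLp Z 2 P)
    (hmean : ∫ ω, Z ω ∂P = 0) (hvar : ∫ ω, (Z ω) ^ 2 ∂P = 1) :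
    Measure.map Z P (Set.Iic 0) ≠ 0 ∧ Measure.map Z P (Set.Ioi 0) ≠ 0 := by
  have i1 : Integrable Z P := hL2.integrable (by norm_num)
  constructor
  · intro h
    rw [Measure.map_apply hm measurableSet_Iic] at h
    have h0 : 0 ≤ᵐ[P] Z := by
      rw [EventuallyLE, ae_iff]
      refine measure_mono_null (fun ω hω => ?_) h
      simp at hω ⊢; exact hω.le
    exact not_ae_zero P Z hvar ((integral_eq_zero_iff_of_nonneg_ae h0 i1).1 hmean)
  · intro h
    rw [Measure.map_apply hm measurableSet_Ioi] at h
    have h0 : 0 ≤ᵐ[P] -Z := by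
      rw [EventuallyLE, ae_iff]
      refine measure_mono_null (fun ω hω => ?_) h
      simpa using hω
    have h1 : ∫ ω, (-Z) ω ∂P = 0 := by
      simp only [Pi.neg_apply]; rw [integral_neg, hmean, neg_zero]
    have h2 := (integral_eq_zero_iff_of_nonneg_ae h0 i1.neg).1 h1
    refine not_ae_zero P Z hvar ?_
    filter_upwards [h2] with ω hω
    simpa using hω

lemma cond_eq (X : ℕ → Ω → ℝ) (hmeas : ∀ i, Measurable (X i)) (hindep : iIndepFun X P)
    (hident : ∀ i, Measure.map (X i) P = Measure.map (X 0) P) (S : Ω → ℝ) (n : ℕ) (hn : 1 ≤ n)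
    (hS : ∀ ω, S ω = (Finset.Icc 1 n).sup' (Finset.nonempty_Icc.mpr hn)
        (fun k => ∑ i ∈ Finset.range k, X i ω)) :
    (Measure.map (fun ω => S ω / √(n:ℝ)) P)[|Set.Ioi 0] = nu (Measure.map (X 0) P) n := by
  have hn0 : (0:ℝ) < √(n:ℝ) := Real.sqrt_pos.2 (by exact_mod_cast hn)
  have mS : Measurable S := by
    have e : S = (Finset.Icc 1 n).sup' (Finset.nonempty_Icc.mpr hn)
        (fun k => fun ω => ∑ i ∈ Finset.range k, X i ω) := by
      funext ω; rw [hS, Finset.sup'_apply]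
    rw [e]
    exact Finset.measurable_sup' _ fun k _ => Finset.measurable_sum _ fun i _ => hmeas i
  have hM : ∀ ω, Mx n (fun i => X i ω) = max (S ω) 0 := by
    intro ω
    refine eq_of_forall_ge_iff fun c => ?_
    rw [Mx_le_iff, max_le_iff, hS, Finset.sup'_le_iff]
    constructor
    · intro h
      exact ⟨fun k hk => h k (Finset.mem_Icc.1 hk).2, by simpa using h 0 (by omega)⟩
    · rintro ⟨h1, h2⟩ k hk
      rcases Nat.eq_zero_or_pos k with rfl | hk0
      · simpa using h2
      · exact h1 k (Finset.mem_Icc.2 ⟨hk0, hk⟩)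
  have hsig : sig (Measure.map (X 0) P) n = Measure.map (fun ω => max (S ω) 0 / √(n:ℝ)) P := by
    rw [sig, ← law_Mx P _ n X hmeas hindep hident]
    simp only [hM]
    rw [Measure.map_map (by fun_prop) (mS.max measurable_const)]
    rfl
  have m1 : Measurable fun ω => S ω / √(n:ℝ) := mS.div_const _
  have m2 : Measurable fun ω => max (S ω) 0 / √(n:ℝ) := (mS.max measurable_const).div_const _
  have key : ∀ A : Set ℝ, MeasurableSet A → A ⊆ Set.Ioi 0 →
      Measure.map (fun ω => S ω / √(n:ℝ)) P A = Measure.map (fun ω => max (S ω) 0 / √(n:ℝ)) P A := by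
    intro A hA hA0
    rw [Measure.map_apply m1 hA, Measure.map_apply m2 hA]
    congr 1
    ext ω
    simp only [Set.mem_preimage]
    rcases le_or_gt (S ω) 0 with h | h
    · rw [max_eq_right h, zero_div]
      constructor
      · intro hh
        have : (0:ℝ) < S ω / √(n:ℝ) := hA0 hh
        have := div_nonpos_of_nonpos_of_nonneg h hn0.le
        linarith
      · intro hh
        have : (0:ℝ) < 0 := hA0 hh
        exact absurd this (lt_irrefl _)
    · rw [max_eq_left h.le]
  rw [nu, hsig]
  ext A hA
  rw [cond_apply measurableSet_Ioi, cond_apply measurableSet_Ioi, key _ measurableSet_Ioi le_rfl,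
    key _ (measurableSet_Ioi.inter hA) Set.inter_subset_left]

end
end EEK

/-- The entropic Erdős–Kac theorem: for i.i.d. `X i` with a Lebesgue density,
mean `0` and variance `1`, `D₊(S̄ n / √n | |Z|) → 0` iff `D₊(X 0 | |Z|) < ∞`. -/
theorem stmt0 {Ω : Type*} [MeasureSpace Ω] [IsProbabilityMeasure (ℙ : Measure Ω)]
    (X : ℕ → Ω → ℝ) (hmeas : ∀ i, Measurable (X i))
    (hindep : iIndepFun X ℙ)
    (hident : ∀ i, Measure.map (X i) ℙ = Measure.map (X 0) ℙ)
    (hdensity : Measure.map (X 0) ℙ ≪ volume)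
    (hL2 : MemLp (X 0) 2 ℙ)
    (hmean : ∫ ω, X 0 ω ∂ℙ = 0)
    (hvar : ∫ ω, (X 0 ω) ^ 2 ∂ℙ = 1)
    (Sbar : ℕ → Ω → ℝ)
    (hSbar : ∀ n, ∀ hn : 1 ≤ n, ∀ ω, Sbar n ω =
      (Finset.Icc 1 n).sup' (Finset.nonempty_Icc.mpr hn)
        (fun k => ∑ i ∈ Finset.range k, X i ω)) :
    Tendsto (fun n => Dplus ℙ (fun ω => Sbar n ω / Real.sqrt n)) atTop (nhds 0) ↔
      Dplus ℙ (X 0) < ⊤ := by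
  have : IsProbabilityMeasure (Measure.map (X 0) (ℙ : Measure Ω)) :=
    Measure.isProbabilityMeasure_map (hmeas 0).aemeasurable
  have hp := EEK.pos_of (ℙ : Measure Ω) (X 0) (hmeas 0) hL2 hmean hvar
  have h := EEK.main_meas (Measure.map (X 0) (ℙ : Measure Ω)) hdensity
    (EEK.m2_of _ (X 0) (hmeas 0) hL2 hmean hvar)
    (EEK.clt_of _ X hmeas hindep hident hmean hvar) hp.1 hp.2
  refine Iff.trans (tendsto_congr' ?_) h
  filter_upwards [eventually_ge_atTop 1] with n hn
  unfold Dplus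
  rw [EEK.cond_eq _ X hmeas hindep hident (Sbar n) n hn (hSbar n hn)]
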